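/- arXiv:2111.10999 — 2 statements merged into one kernel-verified Lean document; each statement's English description precedes it below -/
import Mathlib

section
/- (1) The rank of J^{w,Co₀}_{*,Λ,2} over ℂ[E₄,E₆] is 4, i.e. s(2) = 4; the basic Conway orbits of index 2 are O₀, O₂, O₃, O₄; and δ₂ = 5. (2) The rank of J^{w,Co₀}_{*,Λ,3} over ℂ[E₄,E₆] is 10, i.e. s(3) = 10; the basic Conway orbits of index 3 are O₀, O₂, O₃, O₄, O₅, O_{6a}, O_{6b}, O₇, O_{8b}, O_{9b}; and δ₃ = 19. -/
open Complex Matrix UpperHalfPlane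
open scoped Manifold MatrixGroups Real Topology BigOperators

noncomputable section

/-- Vectors of the rank-24 lattice (coordinates w.r.t. a fixed basis). -/
abbrev LV := Fin 24 → ℤ

/-- Complexified vectors. -/
abbrev CV := Fin 24 → ℂ

/-- The bilinear form attached to a Gram matrix `B`. -/
def pairZ (B : Matrix (Fin 24) (Fin 24) ℤ) (v u : LV) : ℤ := v ⬝ᵥ B.mulVec u

/-- The complex bilinear extension of the form. -/
def pairC (B : Matrix (Fin 24) (Fin 24) ℤ) (z w : CV) : ℂ :=
  z ⬝ᵥ ((B.map (Int.cast : ℤ → ℂ)).mulVec w)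

/-- Inclusion of lattice vectors into complexified vectors. -/
def liftC (v : LV) : CV := fun i => (v i : ℂ)

/-- `B` is a Gram matrix of the Leech lattice: even, unimodular, positive definite of
rank 24, with no vectors of norm 2 (no roots). -/
def IsLeech (B : Matrix (Fin 24) (Fin 24) ℤ) : Prop :=
  B.IsSymm ∧ B.det = 1 ∧ (∀ v : LV, v ≠ 0 → 0 < pairZ B v v) ∧
    (∀ v : LV, Even (pairZ B v v)) ∧ (∀ v : LV, pairZ B v v ≠ 2)

/-- The automorphism group `Co₀ = Aut(Λ)` of the lattice, as a set of integral matrices. -/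
def ConwayGroup (B : Matrix (Fin 24) (Fin 24) ℤ) : Set (Matrix (Fin 24) (Fin 24) ℤ) :=
  {σ | IsUnit σ.det ∧ σᵀ * B * σ = B}

/-- Action of an integral matrix on complexified vectors. -/
def actC (σ : Matrix (Fin 24) (Fin 24) ℤ) (z : CV) : CV :=
  (σ.map (Int.cast : ℤ → ℂ)).mulVec z

/-- `e(x) = exp(2πix)`. -/
def eC (x : ℂ) : ℂ := Complex.exp (2 * (Real.pi : ℂ) * Complex.I * x)

/-- The Fourier term `qⁿ ζ^ℓ`. -/
def fterm (B : Matrix (Fin 24) (Fin 24) ℤ) (n : ℕ) (ℓ : LV) (τ : UpperHalfPlane) (z : CV) : ℂ :=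
  eC ((n : ℂ) * (τ : ℂ)) * eC (pairC B (liftC ℓ) z)

/-- Lower-left entry of `A ∈ SL(2,ℤ)`, as a complex number. -/
def slc (A : SL(2, ℤ)) : ℂ := ((A : Matrix (Fin 2) (Fin 2) ℤ) 1 0 : ℤ)

/-- Lower-right entry of `A ∈ SL(2,ℤ)`, as a complex number. -/
def sld (A : SL(2, ℤ)) : ℂ := ((A : Matrix (Fin 2) (Fin 2) ℤ) 1 1 : ℤ)

/-- The automorphy factor `cτ + d`. -/
def jfactor (A : SL(2, ℤ)) (τ : UpperHalfPlane) : ℂ := slc A * (τ : ℂ) + sld A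

/-- `φ : ℍ × (Λ⊗ℂ) → ℂ` is a Conway invariant weak Jacobi form of weight `k` and index `t`
with Fourier coefficients `f`. -/
structure IsJacobiFormWith (B : Matrix (Fin 24) (Fin 24) ℤ) (k : ℤ) (t : ℕ)
    (φ : UpperHalfPlane → CV → ℂ) (f : ℕ → LV → ℂ) : Prop where
  holo_tau : ∀ z : CV, MDifferentiable 𝓘(ℂ) 𝓘(ℂ) fun τ : UpperHalfPlane => φ τ z
  holo_z : ∀ τ : UpperHalfPlane, Differentiable ℂ (φ τ)
  conway_invar : ∀ σ ∈ ConwayGroup B, ∀ (τ : UpperHalfPlane) (z : CV), φ τ (actC σ z) = φ τ z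
  quasi_periodic : ∀ (x y : LV) (τ : UpperHalfPlane) (z : CV),
    φ τ (z + (τ : ℂ) • liftC x + liftC y) =
      Complex.exp (-(t : ℂ) * (Real.pi : ℂ) * Complex.I * (pairZ B x x : ℂ) * (τ : ℂ)
        - 2 * (t : ℂ) * (Real.pi : ℂ) * Complex.I * pairC B (liftC x) z) * φ τ z
  modular : ∀ (A : SL(2, ℤ)) (τ : UpperHalfPlane) (z : CV),
    φ (A • τ) ((jfactor A τ)⁻¹ • z) =
      (jfactor A τ) ^ k *
        Complex.exp ((t : ℂ) * (Real.pi : ℂ) * Complex.I * slc A * pairC B z z / jfactor A τ) *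
        φ τ z
  expansion : ∀ (τ : UpperHalfPlane) (z : CV),
    HasSum (fun p : ℕ × LV => f p.1 p.2 * fterm B p.1 p.2 τ z) (φ τ z)

/-- Conway invariant weak Jacobi forms. -/
def IsWeakJacobiForm (B : Matrix (Fin 24) (Fin 24) ℤ) (k : ℤ) (t : ℕ)
    (φ : UpperHalfPlane → CV → ℂ) : Prop :=
  ∃ f, IsJacobiFormWith B k t φ f

/-- Conway invariant holomorphic Jacobi forms. -/
def IsHolJacobiForm (B : Matrix (Fin 24) (Fin 24) ℤ) (k : ℤ) (t : ℕ)
    (φ : UpperHalfPlane → CV → ℂ) : Prop :=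
  ∃ f, IsJacobiFormWith B k t φ f ∧
    ∀ (n : ℕ) (ℓ : LV), 2 * (n : ℤ) * t - pairZ B ℓ ℓ < 0 → f n ℓ = 0

/-- Modular forms of weight `k` on `SL₂(ℤ)`; the ring of all of them is `ℂ[E₄,E₆]`. -/
abbrev MForm (k : ℤ) := ModularForm (CongruenceSubgroup.Gamma 1) k

/-- The family `φ i` (of weights `w i`) freely generates the module of all forms satisfying
`P` over the ring `M_*(SL₂(ℤ)) = ℂ[E₄,E₆]` of modular forms on `SL₂(ℤ)`. -/
def FreelyGenerates (P : ℤ → (UpperHalfPlane → CV → ℂ) → Prop) {n : ℕ}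
    (w : Fin n → ℤ) (φ : Fin n → UpperHalfPlane → CV → ℂ) : Prop :=
  (∀ i, P (w i) (φ i)) ∧
  ∀ (k : ℤ) (ψ : UpperHalfPlane → CV → ℂ), P k ψ →
    ∃! g : (i : Fin n) → MForm (k - w i),
      ∀ (τ : UpperHalfPlane) (z : CV), ψ τ z = ∑ i, (g i) τ * φ i τ z

/-- The point `(aτ+b)/d` of the upper half-plane (for `a, d > 0`). -/
def heckePt (a d b : ℕ) (τ : UpperHalfPlane) : UpperHalfPlane :=
  if h : 0 < ((((a : ℂ) * (τ : ℂ) + (b : ℂ)) / (d : ℂ)).im) then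
    ⟨((a : ℂ) * (τ : ℂ) + (b : ℂ)) / (d : ℂ), h⟩ else τ

/-- The Hecke operator `T₋(m)` on Jacobi forms of weight `k`. -/
def heckeOp (k : ℤ) (m : ℕ) (φ : UpperHalfPlane → CV → ℂ) : UpperHalfPlane → CV → ℂ :=
  fun τ z => (m : ℂ)⁻¹ * ∑ d ∈ m.divisors, ∑ b ∈ Finset.range d,
    ((m / d : ℕ) : ℂ) ^ k * φ (heckePt (m / d) d b τ) (((m / d : ℕ) : ℂ) • z)

/-- The Jacobi theta function `Θ_Λ = A₁` of the lattice. -/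
def thetaLeech (B : Matrix (Fin 24) (Fin 24) ℤ) : UpperHalfPlane → CV → ℂ := fun τ z =>
  ∑' ℓ : LV, Complex.exp ((Real.pi : ℂ) * Complex.I * (pairZ B ℓ ℓ : ℂ) * (τ : ℂ)
    + 2 * (Real.pi : ℂ) * Complex.I * pairC B (liftC ℓ) z)

/-- `σ_k(n) = Σ_{d ∣ n} d^k`. -/
def sigmaNat (k n : ℕ) : ℕ := ∑ d ∈ n.divisors, d ^ k

/-- `A_t = σ₁₁(t)⁻¹ (A₁ | T₋(t))`, a holomorphic Jacobi form of weight 12 and index `t`. -/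
def Aform (B : Matrix (Fin 24) (Fin 24) ℤ) (t : ℕ) : UpperHalfPlane → CV → ℂ := fun τ z =>
  ((sigmaNat 11 t : ℂ))⁻¹ * heckeOp 12 t (thetaLeech B) τ z

/-- The quasimodular Eisenstein series `E₂`. -/
def E2 : UpperHalfPlane → ℂ := fun τ =>
  1 - 24 * ∑' n : ℕ, (sigmaNat 1 (n + 1) : ℂ) * eC (((n : ℂ) + 1) * (τ : ℂ))

/-- The discriminant cusp form `Δ(τ) = q ∏ (1-qⁿ)^24`. -/
def DeltaForm : UpperHalfPlane → ℂ := fun τ =>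
  eC (τ : ℂ) * ∏' n : ℕ, (1 - eC (((n : ℂ) + 1) * (τ : ℂ))) ^ 24

/-- `aτ`. -/
def scaleH (a : ℕ) (τ : UpperHalfPlane) : UpperHalfPlane := heckePt a 1 0 τ

/-- `(τ+j)/t`. -/
def sliceH (t j : ℕ) (τ : UpperHalfPlane) : UpperHalfPlane := heckePt 1 t j τ

/-- `f₂(τ) = (tE₂(tτ) - E₂(τ))/(t-1)`, a modular form of weight 2 on `Γ₀(t)`. -/
def f2w (t : ℕ) (τ : UpperHalfPlane) : ℂ := ((t : ℂ) * E2 (scaleH t τ) - E2 τ) / ((t : ℂ) - 1)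

/-- `B_t`, a holomorphic Jacobi form of weight 14 and index `t` (for `t` prime). -/
def Bform (B : Matrix (Fin 24) (Fin 24) ℤ) (t : ℕ) : UpperHalfPlane → CV → ℂ := fun τ z =>
  ((t : ℂ) ^ 12 / ((t : ℂ) ^ 12 - 1)) *
    (f2w t τ * thetaLeech B (scaleH t τ) ((t : ℂ) • z)
      - (t : ℂ) ^ (-13 : ℤ) *
        ∑ j ∈ Finset.range t, f2w t (sliceH t j τ) * thetaLeech B (sliceH t j τ) z)

/-- Fourier coefficients of `E₂`. -/
def e2coeff : ℕ → ℂ := fun m => if m = 0 then 1 else -24 * (sigmaNat 1 m : ℂ)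

/-- Fourier coefficients of the image `H_k(φ)` of the modified heat operator applied to a
Jacobi form of weight `k` and index `t` with Fourier coefficients `f`:
`H_k(φ) = 𝓗(φ) + ((12-k)/12)E₂φ` where `𝓗` multiplies `f(n,ℓ)` by `n - (ℓ,ℓ)/(2t)`. -/
def heatCoeff (B : Matrix (Fin 24) (Fin 24) ℤ) (k : ℤ) (t : ℕ) (f : ℕ → LV → ℂ) :
    ℕ → LV → ℂ := fun n ℓ =>
  ((n : ℂ) - (pairZ B ℓ ℓ : ℂ) / (2 * (t : ℂ))) * f n ℓ +
    ((12 - k : ℤ) : ℂ) / 12 * ∑ m ∈ Finset.range (n + 1), e2coeff m * f (n - m) ℓ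

/-- The function with Fourier coefficients `f`. -/
def fourierSeries (B : Matrix (Fin 24) (Fin 24) ℤ) (f : ℕ → LV → ℂ) :
    UpperHalfPlane → CV → ℂ := fun τ z =>
  ∑' p : ℕ × LV, f p.1 p.2 * fterm B p.1 p.2 τ z

/-- The family `Φ m = Φ_{12,m}` of Fourier–Jacobi coefficients of the Borcherds form `Φ₁₂`
at the Leech cusp:
`Δ(τ)·exp(−Σ_{m≥1}((Δ⁻¹A₁)|T₋(m))(τ,𝔷)e^{2πimω}) = Σ_{m≥0} Φ_{12,m}(τ,𝔷)e^{2πimω}`. -/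
def IsFJExpansionOfPhi12 (B : Matrix (Fin 24) (Fin 24) ℤ)
    (Φ : ℕ → UpperHalfPlane → CV → ℂ) : Prop :=
  ∀ (τ ω : UpperHalfPlane) (z : CV),
    HasSum (fun m : ℕ => Φ m τ z * eC ((m : ℂ) * (ω : ℂ)))
      (DeltaForm τ * Complex.exp
        (- ∑' m : ℕ, heckeOp 0 (m + 1) (fun σ w => thetaLeech B σ w / DeltaForm σ) τ z *
            eC (((m : ℂ) + 1) * (ω : ℂ))))

/-- `S_t`: the set of lattice vectors of minimal norm in their coset modulo `tΛ`. -/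
def minimalSet (B : Matrix (Fin 24) (Fin 24) ℤ) (t : ℕ) : Set LV :=
  {v | ∀ u : LV, (∃ w : LV, u = v + (t : ℤ) • w) → pairZ B v v ≤ pairZ B u u}

/-- `v` and `u` are conjugate modulo `tΛ` up to the Conway group. -/
def conjModT (B : Matrix (Fin 24) (Fin 24) ℤ) (t : ℕ) (v u : LV) : Prop :=
  ∃ σ ∈ ConwayGroup B, ∃ w : LV, v - σ.mulVec u = (t : ℤ) • w

/-- `s(t) = |(S_t/Co₀)/tΛ|`. -/
def sRank (B : Matrix (Fin 24) (Fin 24) ℤ) (t : ℕ) : ℕ :=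
  Nat.card (Quot (fun v u : minimalSet B t => conjModT B t v.1 u.1))

/-- `R` is a system of representatives for `(S_t/Co₀)/tΛ` (of minimal length). -/
def IsRepSystem (B : Matrix (Fin 24) (Fin 24) ℤ) (t : ℕ) (R : Finset LV) : Prop :=
  (↑R ⊆ minimalSet B t) ∧ ∀ v ∈ minimalSet B t, ∃! r, r ∈ R ∧ conjModT B t v r

/-- The Conway orbit of a lattice vector. -/
def orbitOf (B : Matrix (Fin 24) (Fin 24) ℤ) (v : LV) : Set LV :=
  {u | ∃ σ ∈ ConwayGroup B, u = σ.mulVec v}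

/-- `O` is a Conway orbit of Leech vectors of type `x` (i.e. norm `2x`) with `c` elements. -/
def OrbitData (B : Matrix (Fin 24) (Fin 24) ℤ) (O : Set LV) (x c : ℕ) : Prop :=
  (∃ v : LV, O = orbitOf B v) ∧ (∀ v ∈ O, pairZ B v v = 2 * (x : ℤ)) ∧ Nat.card O = c

/-- `W` is a `d`-dimensional subspace of the space of functions `ℍ × (Λ⊗ℂ) → ℂ`. -/
def SpanDimIs (W : (UpperHalfPlane → CV → ℂ) → Prop) (d : ℕ) : Prop :=
  ∃ φ : Fin d → UpperHalfPlane → CV → ℂ, (∀ i, W (φ i)) ∧ LinearIndependent ℂ φ ∧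
    ∀ ψ, W ψ → ∃ c : Fin d → ℂ, ψ = ∑ i, c i • φ i

/-!
Two congruent vectors differ by `tw`, and since `w` has norm at least 4 this constrains both their
norms and their inner product. Hence the vectors of minimal norm in a coset of `tΛ` form a
configuration with prescribed inner products, and there are at most `c` of them: `c = 48` for
norm 8 modulo 2, and `c = 3, 2, 9, 36` for norms 12, 14, 16, 18 modulo 3. On the other hand the
listed orbits contain minimal vectors only, and their sizes satisfy `∑ |O| / c = t²⁴ = |Λ/tΛ|`.
So every coset is hit, every bound is attained, and no further minimal vector exists.

For `t = 3` some vectors of norm 16 and 18 are not minimal, and some of norm 12 share a coset.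
These exceptional vectors form invariant sets smaller than `O_{8b}`, `O_{9b}` and `O_{6a}`,
because they are sums of vectors of norms 4 and 6, whose number is known from `t = 2`.
-/

section WelchBound

open Finset Module
open LinearMap (BilinForm)

variable {ι : Type*}

theorem sq_sum_apply_self_le_finrank_mul {K V : Type*} [Field K] [LinearOrder K]
    [IsStrictOrderedRing K] [AddCommGroup V] [Module K V] [FiniteDimensional K V]
    {b : BilinForm K V} (hb : LinearMap.IsSymm b) (hnonneg : ∀ x, 0 ≤ b x x)
    (s : Finset ι) (f : ι → V) :
    (∑ i ∈ s, b (f i) (f i)) ^ 2 ≤ finrank K V * ∑ i ∈ s, ∑ j ∈ s, b (f i) (f j) ^ 2 := by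
  have : Invertible (2 : K) := invertibleOfNonzero two_ne_zero
  obtain ⟨e, he⟩ := LinearMap.BilinForm.exists_orthogonal_basis hb
  let d k := b (e k) (e k)
  let x i k := e.repr (f i) k
  let N k l := ∑ i ∈ s, x i k * x i l
  have hbf i j : b (f i) (f j) = ∑ k, d k * (x i k * x j k) := by
    rw [← LinearMap.sum_repr_mul_repr_mul e e, Finsupp.sum_fintype _ _ (by simp)]
    refine sum_congr rfl fun k _ => ?_
    rw [Finsupp.sum_fintype _ _ (by simp),
      sum_eq_single k (fun l _ hl => by simp [he hl.symm]) (by simp)]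
    simp only [d, x, smul_eq_mul]
    ring
  have hdiag : ∑ i ∈ s, b (f i) (f i) = ∑ k, d k * N k k := by
    simp only [hbf, N, mul_sum]
    exact sum_comm
  have hsq : ∑ i ∈ s, ∑ j ∈ s, b (f i) (f j) ^ 2 = ∑ k, ∑ l, d k * d l * N k l ^ 2 := by
    simp only [hbf, N, sq, sum_mul_sum]
    simp only [mul_sum]
    rw [sum_comm_cycle]
    refine sum_congr rfl fun k _ => ?_
    rw [sum_comm_cycle]
    exact sum_congr rfl fun l _ => sum_congr rfl fun i _ => sum_congr rfl fun j _ => by ring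
  rw [hdiag, hsq]
  calc (∑ k, d k * N k k) ^ 2 ≤ finrank K V * ∑ k, (d k * N k k) ^ 2 := by
        simpa using sq_sum_le_card_mul_sum_sq (s := univ) (f := fun k => d k * N k k)
    _ ≤ finrank K V * ∑ k, ∑ l, d k * d l * N k l ^ 2 := by
        gcongr with k
        calc (d k * N k k) ^ 2 = d k * d k * N k k ^ 2 := by ring
          _ ≤ _ := single_le_sum (f := fun l => d k * d l * N k l ^ 2)
            (fun l _ => mul_nonneg (mul_nonneg (hnonneg _) (hnonneg _)) (sq_nonneg _)) (mem_univ k)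

theorem baseChange_self_nonneg {M : Type*} [AddCommGroup M] {b : BilinForm ℤ M}
    (hnonneg : ∀ x, 0 ≤ b x x) (z : TensorProduct ℤ ℚ M) : 0 ≤ b.baseChange ℚ z z := by
  obtain ⟨⟨x, n⟩, hx⟩ := IsLocalizedModule.surj (nonZeroDivisors ℤ)
    (TensorProduct.mk ℤ ℚ M 1) z
  have hn : (n : ℤ) ≠ 0 := nonZeroDivisors.ne_zero n.2
  have h : ((n : ℤ) : ℚ) ^ 2 * b.baseChange ℚ z z = b x x := by
    have : b.baseChange ℚ ((n : ℤ) • z) ((n : ℤ) • z) = b x x := by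
      rw [show (n : ℤ) • z = _ from hx]
      simp [LinearMap.BilinForm.baseChange_tmul]
    rw [← this, ← Int.cast_smul_eq_zsmul ℚ]
    simp only [map_smul, LinearMap.smul_apply, smul_eq_mul]
    ring
  have hxx : (0 : ℚ) ≤ b x x := by exact_mod_cast hnonneg x
  rw [← h] at hxx
  exact nonneg_of_mul_nonneg_right hxx (by positivity)

theorem sq_sum_norm_le_finrank_mul {M : Type*} [AddCommGroup M] [Module.Free ℤ M]
    [Module.Finite ℤ M] {b : BilinForm ℤ M} (hb : b.IsSymm) (hnonneg : ∀ x, 0 ≤ b x x)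
    (s : Finset ι) (f : ι → M) :
    (∑ i ∈ s, b (f i) (f i)) ^ 2 ≤ finrank ℤ M * ∑ i ∈ s, ∑ j ∈ s, b (f i) (f j) ^ 2 := by
  have hsymm := BilinForm.IsSymm.baseChange ℚ (BilinForm.isSymm_iff.1 hb)
  have h := sq_sum_apply_self_le_finrank_mul hsymm
    (baseChange_self_nonneg hnonneg) s fun i => (1 : ℚ) ⊗ₜ[ℤ] f i
  simp only [BilinForm.baseChange_tmul, mul_one, zsmul_eq_mul, finrank_baseChange] at h
  exact_mod_cast h

end WelchBound

section FiberCounting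

open Finset

variable {α β ι : Type*} [Fintype ι] {f : α → β} {S : ι → Finset α} {c : ι → ℕ}

theorem exists_card_fiber_eq [Fintype β] [DecidableEq β]
    (hdisj : ∀ i j, ∀ v ∈ S i, ∀ u ∈ S j, f v = f u → i = j)
    (hfib : ∀ i y, #{u ∈ S i | f u = y} ≤ c i)
    (hsum : ∑ i, (#(S i) : ℚ) / c i = Fintype.card β) (y : β) :
    ∃ i, (∃ u ∈ S i, f u = y) ∧ #{u ∈ S i | f u = y} = c i := by
  let mass y := ∑ i, (#{u ∈ S i | f u = y} : ℚ) / c i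
  have mass_eq_zero {y} (h : ∀ i, ∀ u ∈ S i, f u ≠ y) : mass y = 0 := by
    simp [mass, filter_eq_empty_iff.2 (h _)]
  have mass_eq_single {i u} (hu : u ∈ S i) : mass (f u) = #{v ∈ S i | f v = f u} / c i := by
    refine sum_eq_single i (fun j _ hj => ?_) (by simp)
    rw [filter_eq_empty_iff.2 fun v hv h => hj (hdisj _ _ _ hv _ hu h)]
    simp
  have mass_le y : mass y ≤ 1 := by
    by_cases! h : ∃ i, ∃ u ∈ S i, f u = y
    · obtain ⟨i, u, hu, rfl⟩ := h
      rw [mass_eq_single hu]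
      exact div_le_one_of_le₀ (Nat.cast_le.2 (hfib i _)) (Nat.cast_nonneg _)
    · simp [mass_eq_zero h]
  have sum_mass : ∑ y, mass y = ∑ _y : β, 1 := by
    rw [sum_comm, sum_const, card_univ, nsmul_eq_mul, mul_one, ← hsum]
    refine sum_congr rfl fun i _ => ?_
    rw [← sum_div, ← Nat.cast_sum, card_eq_sum_card_fiberwise (fun u _ => mem_univ (f u))]
  have mass_eq_one : mass y = 1 :=
    (sum_eq_sum_iff_of_le fun y _ => mass_le y).1 sum_mass y (mem_univ y)
  by_cases! h : ∃ i, ∃ u ∈ S i, f u = y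
  · obtain ⟨i, u, hu, rfl⟩ := h
    rw [mass_eq_single hu] at mass_eq_one
    exact ⟨i, ⟨u, hu, rfl⟩, by exact_mod_cast eq_of_div_eq_one mass_eq_one⟩
  · simp [mass_eq_zero h] at mass_eq_one

theorem exists_mem_of_sum_card_div_eq [Finite β] {X : Set α} (hSX : ∀ i, ∀ v ∈ S i, v ∈ X)
    (hdisj : ∀ i j, ∀ v ∈ S i, ∀ u ∈ S j, f v = f u → i = j)
    (hfib : ∀ i, ∀ v ∈ S i, ∀ F : Finset α, (∀ u ∈ F, u ∈ X ∧ f u = f v) → #F ≤ c i)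
    (hsum : ∑ i, (#(S i) : ℚ) / c i = Nat.card β) {v : α} (hv : v ∈ X) : ∃ i, v ∈ S i := by
  classical
  have := Fintype.ofFinite β
  have hmem {i y u} (hu : u ∈ ({u ∈ S i | f u = y} : Finset α)) : u ∈ X ∧ f u = y := by
    rw [mem_filter] at hu
    exact ⟨hSX i u hu.1, hu.2⟩
  have hle i y : #{u ∈ S i | f u = y} ≤ c i := by
    obtain h | ⟨v, hv⟩ := ({u ∈ S i | f u = y} : Finset α).eq_empty_or_nonempty
    · simp [h]
    · obtain ⟨hvS, rfl⟩ := mem_filter.1 hv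
      exact hfib i v hvS _ fun u => hmem
  obtain ⟨i, ⟨u, hu, huv⟩, hcard⟩ :=
    exists_card_fiber_eq hdisj hle (by rw [hsum, Nat.card_eq_fintype_card]) (f v)
  refine ⟨i, by_contra fun hvS => ?_⟩
  have := hfib i u hu (insert v {u ∈ S i | f u = f v}) fun z hz => by
    obtain rfl | hz := mem_insert.1 hz
    · exact ⟨hv, huv.symm⟩
    · exact huv ▸ hmem hz
  rw [card_insert_of_notMem (fun h => hvS (mem_filter.1 h).1), hcard] at this
  omega

end FiberCounting

section Lattice

open Finset
open LinearMap (BilinForm)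
open MulAction (orbit)
open scoped Pointwise

variable {M : Type*} [AddCommGroup M] {b : BilinForm ℤ M}

/-- Congruence of lattice vectors modulo `tM`. -/
abbrev CongrMod (t : ℤ) (v u : M) : Prop := v ≡ u [SMOD (t • ⊤ : Submodule ℤ M)]

theorem congrMod_iff_exists {t : ℤ} {v u : M} : CongrMod t v u ↔ ∃ w, v = u + t • w := by
  simp only [CongrMod, SModEq.sub_mem, Submodule.mem_smul_pointwise_iff_exists, Submodule.mem_top,
    true_and, eq_sub_iff_add_eq', eq_comm (a := v)]

theorem natCard_quotient_smul_top [Module.Free ℤ M] [Module.Finite ℤ M] {t : ℤ} (ht : t ≠ 0) :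
    Nat.card (M ⧸ (t • (⊤ : Submodule ℤ M))) = t.natAbs ^ Module.finrank ℤ M := by
  have hinj : Function.Injective (LinearMap.lsmul ℤ M t) := LinearMap.lsmul_injective ht
  have hrange : LinearMap.range (LinearMap.lsmul ℤ M t) = t • ⊤ := LinearMap.range_eq_map _
  have hdet : LinearMap.det (LinearMap.lsmul ℤ M t) = t ^ Module.finrank ℤ M := by
    rw [show LinearMap.lsmul ℤ M t = t • LinearMap.id from rfl, LinearMap.det_smul,
      LinearMap.det_id, mul_one]
  rw [← hrange, ← Int.natAbs_pow, ← hdet]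
  exact (Submodule.natAbs_det_equiv _ (LinearEquiv.ofInjective _ hinj)).symm

/-- `v` has minimal norm in its coset modulo `tM`; for the Leech lattice this is `v ∈ S_t`. -/
def IsMinimalMod (b : BilinForm ℤ M) (t : ℤ) (v : M) : Prop :=
  ∀ u, CongrMod t u v → b v v ≤ b u u

theorem IsMinimalMod.norm_eq {t : ℤ} {v u : M} (hv : IsMinimalMod b t v) (hu : IsMinimalMod b t u)
    (h : CongrMod t v u) : b v v = b u u :=
  le_antisymm (hv u h.symm) (hu v h)

theorem norm_add_smul_eq (hb : b.IsSymm) (x y : M) (n : ℤ) :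
    b (x + n • y) (x + n • y) = b x x + 2 * n * b x y + n ^ 2 * b y y := by
  simp only [map_add, map_smul, LinearMap.add_apply, LinearMap.smul_apply, smul_eq_mul, hb.eq y x]
  ring

theorem norm_add_eq (hb : b.IsSymm) (x y : M) : b (x + y) (x + y) = b x x + 2 * b x y + b y y := by
  simpa using norm_add_smul_eq hb x y 1

theorem norm_add_add_eq (hb : b.IsSymm) (x y z : M) : b (x + y + z) (x + y + z) =
    b x x + b y y + b z z + 2 * b x y + 2 * b x z + 2 * b y z := by
  rw [norm_add_eq hb, norm_add_eq hb, map_add, LinearMap.add_apply]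
  ring

theorem card_mul_sq_le_finrank_mul [Module.Free ℤ M] [Module.Finite ℤ M] (hb : b.IsSymm)
    (hnonneg : ∀ x, 0 ≤ b x x) {F : Finset M} {a : ℤ} {m : ℕ} (hF : ∀ v ∈ F, b v v = a)
    (hm : ∀ v ∈ F, ∑ u ∈ F, b v u ^ 2 ≤ m) :
    (#F * a ^ 2 : ℤ) ≤ Module.finrank ℤ M * m := by
  obtain rfl | hne := F.eq_empty_or_nonempty
  · rw [card_empty, Nat.cast_zero, zero_mul]
    positivity
  have hwelch : (∑ v ∈ F, b v v) ^ 2 ≤ Module.finrank ℤ M * ∑ v ∈ F, ∑ u ∈ F, b v u ^ 2 :=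
    sq_sum_norm_le_finrank_mul hb hnonneg F id
  rw [sum_congr rfl hF, sum_const, nsmul_eq_mul] at hwelch
  have hsum : ∑ v ∈ F, ∑ u ∈ F, b v u ^ 2 ≤ #F * m := by
    simpa using sum_le_card_nsmul F _ (m : ℤ) hm
  have hpos : (0 : ℤ) < #F := by exact_mod_cast hne.card_pos
  refine le_of_mul_le_mul_left ?_ hpos
  calc (#F * (#F * a ^ 2) : ℤ) = (#F * a) ^ 2 := by ring
    _ ≤ Module.finrank ℤ M * (#F * m) := hwelch.trans (by gcongr)
    _ = #F * (Module.finrank ℤ M * m) := by ring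

theorem card_sub_one_mul_le (hnonneg : ∀ x, 0 ≤ b x x) {F : Finset M} {a c : ℤ}
    (hne : F.Nonempty) (hF : ∀ v ∈ F, b v v = a) (hc : ∀ v ∈ F, ∀ u ∈ F, v ≠ u → b v u = -c) :
    (#F - 1) * c ≤ a := by
  classical
  have hrow : ∀ v ∈ F, ∑ u ∈ F, b v u = a - (#F - 1) * c := fun v hv => by
    rw [← add_sum_erase _ _ hv, hF v hv,
      sum_congr rfl fun u hu => hc v hv u (mem_of_mem_erase hu) (ne_of_mem_erase hu).symm,
      sum_const, card_erase_of_mem hv, nsmul_eq_mul, Nat.cast_pred hne.card_pos]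
    ring
  have hsum : b (∑ v ∈ F, v) (∑ v ∈ F, v) = #F * (a - (#F - 1) * c) := by
    simp only [map_sum, LinearMap.sum_apply]
    rw [sum_comm, sum_congr rfl hrow, sum_const, nsmul_eq_mul]
  have hpos : (0 : ℤ) < #F := by exact_mod_cast hne.card_pos
  have := nonneg_of_mul_nonneg_right (hsum ▸ hnonneg _) hpos
  linarith

theorem two_mul_encard_pairing_le {X Y : Set M} (hX : ∀ x ∈ X, -x ∈ X) {k : ℤ}
    (hk : k ≠ 0) :
    2 * {p ∈ X ×ˢ Y | b p.1 p.2 = k}.encard ≤ X.encard * Y.encard := by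
  set P := {p ∈ X ×ˢ Y | b p.1 p.2 = k}
  have hinj : Function.Injective (Prod.map Neg.neg id : M × M → M × M) :=
    neg_injective.prodMap Function.injective_id
  have hdisj : Disjoint P (Prod.map Neg.neg id '' P) := by
    rw [Set.disjoint_left]
    rintro - hp ⟨p, hp', rfl⟩
    have := hp.2
    rw [Prod.map_fst, Prod.map_snd, id, map_neg, LinearMap.neg_apply, hp'.2] at this
    omega
  rw [← Set.encard_prod, two_mul]
  nth_rw 2 [← hinj.encard_image P]
  rw [← Set.encard_union_eq hdisj]
  refine Set.encard_le_encard (Set.union_subset (Set.sep_subset _ _) ?_)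
  rintro - ⟨p, hp, rfl⟩
  exact ⟨hX _ hp.1.1, hp.1.2⟩

/-- The vectors of norm `a`. -/
def shell (b : BilinForm ℤ M) (a : ℤ) : Set M := {v | b v v = a}

/-- The vectors of norm `a` that are congruent modulo `tM` to another vector of norm `a`. -/
def congruentShell (b : BilinForm ℤ M) (t a : ℤ) : Set M :=
  {v ∈ shell b a | ∃ u ∈ shell b a, u ≠ v ∧ CongrMod t u v}

/-- The vectors of norm `a` that are not of minimal norm in their coset modulo `tM`. -/
def nonminimalShell (b : BilinForm ℤ M) (t a : ℤ) : Set M :=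
  {v ∈ shell b a | ¬ IsMinimalMod b t v}

theorem neg_mem_shell {a : ℤ} {v : M} (hv : v ∈ shell b a) : -v ∈ shell b a := by
  simpa [shell] using hv

/-- `b` is a positive definite even integral form without vectors of norm 2 (roots), in any
rank: the part of the definition of the Leech lattice on which the congruence arguments rest. -/
structure IsEvenRootless (b : BilinForm ℤ M) : Prop where
  isSymm : b.IsSymm
  pos : ∀ v, v ≠ 0 → 0 < b v v
  even : ∀ v, Even (b v v)
  norm_ne_two : ∀ v, b v v ≠ 2

namespace IsEvenRootless

theorem norm_nonneg (hb : IsEvenRootless b) (v : M) : 0 ≤ b v v := by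
  obtain rfl | hv := eq_or_ne v 0
  · simp
  · exact (hb.pos v hv).le

theorem four_le_norm (hb : IsEvenRootless b) {v : M} (hv : v ≠ 0) : 4 ≤ b v v := by
  have := hb.pos v hv
  have := hb.norm_ne_two v
  have := (hb.even v).two_dvd
  omega

theorem eq_zero_of_norm_eq_zero (hb : IsEvenRootless b) {v : M} (hv : b v v = 0) : v = 0 :=
  by_contra fun h => (hb.pos v h).ne' hv

theorem exists_of_congrMod_two (hb : IsEvenRootless b) {v u : M} (h : CongrMod 2 v u)
    (hne : v ≠ u) (hne_neg : v ≠ -u) :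
    ∃ x y, 4 ≤ b x x ∧ 4 ≤ b y y ∧ b v v + b u u = 2 * b x x + 2 * b y y ∧
      b v u = b y y - b x x := by
  obtain ⟨x, rfl⟩ := congrMod_iff_exists.1 h
  refine ⟨x, u + x, hb.four_le_norm ?_, hb.four_le_norm ?_, ?_, ?_⟩
  · rintro rfl
    simp at hne
  · intro h0
    rw [add_eq_zero_iff_neg_eq] at h0
    exact hne_neg (by rw [← h0]; module)
  · rw [norm_add_smul_eq hb.isSymm, norm_add_eq hb.isSymm]
    ring
  · rw [norm_add_eq hb.isSymm, map_add, map_smul, LinearMap.add_apply, LinearMap.smul_apply,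
      hb.isSymm.eq x u, smul_eq_mul]
    ring

theorem eq_or_eq_neg_of_congrMod_two (hb : IsEvenRootless b) {v u : M} (h : CongrMod 2 v u)
    (hlt : b v v + b u u < 16) : v = u ∨ v = -u := by
  by_contra! hne
  obtain ⟨x, y, hx, hy, hsum, -⟩ := hb.exists_of_congrMod_two h hne.1 hne.2
  omega

theorem orthogonal_of_congrMod_two (hb : IsEvenRootless b) {v u : M} (h : CongrMod 2 v u)
    (hle : b v v + b u u ≤ 16) (hne : v ≠ u) (hne_neg : v ≠ -u) : b v u = 0 := by
  obtain ⟨x, y, hx, hy, hsum, hvu⟩ := hb.exists_of_congrMod_two h hne hne_neg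
  omega

theorem isMinimalMod_two (hb : IsEvenRootless b) {v : M} (hv : b v v ≤ 8) :
    IsMinimalMod b 2 v := by
  intro u hu
  by_contra! hlt
  obtain rfl | rfl := hb.eq_or_eq_neg_of_congrMod_two hu (by omega) <;> simp at hlt

theorem exists_of_congrMod_three (hb : IsEvenRootless b) {v u : M} (h : CongrMod 3 v u)
    (hne : v ≠ u) (hnorm : b v v = b u u) :
    ∃ y w, v = y + w ∧ 4 ≤ b y y ∧ 4 ≤ b w w ∧ 2 * b y w = b w w ∧
      b v v = b y y + 2 * b w w ∧ 2 * b v u = 2 * b v v - 9 * b w w := by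
  obtain ⟨w, rfl⟩ := congrMod_iff_exists.1 h
  have hw : w ≠ 0 := by
    rintro rfl
    simp at hne
  have huw : 2 * b u w = - (3 * b w w) := by
    rw [norm_add_smul_eq hb.isSymm] at hnorm
    linarith
  have hvu : b (u + (3 : ℤ) • w) u = b u u + 3 * b u w := by simp [hb.isSymm.eq w u]
  have hyy := norm_add_smul_eq hb.isSymm u w 2
  have hyw : b (u + (2 : ℤ) • w) w = b u w + 2 * b w w := by simp
  have hy : u + (2 : ℤ) • w ≠ 0 := by
    intro h0
    rw [h0, map_zero, LinearMap.zero_apply] at hyw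
    have := hb.pos w hw
    omega
  exact ⟨u + (2 : ℤ) • w, w, by module, hb.four_le_norm hy, hb.four_le_norm hw, by linarith,
    by linarith, by linarith⟩

theorem exists_of_not_isMinimalMod_three (hb : IsEvenRootless b) {v : M}
    (hmin : ¬ IsMinimalMod b 3 v) :
    ∃ x w, v = x + (2 : ℤ) • w ∧ 4 ≤ b w w ∧ b v v = b x x + 4 * b x w + 4 * b w w ∧
      b x x + 2 * b w w + 4 ≤ b v v := by
  simp only [IsMinimalMod, not_forall, not_le] at hmin
  obtain ⟨u, hu, hlt⟩ := hmin
  obtain ⟨w, rfl⟩ := congrMod_iff_exists.1 hu.symm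
  have hw : w ≠ 0 := by
    rintro rfl
    simp at hlt
  have hv := norm_add_smul_eq hb.isSymm u w 3
  have hx := norm_add_eq hb.isSymm u w
  have hxw : b (u + w) w = b u w + b w w := by simp
  have := (hb.even w).two_dvd
  exact ⟨u + w, w, by module, hb.four_le_norm hw, by linarith, by omega⟩

theorem norm_sum_ne_eighteen (hb : IsEvenRootless b) {u v z : M} (hv : CongrMod 3 v u)
    (hz : CongrMod 3 z u) : b (u + v + z) (u + v + z) ≠ 18 := by
  obtain ⟨x, rfl⟩ := congrMod_iff_exists.1 hv
  obtain ⟨y, rfl⟩ := congrMod_iff_exists.1 hz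
  rw [show u + (u + (3 : ℤ) • x) + (u + (3 : ℤ) • y) = (3 : ℤ) • (u + x + y) by module]
  have := hb.norm_ne_two (u + x + y)
  simp only [map_smul, LinearMap.smul_apply, smul_eq_mul]
  omega

section Fibers

variable {F : Finset M}

theorem card_le_two_of_congrMod_two (hb : IsEvenRootless b) (hF : ∀ v ∈ F, b v v < 8)
    (hcong : ∀ v ∈ F, ∀ u ∈ F, CongrMod 2 v u) : #F ≤ 2 := by
  classical
  obtain rfl | ⟨u, hu⟩ := F.eq_empty_or_nonempty
  · simp
  · have hsub : F ⊆ {u, -u} := fun v hv => by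
      have := hF v hv
      have := hF u hu
      simpa using hb.eq_or_eq_neg_of_congrMod_two (hcong v hv u hu) (by omega)
    exact (card_le_card hsub).trans card_le_two

theorem card_le_two_mul_finrank_of_congrMod_two [Module.Free ℤ M] [Module.Finite ℤ M]
    (hb : IsEvenRootless b) (hF : ∀ v ∈ F, b v v = 8)
    (hcong : ∀ v ∈ F, ∀ u ∈ F, CongrMod 2 v u) : #F ≤ 2 * Module.finrank ℤ M := by
  classical
  have hsub : ∀ v ∈ F, {u ∈ F | b v u ^ 2 ≠ 0} ⊆ {v, -v} := fun v hv u hu => by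
    rw [mem_filter, pow_ne_zero_iff two_ne_zero] at hu
    rw [mem_insert, mem_singleton, ← neg_eq_iff_eq_neg, eq_comm, eq_comm (b := v)]
    by_contra! hne
    exact hu.2 (hb.orthogonal_of_congrMod_two (hcong v hv u hu.1) (by grind) hne.1 hne.2)
  have hrow : ∀ v ∈ F, ∑ u ∈ F, b v u ^ 2 ≤ (128 : ℕ) := fun v hv => by
    calc ∑ u ∈ F, b v u ^ 2 = ∑ u ∈ F with b v u ^ 2 ≠ 0, b v u ^ 2 := (sum_filter_ne_zero F).symm
      _ ≤ #{u ∈ F | b v u ^ 2 ≠ 0} • (64 : ℤ) := sum_le_card_nsmul _ _ _ fun u hu => by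
          have hvv := hF v hv
          have := hsub v hv hu
          rw [mem_insert, mem_singleton] at this
          obtain rfl | rfl := this <;> simp [hvv]
      _ ≤ 2 • (64 : ℤ) := by
          gcongr
          exact (card_le_card (hsub v hv)).trans card_le_two
      _ = (128 : ℕ) := by norm_num
  have := card_mul_sq_le_finrank_mul hb.isSymm hb.norm_nonneg hF hrow
  push_cast at this
  omega

theorem eq_of_congrMod_three_of_norm_lt_twelve (hb : IsEvenRootless b) {v u : M}
    (h : CongrMod 3 v u) (hnorm : b v v = b u u) (hlt : b v v < 12) : v = u := by
  by_contra hne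
  obtain ⟨y, w, -, hy, hw, -, hv, -⟩ := hb.exists_of_congrMod_three h hne hnorm
  omega

theorem exists_of_norm_eq_twelve (hb : IsEvenRootless b) {v u : M} (h : CongrMod 3 v u)
    (hne : v ≠ u) (hv : b v v = 12) (hu : b u u = 12) :
    b v u = -6 ∧ ∃ y w, v = y + w ∧ b y y = 4 ∧ b w w = 4 ∧ b y w = 2 := by
  obtain ⟨y, w, hvyw, hy, hw, hyw, hnorm, hvu⟩ :=
    hb.exists_of_congrMod_three h hne (hv.trans hu.symm)
  exact ⟨by omega, y, w, hvyw, by omega, by omega, by omega⟩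

theorem pairing_eq_neg_four (hb : IsEvenRootless b) {v u : M} (h : CongrMod 3 v u)
    (hne : v ≠ u) (hv : b v v = 14) (hu : b u u = 14) : b v u = -4 := by
  obtain ⟨y, w, -, hy, hw, -, hnorm, hvu⟩ :=
    hb.exists_of_congrMod_three h hne (hv.trans hu.symm)
  have := (hb.even w).two_dvd
  omega

theorem pairing_eq_neg_two (hb : IsEvenRootless b) {v u : M} (h : CongrMod 3 v u)
    (hne : v ≠ u) (hmin : IsMinimalMod b 3 v) (hv : b v v = 16) (hu : b u u = 16) :
    b v u = -2 := by
  obtain ⟨y, w, rfl, hy, hw, hyw, hnorm, hvu⟩ :=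
    hb.exists_of_congrMod_three h hne (hv.trans hu.symm)
  have hred := hmin (w + (-2 : ℤ) • y) (congrMod_iff_exists.2 ⟨-y, by module⟩)
  rw [norm_add_smul_eq hb.isSymm, hb.isSymm.eq w y] at hred
  have := (hb.even w).two_dvd
  omega

theorem pairing_eq_zero_or_neg_nine (hb : IsEvenRootless b) {v u : M} (h : CongrMod 3 v u)
    (hne : v ≠ u) (hv : b v v = 18) (hu : b u u = 18) : b v u = 0 ∨ b v u = -9 := by
  obtain ⟨y, w, -, hy, hw, -, hnorm, hvu⟩ :=
    hb.exists_of_congrMod_three h hne (hv.trans hu.symm)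
  have := (hb.even w).two_dvd
  omega

theorem add_add_eq_zero_of_pairing_eq_neg_nine (hb : IsEvenRootless b) {v p q : M}
    (hp : CongrMod 3 p v) (hq : CongrMod 3 q v) (hne : p ≠ q) (hv : b v v = 18)
    (hpp : b p p = 18) (hqq : b q q = 18) (hvp : b v p = -9) (hvq : b v q = -9) :
    v + p + q = 0 := by
  have hnorm := norm_add_add_eq hb.isSymm v p q
  have htriple := hb.norm_sum_ne_eighteen hp hq
  apply hb.eq_zero_of_norm_eq_zero
  obtain hpq | hpq := hb.pairing_eq_zero_or_neg_nine (hp.trans hq.symm) hne hpp hqq <;> omega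

theorem card_filter_pairing_eq_neg_nine_le (hb : IsEvenRootless b) (hF : ∀ v ∈ F, b v v = 18)
    (hcong : ∀ v ∈ F, ∀ u ∈ F, CongrMod 3 v u) {v : M} (hv : v ∈ F) :
    #{u ∈ F | b v u = -9} ≤ 2 := by
  classical
  obtain h | ⟨p, hp⟩ := ({u ∈ F | b v u = -9} : Finset M).eq_empty_or_nonempty
  · simp [h]
  rw [mem_filter] at hp
  have hsub : ({u ∈ F | b v u = -9} : Finset M) ⊆ {p, -(v + p)} := fun q hq => by
    rw [mem_filter] at hq
    rw [mem_insert, mem_singleton, or_iff_not_imp_left]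
    exact fun hne => (neg_eq_of_add_eq_zero_right <|
      hb.add_add_eq_zero_of_pairing_eq_neg_nine (hcong p hp.1 v hv) (hcong q hq.1 v hv)
        (Ne.symm hne) (hF v hv) (hF p hp.1) (hF q hq.1) hp.2 hq.2).symm
  exact (card_le_card hsub).trans card_le_two

theorem two_mul_card_le_three_mul_finrank [Module.Free ℤ M] [Module.Finite ℤ M]
    (hb : IsEvenRootless b) (hF : ∀ v ∈ F, b v v = 18)
    (hcong : ∀ v ∈ F, ∀ u ∈ F, CongrMod 3 v u) : 2 * #F ≤ 3 * Module.finrank ℤ M := by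
  classical
  have hrow : ∀ v ∈ F, ∑ u ∈ F, b v u ^ 2 ≤ (486 : ℕ) := fun v hv => by
    calc ∑ u ∈ F, b v u ^ 2
        ≤ ∑ u ∈ F, ((if u = v then 324 else 0) + if b v u = -9 then 81 else 0) := by
          refine sum_le_sum fun u hu => ?_
          obtain rfl | hne := eq_or_ne u v
          · simp [hF u hu]
          · obtain h | h := hb.pairing_eq_zero_or_neg_nine (hcong v hv u hu) hne.symm (hF v hv)
              (hF u hu) <;> simp [h, hne]
      _ = 324 + #{u ∈ F | b v u = -9} * 81 := by
          rw [sum_add_distrib, sum_ite_eq' F v, if_pos hv, ← sum_filter, sum_const, nsmul_eq_mul]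
      _ ≤ 324 + 2 * 81 := by
          gcongr
          exact_mod_cast hb.card_filter_pairing_eq_neg_nine_le hF hcong hv
      _ = (486 : ℕ) := by norm_num
  have := card_mul_sq_le_finrank_mul hb.isSymm hb.norm_nonneg hF hrow
  push_cast at this
  omega

theorem card_le_three_of_norm_eq_twelve (hb : IsEvenRootless b) (hF : ∀ v ∈ F, b v v = 12)
    (hcong : ∀ v ∈ F, ∀ u ∈ F, CongrMod 3 v u) : #F ≤ 3 := by
  obtain rfl | hne := F.eq_empty_or_nonempty
  · simp
  have := card_sub_one_mul_le hb.norm_nonneg hne hF fun v hv u hu hvu =>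
    (hb.exists_of_norm_eq_twelve (hcong v hv u hu) hvu (hF v hv) (hF u hu)).1
  omega

theorem card_le_nine_of_norm_eq_sixteen (hb : IsEvenRootless b)
    (hmin : ∀ v ∈ F, IsMinimalMod b 3 v) (hF : ∀ v ∈ F, b v v = 16)
    (hcong : ∀ v ∈ F, ∀ u ∈ F, CongrMod 3 v u) : #F ≤ 9 := by
  obtain rfl | hne := F.eq_empty_or_nonempty
  · simp
  have := card_sub_one_mul_le hb.norm_nonneg hne hF fun v hv u hu hvu =>
    hb.pairing_eq_neg_two (hcong v hv u hu) hvu (hmin v hv) (hF v hv) (hF u hu)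
  omega

theorem card_le_two_of_norm_eq_fourteen (hb : IsEvenRootless b) (hF : ∀ v ∈ F, b v v = 14)
    (hcong : ∀ v ∈ F, ∀ u ∈ F, CongrMod 3 v u) : #F ≤ 2 := by
  by_contra! hcard
  obtain ⟨u, v, z, hu, hv, hz, huv, huz, hvz⟩ := two_lt_card_iff.1 hcard
  have hpair {x y} (hx : x ∈ F) (hy : y ∈ F) (hxy : x ≠ y) : b x y = -4 :=
    hb.pairing_eq_neg_four (hcong x hx y hy) hxy (hF x hx) (hF y hy)
  refine hb.norm_sum_ne_eighteen (hcong v hv u hu) (hcong z hz u hu) ?_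
  rw [norm_add_add_eq hb.isSymm, hF u hu, hF v hv, hF z hz, hpair hu hv huv, hpair hu hz huz,
    hpair hv hz hvz]
  norm_num

end Fibers

theorem isMinimalMod_three_of_norm_le_fourteen (hb : IsEvenRootless b) {v : M} (hv : b v v ≤ 14) :
    IsMinimalMod b 3 v := by
  by_contra hmin
  obtain ⟨x, w, -, hw, hnorm, hle⟩ := hb.exists_of_not_isMinimalMod_three hmin
  have hx : x = 0 := by_contra fun hx => by have := hb.four_le_norm hx; omega
  simp only [hx, map_zero, LinearMap.zero_apply] at hnorm
  omega

theorem exists_of_not_isMinimalMod_of_norm_eq_sixteen (hb : IsEvenRootless b) {v : M}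
    (hv : b v v = 16) (hmin : ¬ IsMinimalMod b 3 v) :
    ∃ x w, v = x + (2 : ℤ) • w ∧ (x = 0 ∨ b x x = 4) ∧ b w w = 4 := by
  obtain ⟨x, w, hvxw, hw, hnorm, hle⟩ := hb.exists_of_not_isMinimalMod_three hmin
  have := (hb.even w).two_dvd
  obtain rfl | hx := eq_or_ne x 0
  · simp only [map_zero, LinearMap.zero_apply] at hnorm
    exact ⟨0, w, hvxw, .inl rfl, by omega⟩
  · have := hb.four_le_norm hx
    exact ⟨x, w, hvxw, .inr (by omega), by omega⟩

theorem exists_of_not_isMinimalMod_of_norm_eq_eighteen (hb : IsEvenRootless b) {v : M}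
    (hv : b v v = 18) (hmin : ¬ IsMinimalMod b 3 v) :
    ∃ x w, v = x + (2 : ℤ) • w ∧ b x x = 6 ∧ b w w = 4 ∧ b x w = -1 := by
  obtain ⟨x, w, hvxw, hw, hnorm, hle⟩ := hb.exists_of_not_isMinimalMod_three hmin
  have := (hb.even w).two_dvd
  obtain rfl | hx := eq_or_ne x 0
  · simp only [map_zero, LinearMap.zero_apply] at hnorm
    omega
  · have := hb.four_le_norm hx
    exact ⟨x, w, hvxw, by omega, by omega, by omega⟩

theorem two_mul_encard_congruentShell_le (hb : IsEvenRootless b) :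
    2 * (congruentShell b 3 12).encard ≤ (shell b 4).encard * (shell b 4).encard := by
  have hsub : congruentShell b 3 12 ⊆
      (fun p => p.1 + p.2) '' {p ∈ shell b 4 ×ˢ shell b 4 | b p.1 p.2 = 2} := by
    rintro v ⟨hv, u, hu, hne, h⟩
    obtain ⟨-, y, w, rfl, hy, hw, hyw⟩ := hb.exists_of_norm_eq_twelve h.symm hne.symm hv hu
    exact ⟨(y, w), ⟨⟨hy, hw⟩, hyw⟩, rfl⟩
  calc 2 * (congruentShell b 3 12).encard
      ≤ 2 * {p ∈ shell b 4 ×ˢ shell b 4 | b p.1 p.2 = 2}.encard := by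
        gcongr
        exact (Set.encard_le_encard hsub).trans (Set.encard_image_le _ _)
    _ ≤ _ := two_mul_encard_pairing_le (fun _ => neg_mem_shell) two_ne_zero

theorem encard_nonminimalShell_sixteen_le (hb : IsEvenRootless b) :
    (nonminimalShell b 3 16).encard ≤ ((shell b 4).encard + 1) * (shell b 4).encard := by
  have hsub : nonminimalShell b 3 16 ⊆
      (fun p => p.1 + (2 : ℤ) • p.2) '' (insert 0 (shell b 4) ×ˢ shell b 4) := by
    rintro v ⟨hv, hmin⟩
    obtain ⟨x, w, rfl, hx, hw⟩ := hb.exists_of_not_isMinimalMod_of_norm_eq_sixteen hv hmin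
    exact ⟨(x, w), ⟨hx, hw⟩, rfl⟩
  calc (nonminimalShell b 3 16).encard
      ≤ (insert 0 (shell b 4) ×ˢ shell b 4).encard :=
        (Set.encard_le_encard hsub).trans (Set.encard_image_le _ _)
    _ ≤ _ := by
        rw [Set.encard_prod]
        gcongr
        exact Set.encard_insert_le _ _

theorem two_mul_encard_nonminimalShell_eighteen_le (hb : IsEvenRootless b) :
    2 * (nonminimalShell b 3 18).encard ≤ (shell b 6).encard * (shell b 4).encard := by
  have hsub : nonminimalShell b 3 18 ⊆
      (fun p => p.1 + (2 : ℤ) • p.2) '' {p ∈ shell b 6 ×ˢ shell b 4 | b p.1 p.2 = -1} := by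
    rintro v ⟨hv, hmin⟩
    obtain ⟨x, w, rfl, hx, hw, hxw⟩ := hb.exists_of_not_isMinimalMod_of_norm_eq_eighteen hv hmin
    exact ⟨(x, w), ⟨⟨hx, hw⟩, hxw⟩, rfl⟩
  calc 2 * (nonminimalShell b 3 18).encard
      ≤ 2 * {p ∈ shell b 6 ×ˢ shell b 4 | b p.1 p.2 = -1}.encard := by
        gcongr
        exact (Set.encard_le_encard hsub).trans (Set.encard_image_le _ _)
    _ ≤ _ := two_mul_encard_pairing_le (fun _ => neg_mem_shell) (by norm_num)

end IsEvenRootless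

section Isometries

theorem CongrMod.map {t : ℤ} {v u : M} (h : CongrMod t v u) (g : M →ₗ[ℤ] M) :
    CongrMod t (g v) (g u) := by
  obtain ⟨w, rfl⟩ := congrMod_iff_exists.1 h
  exact congrMod_iff_exists.2 ⟨g w, by simp⟩

/-- The automorphism group of the lattice `(M, b)`. -/
def isometryGroup (b : BilinForm ℤ M) : Subgroup (M ≃ₗ[ℤ] M) where
  carrier := {g | ∀ x y, b (g x) (g y) = b x y}
  one_mem' _ _ := rfl
  mul_mem' hg hh x y := (hg _ _).trans (hh x y)
  inv_mem' {g} hg x y := by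
    rw [← hg, ← LinearEquiv.mul_apply, ← LinearEquiv.mul_apply, mul_inv_cancel]
    rfl

variable (g : isometryGroup b)

theorem isometry_norm_eq (v : M) : b (g • v) (g • v) = b v v := g.2 v v

theorem CongrMod.smul {t : ℤ} {v u : M} (h : CongrMod t v u) : CongrMod t (g • v) (g • u) :=
  h.map (g : M ≃ₗ[ℤ] M).toLinearMap

theorem IsMinimalMod.smul {t : ℤ} {v : M} (hv : IsMinimalMod b t v) :
    IsMinimalMod b t (g • v) := by
  intro u hu
  have h := hu.smul g⁻¹
  rw [inv_smul_smul] at h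
  have := hv _ h
  rwa [isometry_norm_eq, ← isometry_norm_eq g v] at this

theorem smul_mem_congruentShell {t a : ℤ} {v : M} (hv : v ∈ congruentShell b t a) :
    g • v ∈ congruentShell b t a := by
  obtain ⟨hva, u, hua, hne, h⟩ := hv
  exact ⟨(isometry_norm_eq g v).trans hva, g • u, (isometry_norm_eq g u).trans hua,
    (MulAction.injective g).ne hne, h.smul g⟩

theorem smul_mem_nonminimalShell {t a : ℤ} {v : M} (hv : v ∈ nonminimalShell b t a) :
    g • v ∈ nonminimalShell b t a := by
  refine ⟨(isometry_norm_eq g v).trans hv.1, fun h => hv.2 ?_⟩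
  simpa using h.smul g⁻¹

end Isometries

theorem disjoint_orbit_of_encard_lt {G α : Type*} [Group G] [MulAction G α] {E : Set α}
    (hE : ∀ g : G, ∀ v ∈ E, g • v ∈ E) {w : α}
    (hlt : E.encard < (orbit G w).encard) : Disjoint (orbit G w) E := by
  rw [Set.disjoint_left]
  intro v hv hvE
  refine hlt.not_ge (Set.encard_le_encard ?_)
  rw [← MulAction.orbit_eq_iff.2 hv]
  rintro - ⟨g, rfl⟩
  exact hE g v hvE

/-- `O` is an orbit of the automorphism group consisting of `c` vectors of type `x`, that is of
norm `2 * x`. -/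
structure IsOrbitOfType (b : BilinForm ℤ M) (O : Set M) (x c : ℕ) : Prop where
  exists_eq_orbit : ∃ v, O = orbit (isometryGroup b) v
  norm_eq : ∀ v ∈ O, b v v = 2 * (x : ℤ)
  natCard_eq : Nat.card O = c

theorem isOrbitOfType_zero : IsOrbitOfType b {0} 0 1 where
  exists_eq_orbit := ⟨0, by ext; simp [MulAction.mem_orbit_iff, eq_comm]⟩
  norm_eq := by simp
  natCard_eq := by simp

namespace IsOrbitOfType

variable {O : Set M} {x c : ℕ}

theorem encard_eq (h : IsOrbitOfType b O x c) (hc : c ≠ 0) : O.encard = c := by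
  have hfin : O.Finite := Nat.finite_of_card_ne_zero (h.natCard_eq.trans_ne hc)
  rw [← h.natCard_eq, Nat.card_coe_set_eq, hfin.cast_ncard_eq]

theorem card_eq_of_mem {O' : Set M} {x' c' : ℕ} (h : IsOrbitOfType b O x c)
    (h' : IsOrbitOfType b O' x' c') {v : M} (hv : v ∈ O) (hv' : v ∈ O') : c = c' := by
  obtain ⟨w, rfl⟩ := h.exists_eq_orbit
  obtain ⟨w', rfl⟩ := h'.exists_eq_orbit
  rw [← h.natCard_eq, ← h'.natCard_eq, ← MulAction.orbit_eq_iff.2 hv, MulAction.orbit_eq_iff.2 hv']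

theorem disjoint_of_encard_lt (h : IsOrbitOfType b O x c) {E : Set M}
    (hE : ∀ g : isometryGroup b, ∀ v ∈ E, g • v ∈ E) (hlt : E.encard < c) : Disjoint O E := by
  have hc : c ≠ 0 := by
    rintro rfl
    simp at hlt
  rw [← h.encard_eq hc] at hlt
  obtain ⟨w, rfl⟩ := h.exists_eq_orbit
  exact disjoint_orbit_of_encard_lt hE hlt

theorem disjoint_congruentShell_twelve (hb : IsEvenRootless b) (h : IsOrbitOfType b O x c)
    (hlt : (shell b 4).encard * (shell b 4).encard < 2 * c) :
    Disjoint O (congruentShell b 3 12) :=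
  h.disjoint_of_encard_lt (fun g _ => smul_mem_congruentShell g) <|
    lt_of_mul_lt_mul_left' (hb.two_mul_encard_congruentShell_le.trans_lt hlt)

theorem disjoint_nonminimalShell_sixteen (hb : IsEvenRootless b) (h : IsOrbitOfType b O x c)
    (hlt : ((shell b 4).encard + 1) * (shell b 4).encard < c) :
    Disjoint O (nonminimalShell b 3 16) :=
  h.disjoint_of_encard_lt (fun g _ => smul_mem_nonminimalShell g) <|
    hb.encard_nonminimalShell_sixteen_le.trans_lt hlt

theorem disjoint_nonminimalShell_eighteen (hb : IsEvenRootless b) (h : IsOrbitOfType b O x c)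
    (hlt : (shell b 6).encard * (shell b 4).encard < 2 * c) :
    Disjoint O (nonminimalShell b 3 18) :=
  h.disjoint_of_encard_lt (fun g _ => smul_mem_nonminimalShell g) <|
    lt_of_mul_lt_mul_left' (hb.two_mul_encard_nonminimalShell_eighteen_le.trans_lt hlt)

end IsOrbitOfType

/-- The sets `S i` are the orbits of minimal vectors modulo `tM`, and vectors in different
orbits are incongruent. Thus `ι` indexes the classes of minimal vectors up to automorphisms and
congruence, i.e. the set `(S_t/Co₀)/tΛ` for the Leech lattice. -/
structure ClassifiesMinimal {ι : Type*} (b : BilinForm ℤ M) (t : ℤ) (S : ι → Set M) : Prop where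
  exists_eq_orbit : ∀ i, ∃ v, S i = orbit (isometryGroup b) v
  isMinimalMod_iff : ∀ v, IsMinimalMod b t v ↔ ∃ i, v ∈ S i
  eq_of_congrMod : ∀ {i j v u}, v ∈ S i → u ∈ S j → CongrMod t v u → i = j

theorem classifiesMinimal_of_sum_div_eq [Module.Free ℤ M] [Module.Finite ℤ M] {ι : Type*}
    [Fintype ι] {t : ℤ} (ht : t ≠ 0) {S : ι → Set M} {x size c : ι → ℕ}
    (hS : ∀ i, IsOrbitOfType b (S i) (x i) (size i)) (hsize : ∀ i, size i ≠ 0)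
    (hmin : ∀ i, ∀ v ∈ S i, IsMinimalMod b t v)
    (hsep : ∀ {i j v u}, v ∈ S i → u ∈ S j → CongrMod t v u → i = j)
    (hfib : ∀ i, ∀ v ∈ S i, ∀ F : Finset M,
      (∀ u ∈ F, IsMinimalMod b t u ∧ CongrMod t u v) → #F ≤ c i)
    (hsum : ∑ i, (size i : ℚ) / c i = t.natAbs ^ Module.finrank ℤ M) :
    ClassifiesMinimal b t S := by
  have hfin i : (S i).Finite := Nat.finite_of_card_ne_zero ((hS i).natCard_eq.trans_ne (hsize i))
  have hcard i : #(hfin i).toFinset = size i := by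
    rw [← (hS i).natCard_eq, Nat.card_coe_set_eq, Set.ncard_eq_toFinset_card _ (hfin i)]
  have hquot := natCard_quotient_smul_top (M := M) ht
  have : Finite (M ⧸ (t • (⊤ : Submodule ℤ M))) :=
    Nat.finite_of_card_ne_zero (hquot.trans_ne (pow_ne_zero _ (Int.natAbs_ne_zero.2 ht)))
  refine ⟨fun i => (hS i).exists_eq_orbit,
    fun v => ⟨fun hv => ?_, fun ⟨i, hi⟩ => hmin i v hi⟩, hsep⟩
  obtain ⟨i, hi⟩ := exists_mem_of_sum_card_div_eq
    (f := Submodule.Quotient.mk (p := t • (⊤ : Submodule ℤ M)))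
    (S := fun i => (hfin i).toFinset) (c := c) (X := {v | IsMinimalMod b t v})
    (fun i v hv => hmin i v ((hfin i).mem_toFinset.1 hv))
    (fun i j v hv u hu => hsep ((hfin i).mem_toFinset.1 hv) ((hfin j).mem_toFinset.1 hu))
    (fun i v hv => hfib i v ((hfin i).mem_toFinset.1 hv))
    (by simp only [hcard, hsum, hquot, Nat.cast_pow]) hv
  exact ⟨i, (hfin i).mem_toFinset.1 hi⟩

namespace ClassifiesMinimal

variable {ι : Type*} {t : ℤ} {S : ι → Set M}

theorem nonempty (h : ClassifiesMinimal b t S) (i : ι) : (S i).Nonempty := by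
  obtain ⟨v, hv⟩ := h.exists_eq_orbit i
  exact hv ▸ MulAction.nonempty_orbit v

theorem exists_congrMod_smul_iff (h : ClassifiesMinimal b t S) {i j : ι} {v u : M} (hv : v ∈ S i)
    (hu : u ∈ S j) : (∃ g : isometryGroup b, CongrMod t v (g • u)) ↔ i = j := by
  obtain ⟨w, hw⟩ := h.exists_eq_orbit j
  constructor
  · rintro ⟨g, hg⟩
    refine h.eq_of_congrMod hv ?_ hg
    rw [hw] at hu ⊢
    exact MulAction.orbit_eq_iff.2 hu ▸ MulAction.mem_orbit u g
  · rintro rfl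
    rw [hw] at hv hu
    obtain ⟨g, rfl⟩ := MulAction.orbit_eq_iff.2 hu ▸ hv
    exact ⟨g, SModEq.rfl⟩

theorem shell_eq (h : ClassifiesMinimal b t S) {a : ℤ} {i : ι}
    (hmin : ∀ v ∈ shell b a, IsMinimalMod b t v) (hnorm : ∀ j, ∀ v ∈ S j, b v v = a ↔ j = i) :
    shell b a = S i := by
  ext v
  constructor
  · intro hv
    obtain ⟨j, hj⟩ := (h.isMinimalMod_iff v).1 (hmin v hv)
    exact (hnorm j v hj).1 hv ▸ hj
  · exact fun hv => (hnorm i v hv).2 rfl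

end ClassifiesMinimal

/-- The types of the orbits `O₀, O₂, O₃, O₄`. -/
def basicTypeTwo : Fin 4 → ℕ := ![0, 2, 3, 4]

/-- The numbers of vectors in the orbits `O₀, O₂, O₃, O₄`. -/
def basicSizeTwo : Fin 4 → ℕ := ![1, 3 * 65520, 256 * 65520, 6075 * 65520]

/-- An upper bound for the number of vectors of type `basicTypeTwo i` in a coset of `2M`. -/
def cosetBoundTwo : Fin 4 → ℕ := ![1, 2, 2, 48]

/-- The types of the orbits `O₀, O₂, O₃, O₄, O₅, O_{6a}, O_{6b}, O₇, O_{8b}, O_{9b}`. -/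
def basicTypeThree : Fin 10 → ℕ := ![0, 2, 3, 4, 5, 6, 6, 7, 8, 9]

/-- The numbers of vectors in the orbits `O₀, O₂, O₃, O₄, O₅, O_{6a}, O_{6b}, O₇, O_{8b}, O_{9b}`,
in this order. -/
def basicSizeThree : Fin 10 → ℕ :=
  ![1, 3 * 65520, 256 * 65520, 6075 * 65520, 70656 * 65520, 518400 * 65520, 6900 * 65520,
    2861568 * 65520, 12295800 * 65520, 32972800 * 65520]

/-- An upper bound for the number of minimal vectors in a coset of `3M` that meets the `i`-th
basic orbit of index 3. -/
def cosetBoundThree : Fin 10 → ℕ := ![1, 1, 1, 1, 1, 1, 3, 2, 9, 36]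

namespace IsEvenRootless

section IndexTwo

variable [Module.Free ℤ M] [Module.Finite ℤ M] {S : Fin 4 → Set M}

theorem card_le_of_isMinimalMod_two (hb : IsEvenRootless b) (hrank : Module.finrank ℤ M = 24)
    {i : Fin 4} {F : Finset M} (hF : ∀ v ∈ F, b v v = 2 * (basicTypeTwo i : ℤ))
    (hcong : ∀ v ∈ F, ∀ u ∈ F, CongrMod 2 v u) : #F ≤ cosetBoundTwo i := by
  have card_le_two (hlt : basicTypeTwo i < 4) : #F ≤ 2 :=
    hb.card_le_two_of_congrMod_two (fun v hv => by have := hF v hv; omega) hcong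
  fin_cases i
  · refine card_le_one.2 fun v hv u hu => ?_
    rw [hb.eq_zero_of_norm_eq_zero (hF v hv), hb.eq_zero_of_norm_eq_zero (hF u hu)]
  · exact card_le_two (by decide)
  · exact card_le_two (by decide)
  · have := hb.card_le_two_mul_finrank_of_congrMod_two hF hcong
    rwa [hrank] at this

theorem classifiesMinimal_two (hb : IsEvenRootless b) (hrank : Module.finrank ℤ M = 24)
    (hS : ∀ i, IsOrbitOfType b (S i) (basicTypeTwo i) (basicSizeTwo i)) :
    ClassifiesMinimal b 2 S := by
  have hinj : Function.Injective basicTypeTwo := by decide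
  have hmin i : ∀ v ∈ S i, IsMinimalMod b 2 v := fun v hv => by
    have hle := (by decide : ∀ i, basicTypeTwo i ≤ 4) i
    have := (hS i).norm_eq v hv
    exact hb.isMinimalMod_two (by omega)
  refine classifiesMinimal_of_sum_div_eq two_ne_zero hS (by decide) hmin (fun hv hu h => ?_)
    (c := cosetBoundTwo) (fun i v hv F hF => ?_) ?_
  · have := (hmin _ _ hv).norm_eq (hmin _ _ hu) h
    rw [(hS _).norm_eq _ hv, (hS _).norm_eq _ hu] at this
    exact hinj (by omega)
  · refine hb.card_le_of_isMinimalMod_two hrank (fun u hu => ?_)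
      fun u hu z hz => (hF u hu).2.trans (hF z hz).2.symm
    rw [← (hS i).norm_eq v hv, (hF u hu).1.norm_eq (hmin i v hv) (hF u hu).2]
  · rw [hrank]
    norm_num [Fin.sum_univ_succ, basicSizeTwo, cosetBoundTwo]

theorem encard_shell_of_orbits_two (hb : IsEvenRootless b) (hrank : Module.finrank ℤ M = 24)
    (hS : ∀ i, IsOrbitOfType b (S i) (basicTypeTwo i) (basicSizeTwo i)) :
    (shell b 4).encard = (3 * 65520 : ℕ) ∧ (shell b 6).encard = (256 * 65520 : ℕ) := by
  have hclass := hb.classifiesMinimal_two hrank hS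
  have shell_eq (i : Fin 4) : shell b (2 * (basicTypeTwo i : ℤ)) = S i := by
    have hle := (by decide : ∀ i, basicTypeTwo i ≤ 4) i
    have hinj : Function.Injective basicTypeTwo := by decide
    refine hclass.shell_eq (fun v hv => hb.isMinimalMod_two ?_) fun j v hv => ?_
    · have : b v v = _ := hv
      omega
    · rw [(hS j).norm_eq v hv, ← hinj.eq_iff]
      omega
  exact ⟨(congrArg _ (shell_eq 1)).trans ((hS 1).encard_eq (by decide)),
    (congrArg _ (shell_eq 2)).trans ((hS 2).encard_eq (by decide))⟩

end IndexTwo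

section IndexThree

variable {S : Fin 10 → Set M}

theorem isMinimalMod_three (hb : IsEvenRootless b) (h4 : (shell b 4).encard = (3 * 65520 : ℕ))
    (h6 : (shell b 6).encard = (256 * 65520 : ℕ))
    (hS : ∀ i, IsOrbitOfType b (S i) (basicTypeThree i) (basicSizeThree i)) {i : Fin 10} {v : M}
    (hv : v ∈ S i) : IsMinimalMod b 3 v := by
  have hnorm := (hS i).norm_eq v hv
  have hcases : ∀ i, basicTypeThree i ≤ 7 ∨ i = 8 ∨ i = 9 := by decide
  obtain hle | rfl | rfl := hcases i
  · exact hb.isMinimalMod_three_of_norm_le_fourteen (by omega)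
  · by_contra hmin
    refine ((hS 8).disjoint_nonminimalShell_sixteen hb ?_).notMem_of_mem_left hv ⟨hnorm, hmin⟩
    rw [h4]
    exact_mod_cast (by decide : (3 * 65520 + 1) * (3 * 65520) < basicSizeThree 8)
  · by_contra hmin
    refine ((hS 9).disjoint_nonminimalShell_eighteen hb ?_).notMem_of_mem_left hv ⟨hnorm, hmin⟩
    rw [h4, h6]
    exact_mod_cast (by decide : 256 * 65520 * (3 * 65520) < 2 * basicSizeThree 9)

theorem eq_of_congrMod_of_mem_five (hb : IsEvenRootless b)
    (h4 : (shell b 4).encard = (3 * 65520 : ℕ))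
    (hS : ∀ i, IsOrbitOfType b (S i) (basicTypeThree i) (basicSizeThree i)) {v u : M}
    (hv : v ∈ S 5) (hu : b u u = 12) (h : CongrMod 3 u v) : u = v := by
  by_contra hne
  refine ((hS 5).disjoint_congruentShell_twelve hb ?_).notMem_of_mem_left hv
    ⟨(hS 5).norm_eq v hv, u, hu, hne, h⟩
  rw [h4]
  exact_mod_cast (by decide : 3 * 65520 * (3 * 65520) < 2 * basicSizeThree 5)

theorem eq_of_congrMod_three_of_mem (hb : IsEvenRootless b)
    (h4 : (shell b 4).encard = (3 * 65520 : ℕ)) (h6 : (shell b 6).encard = (256 * 65520 : ℕ))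
    (hS : ∀ i, IsOrbitOfType b (S i) (basicTypeThree i) (basicSizeThree i)) {i j : Fin 10}
    {v u : M} (hv : v ∈ S i) (hu : u ∈ S j) (h : CongrMod 3 v u) : i = j := by
  have htype : basicTypeThree i = basicTypeThree j := by
    have := (hb.isMinimalMod_three h4 h6 hS hv).norm_eq (hb.isMinimalMod_three h4 h6 hS hu) h
    rw [(hS i).norm_eq v hv, (hS j).norm_eq u hu] at this
    omega
  have five_ne_six {v u : M} (hv : v ∈ S 5) (hu : u ∈ S 6) (h : CongrMod 3 u v) : False := by
    obtain rfl := hb.eq_of_congrMod_of_mem_five h4 hS hv ((hS 6).norm_eq u hu) h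
    exact absurd ((hS 5).card_eq_of_mem (hS 6) hv hu) (by decide)
  have hcases : ∀ i j, basicTypeThree i = basicTypeThree j →
      i = j ∨ (i = 5 ∧ j = 6) ∨ (i = 6 ∧ j = 5) := by decide
  obtain hij | ⟨rfl, rfl⟩ | ⟨rfl, rfl⟩ := hcases i j htype
  · exact hij
  · exact (five_ne_six hv hu h.symm).elim
  · exact (five_ne_six hu hv h).elim

variable [Module.Free ℤ M] [Module.Finite ℤ M]

theorem card_le_of_isMinimalMod_three (hb : IsEvenRootless b) (hrank : Module.finrank ℤ M = 24)
    {i : Fin 10} (hi : i ≠ 5) {F : Finset M} (hF : ∀ v ∈ F, b v v = 2 * (basicTypeThree i : ℤ))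
    (hmin : ∀ v ∈ F, IsMinimalMod b 3 v) (hcong : ∀ v ∈ F, ∀ u ∈ F, CongrMod 3 v u) :
    #F ≤ cosetBoundThree i := by
  have hcases : ∀ i, i ≠ 5 →
      (basicTypeThree i < 6 ∧ cosetBoundThree i = 1) ∨ i = 6 ∨ i = 7 ∨ i = 8 ∨ i = 9 := by decide
  obtain ⟨hlt, hbound⟩ | rfl | rfl | rfl | rfl := hcases i hi
  · rw [hbound, card_le_one]
    intro v hv u hu
    have hnorm := hF v hv
    exact hb.eq_of_congrMod_three_of_norm_lt_twelve (hcong v hv u hu)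
      (hnorm.trans (hF u hu).symm) (by omega)
  · exact hb.card_le_three_of_norm_eq_twelve hF hcong
  · exact hb.card_le_two_of_norm_eq_fourteen hF hcong
  · exact hb.card_le_nine_of_norm_eq_sixteen hmin hF hcong
  · have := hb.two_mul_card_le_three_mul_finrank hF hcong
    change #F ≤ 36
    omega

theorem classifiesMinimal_three (hb : IsEvenRootless b) (hrank : Module.finrank ℤ M = 24)
    (h4 : (shell b 4).encard = (3 * 65520 : ℕ)) (h6 : (shell b 6).encard = (256 * 65520 : ℕ))
    (hS : ∀ i, IsOrbitOfType b (S i) (basicTypeThree i) (basicSizeThree i)) :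
    ClassifiesMinimal b 3 S := by
  refine classifiesMinimal_of_sum_div_eq three_ne_zero hS (by decide)
    (fun i v => hb.isMinimalMod_three h4 h6 hS) (hb.eq_of_congrMod_three_of_mem h4 h6 hS)
    (c := cosetBoundThree) (fun i v hv F hF => ?_) ?_
  · have hnorm : ∀ u ∈ F, b u u = 2 * (basicTypeThree i : ℤ) := fun u hu => by
      rw [← (hS i).norm_eq v hv,
        (hF u hu).1.norm_eq (hb.isMinimalMod_three h4 h6 hS hv) (hF u hu).2]
    obtain rfl | hi := eq_or_ne i 5
    · refine card_le_one_iff_subset_singleton.2 ⟨v, fun u hu => mem_singleton.2 ?_⟩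
      exact hb.eq_of_congrMod_of_mem_five h4 hS hv (hnorm u hu) (hF u hu).2
    · exact hb.card_le_of_isMinimalMod_three hrank hi hnorm (fun u hu => (hF u hu).1)
        fun u hu z hz => (hF u hu).2.trans (hF z hz).2.symm
  · rw [hrank]
    norm_num [Fin.sum_univ_succ, basicSizeThree, cosetBoundThree]

end IndexThree

end IsEvenRootless

end Lattice

section Leech

open MulAction (orbit)

variable {B : Matrix (Fin 24) (Fin 24) ℤ} {t : ℕ}

theorem pairZ_eq (v u : LV) : pairZ B v u = toBilin' B v u := (toBilin'_apply' B v u).symm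

theorem mem_conwayGroup_iff {σ : Matrix (Fin 24) (Fin 24) ℤ} :
    σ ∈ ConwayGroup B ↔ ∃ g ∈ isometryGroup (toBilin' B), LinearMap.toMatrix' g = σ := by
  have hisom (g : LV ≃ₗ[ℤ] LV) : g ∈ isometryGroup (toBilin' B) ↔
      (LinearMap.toMatrix' g)ᵀ * B * LinearMap.toMatrix' g = B := by
    rw [← (toBilin' (R₁ := ℤ) (n := Fin 24)).injective.eq_iff, ← Matrix.toBilin'_comp,
      toLin'_toMatrix', LinearMap.ext_iff₂]
    rfl
  constructor
  · rintro ⟨hdet, hσ⟩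
    let g : LV ≃ₗ[ℤ] LV := toLinearEquiv' σ (invertibleOfIsUnitDet σ hdet)
    have hg : LinearMap.toMatrix' (g : LV →ₗ[ℤ] LV) = σ := by
      rw [toLinearEquiv'_apply, LinearMap.toMatrix'_toLin']
    exact ⟨_, (hisom _).2 (by rw [hg, hσ]), hg⟩
  · rintro ⟨g, hg, rfl⟩
    exact ⟨by rw [LinearMap.det_toMatrix']; exact g.isUnit_det', (hisom g).1 hg⟩

theorem exists_conwayGroup_iff {p : LV → Prop} {u : LV} :
    (∃ σ ∈ ConwayGroup B, p (σ.mulVec u)) ↔ ∃ g : isometryGroup (toBilin' B), p (g • u) := by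
  simp only [mem_conwayGroup_iff]
  constructor
  · rintro ⟨-, ⟨g, hg, rfl⟩, h⟩
    exact ⟨⟨g, hg⟩, by rwa [LinearMap.toMatrix'_mulVec] at h⟩
  · rintro ⟨g, h⟩
    exact ⟨_, ⟨g, g.2, rfl⟩, by rwa [LinearMap.toMatrix'_mulVec]⟩

theorem orbitOf_eq (v : LV) : orbitOf B v = orbit (isometryGroup (toBilin' B)) v := by
  ext u
  exact exists_conwayGroup_iff.trans (exists_congr fun _ => eq_comm)

theorem mem_minimalSet_iff {v : LV} : v ∈ minimalSet B t ↔ IsMinimalMod (toBilin' B) t v := by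
  simp only [minimalSet, IsMinimalMod, congrMod_iff_exists, pairZ_eq, Set.mem_ofPred_eq]

theorem conjModT_iff {v u : LV} :
    conjModT B t v u ↔ ∃ g : isometryGroup (toBilin' B), CongrMod (t : ℤ) v (g • u) := by
  simp only [congrMod_iff_exists, ← sub_eq_iff_eq_add']
  exact exists_conwayGroup_iff (p := fun z => ∃ w, v - z = (t : ℤ) • w)

theorem orbitData_iff {O : Set LV} {x c : ℕ} :
    OrbitData B O x c ↔ IsOrbitOfType (toBilin' B) O x c := by
  simp only [OrbitData, orbitOf_eq, pairZ_eq]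
  exact ⟨fun ⟨h₁, h₂, h₃⟩ => ⟨h₁, h₂, h₃⟩, fun ⟨h₁, h₂, h₃⟩ => ⟨h₁, h₂, h₃⟩⟩

namespace ClassifiesMinimal

variable {ι : Type*} {S : ι → Set LV}

theorem minimalSet_eq (h : ClassifiesMinimal (toBilin' B) t S) : minimalSet B t = ⋃ i, S i := by
  ext v
  rw [mem_minimalSet_iff, h.isMinimalMod_iff, Set.mem_iUnion]

theorem exists_index (h : ClassifiesMinimal (toBilin' B) t S) :
    ∃ idx : minimalSet B t → ι, (∀ v, v.1 ∈ S (idx v)) ∧ Function.Surjective idx ∧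
      ∀ v u, conjModT B t v.1 u.1 ↔ idx v = idx u := by
  have hmem (v : minimalSet B t) : ∃ i, v.1 ∈ S i :=
    (h.isMinimalMod_iff _).1 (mem_minimalSet_iff.1 v.2)
  choose idx hidx using hmem
  refine ⟨idx, hidx, fun i => ?_, fun v u => ?_⟩
  · obtain ⟨v, hv⟩ := h.nonempty i
    have hvmin : v ∈ minimalSet B t := h.minimalSet_eq ▸ Set.mem_iUnion_of_mem i hv
    exact ⟨⟨v, hvmin⟩, h.eq_of_congrMod (hidx ⟨v, hvmin⟩) hv .rfl⟩
  · rw [conjModT_iff, h.exists_congrMod_smul_iff (hidx v) (hidx u)]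

theorem sRank_eq (h : ClassifiesMinimal (toBilin' B) t S) : sRank B t = Nat.card ι := by
  obtain ⟨idx, -, hsurj, hconj⟩ := h.exists_index
  refine Nat.card_eq_of_bijective (Quot.lift idx fun v u => (hconj v u).1) ⟨?_, ?_⟩
  · rintro ⟨v⟩ ⟨u⟩ hvu
    exact Quot.sound ((hconj v u).2 hvu)
  · exact fun i => (hsurj i).imp' (Quot.mk _) fun _ => id

theorem sum_eq [Fintype ι] (h : ClassifiesMinimal (toBilin' B) t S) {R : Finset LV}
    (hR : IsRepSystem B t R) {x : ι → ℤ} (hx : ∀ i, ∀ v ∈ S i, toBilin' B v v = x i) (f : ℤ → ℤ) :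
    ∑ v ∈ R, f (pairZ B v v) = ∑ i, f (x i) := by
  obtain ⟨idx, hidx, hsurj, hconj⟩ := h.exists_index
  obtain ⟨hRmin, hRrep⟩ := hR
  refine Finset.sum_bij (fun v hv => idx ⟨v, hRmin hv⟩) (fun _ _ => Finset.mem_univ _) ?_ ?_ ?_
  · intro v hv u hu hvu
    exact (hRrep v (hRmin hv)).unique ⟨hv, (hconj ⟨v, hRmin hv⟩ ⟨v, hRmin hv⟩).2 rfl⟩
      ⟨hu, (hconj ⟨v, hRmin hv⟩ ⟨u, hRmin hu⟩).2 hvu⟩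
  · intro i _
    obtain ⟨v, rfl⟩ := hsurj i
    obtain ⟨r, ⟨hr, hvr⟩, -⟩ := hRrep v v.2
    exact ⟨r, hr, ((hconj v ⟨r, hRmin hr⟩).1 hvr).symm⟩
  · intro v hv
    rw [pairZ_eq, hx _ v (hidx ⟨v, hRmin hv⟩)]

end ClassifiesMinimal

theorem IsLeech.isEvenRootless (hB : IsLeech B) : IsEvenRootless (toBilin' B) := by
  obtain ⟨hsymm, -, hpos, heven, hnorm⟩ := hB
  simp only [pairZ_eq] at hpos heven hnorm
  exact ⟨isSymm_toBilin'_iff_isSymm.2 hsymm, hpos, heven, hnorm⟩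

theorem isOrbitOfType_basic_two {O2 O3 O4 : Set LV} (h2 : OrbitData B O2 2 (3 * 65520))
    (h3 : OrbitData B O3 3 (256 * 65520)) (h4 : OrbitData B O4 4 (6075 * 65520)) (i : Fin 4) :
    IsOrbitOfType (toBilin' B) (![{0}, O2, O3, O4] i) (basicTypeTwo i) (basicSizeTwo i) := by
  simp only [orbitData_iff] at *
  fin_cases i
  exacts [isOrbitOfType_zero, h2, h3, h4]

theorem isOrbitOfType_basic_three {O2 O3 O4 O5 O6a O6b O7 O8b O9b : Set LV}
    (h2 : OrbitData B O2 2 (3 * 65520)) (h3 : OrbitData B O3 3 (256 * 65520))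
    (h4 : OrbitData B O4 4 (6075 * 65520)) (h5 : OrbitData B O5 5 (70656 * 65520))
    (h6a : OrbitData B O6a 6 (518400 * 65520)) (h6b : OrbitData B O6b 6 (6900 * 65520))
    (h7 : OrbitData B O7 7 (2861568 * 65520)) (h8b : OrbitData B O8b 8 (12295800 * 65520))
    (h9b : OrbitData B O9b 9 (32972800 * 65520)) (i : Fin 10) :
    IsOrbitOfType (toBilin' B) (![{0}, O2, O3, O4, O5, O6a, O6b, O7, O8b, O9b] i)
      (basicTypeThree i) (basicSizeThree i) := by
  simp only [orbitData_iff] at *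
  fin_cases i
  exacts [isOrbitOfType_zero, h2, h3, h4, h5, h6a, h6b, h7, h8b, h9b]

end Leech

/-- Theorem (Sun–Wang): (1) The rank of `J^{w,Co₀}_{*,Λ,2}` over `ℂ[E₄,E₆]` is `s(2) = 4`;
the basic Conway orbits of index 2 are `O₀, O₂, O₃, O₄`; and `δ₂ = 5`.
(2) The rank of `J^{w,Co₀}_{*,Λ,3}` over `ℂ[E₄,E₆]` is `s(3) = 10`; the basic Conway orbits
of index 3 are `O₀, O₂, O₃, O₄, O₅, O_{6a}, O_{6b}, O₇, O_{8b}, O_{9b}`; and `δ₃ = 19`. -/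
theorem basic_orbits_index_two_and_three
    (B : Matrix (Fin 24) (Fin 24) ℤ) (hB : IsLeech B)
    (O2 O3 O4 O5 O6a O6b O7 O8b O9b : Set LV)
    (h2 : OrbitData B O2 2 (3 * 65520)) (h3 : OrbitData B O3 3 (256 * 65520))
    (h4 : OrbitData B O4 4 (6075 * 65520)) (h5 : OrbitData B O5 5 (70656 * 65520))
    (h6a : OrbitData B O6a 6 (518400 * 65520)) (h6b : OrbitData B O6b 6 (6900 * 65520))
    (h7 : OrbitData B O7 7 (2861568 * 65520)) (h8b : OrbitData B O8b 8 (12295800 * 65520))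
    (h9b : OrbitData B O9b 9 (32972800 * 65520)) :
    (sRank B 2 = 4 ∧ minimalSet B 2 = {(0 : LV)} ∪ O2 ∪ O3 ∪ O4 ∧
      (∀ R : Finset LV, IsRepSystem B 2 R →
        ∑ v ∈ R, Int.ceil ((pairZ B v v : ℚ) / (2 * 2)) = 5)) ∧
    (sRank B 3 = 10 ∧
      minimalSet B 3 = {(0 : LV)} ∪ O2 ∪ O3 ∪ O4 ∪ O5 ∪ O6a ∪ O6b ∪ O7 ∪ O8b ∪ O9b ∧
      (∀ R : Finset LV, IsRepSystem B 3 R →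
        ∑ v ∈ R, Int.ceil ((pairZ B v v : ℚ) / (2 * 3)) = 19)) := by
  have hb := hB.isEvenRootless
  have hrank : Module.finrank ℤ LV = 24 := Module.finrank_fin_fun ℤ
  have orbits₂ := isOrbitOfType_basic_two h2 h3 h4
  have orbits₃ := isOrbitOfType_basic_three h2 h3 h4 h5 h6a h6b h7 h8b h9b
  have hclass₂ : ClassifiesMinimal (toBilin' B) (2 : ℕ) _ := hb.classifiesMinimal_two hrank orbits₂
  obtain ⟨hshell₄, hshell₆⟩ := hb.encard_shell_of_orbits_two hrank orbits₂
  have hclass₃ : ClassifiesMinimal (toBilin' B) (3 : ℕ) _ :=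
    hb.classifiesMinimal_three hrank hshell₄ hshell₆ orbits₃
  refine ⟨⟨?_, ?_, fun R hR => ?_⟩, ?_, ?_, fun R hR => ?_⟩
  · rw [hclass₂.sRank_eq, Nat.card_fin]
  · ext v
    simp [hclass₂.minimalSet_eq, Fin.exists_fin_succ, or_assoc]
  · rw [hclass₂.sum_eq hR (fun i => (orbits₂ i).norm_eq) fun a => ⌈(a : ℚ) / (2 * 2)⌉]
    norm_num [Fin.sum_univ_succ, basicTypeTwo]
  · rw [hclass₃.sRank_eq, Nat.card_fin]
  · ext v
    simp [hclass₃.minimalSet_eq, Fin.exists_fin_succ, or_assoc]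
  · rw [hclass₃.sum_eq hR (fun i => (orbits₃ i).norm_eq) fun a => ⌈(a : ℚ) / (2 * 3)⌉]
    norm_num [Fin.sum_univ_succ, basicTypeThree]

end
end

section
/- For every w ∈ Λ, the number of ordered pairs (a,b) ∈ O₂ × O₂ with a + b = w equals 196560 if w = 0; 4600 if w ∈ O₂; 552 if w ∈ O₃; 46 if w ∈ O₄; 2 if w ∈ O₅; 2 if w ∈ O_{6b}; 1 if w ∈ O_{8a}; and 0 otherwise. Likewise, the number of ordered pairs (a,b) ∈ O₂ × O₃ with a + b = w equals 47104 if w ∈ O₂; 11178 if w ∈ O₃; 2048 if w ∈ O₄; 275 if w ∈ O₅; 24 if w ∈ O_{6a}; 1 if w ∈ O₇; 1 if w ∈ O_{8c}; and 0 otherwise. -/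
open Complex Matrix UpperHalfPlane
open scoped Manifold MatrixGroups Real Topology BigOperators

noncomputable section

/-!
Two distinct vectors congruent modulo `2Λ` differ by twice a nonzero vector, so the norm of their
difference is at least `16`. Hence among the vectors of type at most `4` a class of `Λ / 2Λ`
contains only `0`, or a pair `±v` of type `2` or `3`, or pairwise orthogonal pairs of type `4`, at
most `24` of them. The orbit sizes saturate the resulting count of the `2 ^ 24` classes, so `O₂`,
`O₃`, `O₄` are all the vectors of their types and every class containing a vector of type `4`
contains an orthogonal frame of exactly `48` of them.

The number of decompositions of `w` is a number of minimal vectors `a` with prescribed `(a, w)`.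
The map `a ↦ w - 2a` turns these into short vectors of the class of `w`, whose number is known, and
`(w, a) ↦ (a - w, a)` relates the counts for different types of `w`. Two further relations, the
zeroth moment and the second moment `∑ (a, z)² = 32760 (z, z)` over the minimal vectors `a`, then
force the remaining orbits, whose sizes are given, to be cut out of their shells by the classes
modulo `2Λ`, and determine all counts.

The second moment formula holds on `O₂` by counting. Any two orthogonal vectors of a frame are
`u + v` and `u - v` with `u, v ∈ O₂`, so by the parallelogram law the defect of the formula, a
quadratic form which is constant on `O₄`, vanishes on `O₄`, and its polarization vanishes on each
frame. A frame spans `Λ ⊗ ℚ`.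
-/

/-! ### The bilinear form and its shells -/

section Form

variable {B : Matrix (Fin 24) (Fin 24) ℤ}

lemma pairZ_add_left (u v w : LV) : pairZ B (u + v) w = pairZ B u w + pairZ B v w :=
  add_dotProduct ..

lemma pairZ_add_right (u v w : LV) : pairZ B u (v + w) = pairZ B u v + pairZ B u w := by
  simp only [pairZ, mulVec_add, dotProduct_add]

lemma pairZ_neg_left (u v : LV) : pairZ B (-u) v = -pairZ B u v :=
  neg_dotProduct ..

lemma pairZ_neg_right (u v : LV) : pairZ B u (-v) = -pairZ B u v := by
  simp only [pairZ, mulVec_neg, dotProduct_neg]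

lemma pairZ_sub_left (u v w : LV) : pairZ B (u - v) w = pairZ B u w - pairZ B v w :=
  sub_dotProduct ..

lemma pairZ_sub_right (u v w : LV) : pairZ B u (v - w) = pairZ B u v - pairZ B u w := by
  simp only [pairZ, mulVec_sub, dotProduct_sub]

lemma pairZ_smul_left (c : ℤ) (u v : LV) : pairZ B (c • u) v = c * pairZ B u v :=
  smul_dotProduct ..

lemma pairZ_smul_right (c : ℤ) (u v : LV) : pairZ B u (c • v) = c * pairZ B u v := by
  simp only [pairZ, mulVec_smul, dotProduct_smul, smul_eq_mul]

lemma pairZ_zero_left (v : LV) : pairZ B 0 v = 0 :=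
  zero_dotProduct ..

lemma pairZ_zero_right (v : LV) : pairZ B v 0 = 0 := by
  simp only [pairZ, mulVec_zero, dotProduct_zero]

lemma pairZ_sum_left {ι : Type*} (s : Finset ι) (f : ι → LV) (v : LV) :
    pairZ B (∑ i ∈ s, f i) v = ∑ i ∈ s, pairZ B (f i) v :=
  sum_dotProduct ..

lemma pairZ_neg_self (v : LV) : pairZ B (-v) (-v) = pairZ B v v := by
  rw [pairZ_neg_left, pairZ_neg_right, neg_neg]

lemma pairZ_comm (hB : B.IsSymm) (u v : LV) : pairZ B u v = pairZ B v u := by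
  rw [pairZ, pairZ, dotProduct_mulVec, ← mulVec_transpose, hB.eq, dotProduct_comm]

lemma pairZ_add_self (hB : B.IsSymm) (u v : LV) :
    pairZ B (u + v) (u + v) = pairZ B u u + pairZ B v v + 2 * pairZ B u v := by
  rw [pairZ_add_left, pairZ_add_right, pairZ_add_right, pairZ_comm hB v u]
  ring

lemma pairZ_sub_self (hB : B.IsSymm) (u v : LV) :
    pairZ B (u - v) (u - v) = pairZ B u u + pairZ B v v - 2 * pairZ B u v := by
  rw [sub_eq_add_neg, pairZ_add_self hB, pairZ_neg_self, pairZ_neg_right]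
  ring

end Form

namespace IsLeech

variable {B : Matrix (Fin 24) (Fin 24) ℤ}

lemma isSymm (hB : IsLeech B) : B.IsSymm := hB.1

lemma even_pairZ_self (hB : IsLeech B) (v : LV) : Even (pairZ B v v) := hB.2.2.2.1 v

lemma pairZ_self_nonneg (hB : IsLeech B) (v : LV) : 0 ≤ pairZ B v v := by
  rcases eq_or_ne v 0 with rfl | hv
  · rw [pairZ_zero_left]
  · exact (hB.2.2.1 v hv).le

lemma pairZ_self_eq_zero (hB : IsLeech B) {v : LV} : pairZ B v v = 0 ↔ v = 0 := by
  refine ⟨fun h => ?_, fun h => h ▸ pairZ_zero_left 0⟩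
  by_contra hv
  exact (hB.2.2.1 v hv).ne' h

lemma four_le_pairZ_self (hB : IsLeech B) {v : LV} (hv : v ≠ 0) : 4 ≤ pairZ B v v := by
  have hpos := hB.2.2.1 v hv
  have hne := hB.2.2.2.2 v
  obtain ⟨k, hk⟩ := hB.even_pairZ_self v
  omega

lemma mulVec_injective (hB : IsLeech B) : Function.Injective B.mulVec := by
  apply mulVec_injective_of_isUnit
  rw [isUnit_iff_isUnit_det, hB.2.1]
  exact isUnit_one

lemma two_mul_abs_pairZ_le (hB : IsLeech B) (u v : LV) :
    2 * |pairZ B u v| ≤ pairZ B u u + pairZ B v v := by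
  have hadd := hB.pairZ_self_nonneg (u + v)
  have hsub := hB.pairZ_self_nonneg (u - v)
  rw [pairZ_add_self hB.isSymm] at hadd
  rw [pairZ_sub_self hB.isSymm] at hsub
  rcases abs_cases (pairZ B u v) with h | h <;> omega

lemma finite_setOf_pairZ_self_eq (hB : IsLeech B) (m : ℤ) :
    {v : LV | pairZ B v v = m}.Finite := by
  let bound : LV := fun i => pairZ B (Pi.single i 1) (Pi.single i 1) + m
  refine .of_finite_image (f := B.mulVec) ?_ hB.mulVec_injective.injOn
  refine (Set.finite_Icc (-bound) bound).subset ?_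
  rintro _ ⟨v, rfl : pairZ B v v = m, rfl⟩
  have hbound (i : Fin 24) : |B.mulVec v i| ≤ bound i := by
    have hcoord : B.mulVec v i = pairZ B (Pi.single i 1) v := (single_one_dotProduct ..).symm
    have := hB.two_mul_abs_pairZ_le (Pi.single i 1) v
    have := abs_nonneg (pairZ B (Pi.single i 1) v)
    simp only [hcoord, bound]
    omega
  exact ⟨fun i => (abs_le.mp (hbound i)).1, fun i => (abs_le.mp (hbound i)).2⟩

/-- The set of lattice vectors of type `k`, that is, of norm `2 * k`. The type is an integer so
that expressions such as `8 - x` need no side conditions; shells of negative type are empty. -/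
def shell (hB : IsLeech B) (k : ℤ) : Finset LV :=
  (hB.finite_setOf_pairZ_self_eq (2 * k)).toFinset

lemma mem_shell (hB : IsLeech B) {k : ℤ} {v : LV} : v ∈ hB.shell k ↔ pairZ B v v = 2 * k := by
  simp [shell]

lemma neg_mem_shell (hB : IsLeech B) {k : ℤ} {v : LV} : -v ∈ hB.shell k ↔ v ∈ hB.shell k := by
  rw [mem_shell, mem_shell, pairZ_neg_self]

lemma exists_mem_shell (hB : IsLeech B) (v : LV) : ∃ x, v ∈ hB.shell x := by
  obtain ⟨x, hx⟩ := hB.even_pairZ_self v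
  exact ⟨x, hB.mem_shell.mpr (by omega)⟩

lemma type_unique (hB : IsLeech B) {x y : ℤ} {v : LV} (hx : v ∈ hB.shell x)
    (hy : v ∈ hB.shell y) : x = y := by
  rw [mem_shell] at hx hy
  omega

lemma mem_shell_zero (hB : IsLeech B) {v : LV} : v ∈ hB.shell 0 ↔ v = 0 := by
  rw [mem_shell, mul_zero, hB.pairZ_self_eq_zero]

lemma ne_zero_of_mem_shell (hB : IsLeech B) {k : ℤ} (hk : k ≠ 0) {v : LV}
    (hv : v ∈ hB.shell k) : v ≠ 0 :=
  fun h => hk (hB.type_unique hv (hB.mem_shell_zero.mpr h))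

lemma type_eq_zero_or_two_le (hB : IsLeech B) {k : ℤ} {v : LV} (hv : v ∈ hB.shell k) :
    k = 0 ∨ 2 ≤ k := by
  rw [mem_shell] at hv
  rcases eq_or_ne v 0 with rfl | hv0
  · rw [pairZ_zero_left] at hv
    omega
  · have := hB.four_le_pairZ_self hv0
    omega

end IsLeech

/-! ### Conway orbits -/

namespace ConwayGroup

variable {B σ τ : Matrix (Fin 24) (Fin 24) ℤ}

lemma pairZ_mulVec (hσ : σ ∈ ConwayGroup B) (u v : LV) :
    pairZ B (σ.mulVec u) (σ.mulVec v) = pairZ B u v := by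
  calc pairZ B (σ.mulVec u) (σ.mulVec v) = u ⬝ᵥ (σᵀ * B * σ).mulVec v := by
        rw [pairZ, ← mulVec_mulVec, ← mulVec_mulVec, dotProduct_mulVec u, vecMul_transpose]
    _ = pairZ B u v := by rw [hσ.2, pairZ]

lemma inv_mem (hσ : σ ∈ ConwayGroup B) : σ⁻¹ ∈ ConwayGroup B := by
  obtain ⟨hdet, hform⟩ := hσ
  have hright : σ * σ⁻¹ = 1 := mul_nonsing_inv σ hdet
  have hleft : σ⁻¹ᵀ * σᵀ = 1 := by rw [← transpose_mul, hright, transpose_one]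
  refine ⟨isUnit_nonsing_inv_det σ hdet, ?_⟩
  calc σ⁻¹ᵀ * B * σ⁻¹ = σ⁻¹ᵀ * (σᵀ * B * σ) * σ⁻¹ := by rw [hform]
    _ = (σ⁻¹ᵀ * σᵀ) * B * (σ * σ⁻¹) := by simp only [Matrix.mul_assoc]
    _ = B := by rw [hleft, hright, Matrix.one_mul, Matrix.mul_one]

lemma mul_mem (hσ : σ ∈ ConwayGroup B) (hτ : τ ∈ ConwayGroup B) : σ * τ ∈ ConwayGroup B := by
  refine ⟨det_mul σ τ ▸ hσ.1.mul hτ.1, ?_⟩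
  calc (σ * τ)ᵀ * B * (σ * τ) = τᵀ * (σᵀ * B * σ) * τ := by
        rw [transpose_mul]
        simp only [Matrix.mul_assoc]
    _ = B := by rw [hσ.2, hτ.2]

lemma inv_mulVec_mulVec (hσ : σ ∈ ConwayGroup B) (v : LV) : σ⁻¹.mulVec (σ.mulVec v) = v := by
  rw [mulVec_mulVec, nonsing_inv_mul σ hσ.1, one_mulVec]

lemma mulVec_inv_mulVec (hσ : σ ∈ ConwayGroup B) (v : LV) : σ.mulVec (σ⁻¹.mulVec v) = v := by
  rw [mulVec_mulVec, mul_nonsing_inv σ hσ.1, one_mulVec]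

lemma mulVec_mem_shell (hB : IsLeech B) (hσ : σ ∈ ConwayGroup B) {x : ℤ} {v : LV} :
    σ.mulVec v ∈ hB.shell x ↔ v ∈ hB.shell x := by
  rw [hB.mem_shell, hB.mem_shell, pairZ_mulVec hσ]

end ConwayGroup

namespace OrbitData

variable {B : Matrix (Fin 24) (Fin 24) ℤ} {x n : ℕ}

lemma finite {O : Set LV} (hO : OrbitData B O x n) (hB : IsLeech B) : O.Finite :=
  (hB.finite_setOf_pairZ_self_eq _).subset hO.2.1

variable {T : Finset LV}

lemma card_eq (hT : OrbitData B T x n) : T.card = n := by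
  simpa using hT.2.2

lemma subset_shell (hT : OrbitData B T x n) (hB : IsLeech B) : T ⊆ hB.shell x :=
  fun v hv => hB.mem_shell.mpr (hT.2.1 v hv)

lemma nonempty (hT : OrbitData B T x n) : T.Nonempty := by
  obtain ⟨⟨v, hv⟩, -⟩ := hT
  have hone : (1 : Matrix (Fin 24) (Fin 24) ℤ) ∈ ConwayGroup B :=
    ⟨by simp, by simp⟩
  exact ⟨v, Finset.mem_coe.mp (hv ▸ ⟨1, hone, (one_mulVec v).symm⟩)⟩

lemma exists_mulVec_eq (hT : OrbitData B T x n) {u v : LV} (hu : u ∈ T) (hv : v ∈ T) :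
    ∃ σ ∈ ConwayGroup B, σ.mulVec u = v := by
  obtain ⟨⟨t, ht⟩, -⟩ := hT
  rw [← Finset.mem_coe, ht] at hu hv
  obtain ⟨σ, hσ, rfl⟩ := hu
  obtain ⟨τ, hτ, rfl⟩ := hv
  refine ⟨τ * σ⁻¹, ConwayGroup.mul_mem hτ (ConwayGroup.inv_mem hσ), ?_⟩
  rw [← mulVec_mulVec, ConwayGroup.inv_mulVec_mulVec hσ]

lemma mulVec_mem (hT : OrbitData B T x n) {σ : Matrix (Fin 24) (Fin 24) ℤ}
    (hσ : σ ∈ ConwayGroup B) {u : LV} (hu : u ∈ T) : σ.mulVec u ∈ T := by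
  obtain ⟨⟨t, ht⟩, -⟩ := hT
  rw [← Finset.mem_coe, ht] at hu ⊢
  obtain ⟨τ, hτ, rfl⟩ := hu
  exact ⟨σ * τ, ConwayGroup.mul_mem hσ hτ, mulVec_mulVec ..⟩

lemma sum_eq_mul {f : LV → ℕ} (hT : OrbitData B T x n)
    (hf : ∀ σ ∈ ConwayGroup B, ∀ v, f (σ.mulVec v) = f v) {w : LV} (hw : w ∈ T) :
    ∑ v ∈ T, f v = n * f w := by
  have hconst : ∀ v ∈ T, f v = f w := by
    intro v hv
    obtain ⟨σ, hσ, rfl⟩ := hT.exists_mulVec_eq hw hv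
    exact hf σ hσ w
  rw [Finset.sum_congr rfl hconst, Finset.sum_const, hT.card_eq, smul_eq_mul]

end OrbitData

/-! ### Vectors congruent modulo `2Λ` -/

/-- The class of a lattice vector `v` in `Λ / 2Λ`, in coordinates. -/
def mod2 (v : LV) : Fin 24 → ZMod 2 := fun i => v i

lemma mod2_eq_mod2_iff {u v : LV} : mod2 u = mod2 v ↔ ∃ a : LV, u = v + (2 : ℤ) • a := by
  constructor
  · intro h
    have hdvd (i : Fin 24) : (2 : ℤ) ∣ u i - v i :=
      (ZMod.intCast_eq_intCast_iff_dvd_sub _ _ 2).mp (congrFun h i).symm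
    choose a ha using hdvd
    refine ⟨a, funext fun i => ?_⟩
    simp only [Pi.add_apply, Pi.smul_apply, smul_eq_mul, ← ha]
    ring
  · rintro ⟨a, rfl⟩
    funext i
    have htwo : (2 : ZMod 2) = 0 := rfl
    simp [mod2, htwo]

lemma mod2_neg (v : LV) : mod2 (-v) = mod2 v :=
  mod2_eq_mod2_iff.mpr ⟨-v, by module⟩

lemma mod2_mulVec {u v : LV} (σ : Matrix (Fin 24) (Fin 24) ℤ) (h : mod2 u = mod2 v) :
    mod2 (σ.mulVec u) = mod2 (σ.mulVec v) := by
  obtain ⟨a, rfl⟩ := mod2_eq_mod2_iff.mp h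
  exact mod2_eq_mod2_iff.mpr ⟨σ.mulVec a, by rw [mulVec_add, mulVec_smul]⟩

namespace IsLeech

variable {B : Matrix (Fin 24) (Fin 24) ℤ} {u v : LV}

lemma two_mul_pairZ_add_le_of_mod2_eq (hB : IsLeech B) (h : mod2 u = mod2 v) (hne : u ≠ v) :
    2 * pairZ B u v + 16 ≤ pairZ B u u + pairZ B v v := by
  obtain ⟨a, rfl⟩ := mod2_eq_mod2_iff.mp h
  have ha : a ≠ 0 := by
    rintro rfl
    simp at hne
  have hnorm := pairZ_sub_self hB.isSymm (v + (2 : ℤ) • a) v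
  rw [add_sub_cancel_left, pairZ_smul_left, pairZ_smul_right] at hnorm
  linarith [hB.four_le_pairZ_self ha]

lemma two_mul_abs_pairZ_add_le_of_mod2_eq (hB : IsLeech B) (h : mod2 u = mod2 v) (hne : u ≠ v)
    (hneg : u ≠ -v) : 2 * |pairZ B u v| + 16 ≤ pairZ B u u + pairZ B v v := by
  have hpos := hB.two_mul_pairZ_add_le_of_mod2_eq h hne
  have hminus := hB.two_mul_pairZ_add_le_of_mod2_eq (h.trans (mod2_neg v).symm) hneg
  rw [pairZ_neg_self, pairZ_neg_right] at hminus
  rcases abs_cases (pairZ B u v) with hcase | hcase <;> omega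

lemma eq_or_eq_neg_of_mod2_eq (hB : IsLeech B) (h : mod2 u = mod2 v)
    (hshort : pairZ B u u + pairZ B v v < 16) : u = v ∨ u = -v := by
  by_contra! hne
  have := hB.two_mul_abs_pairZ_add_le_of_mod2_eq h hne.1 hne.2
  have := abs_nonneg (pairZ B u v)
  omega

lemma even_pairZ_of_mod2_eq (hB : IsLeech B) (h : mod2 u = mod2 v) : Even (pairZ B u v) := by
  obtain ⟨a, rfl⟩ := mod2_eq_mod2_iff.mp h
  rw [pairZ_add_left, pairZ_smul_left]
  exact (hB.even_pairZ_self v).add (even_two_mul _)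

lemma eight_dvd_of_mod2_eq (hB : IsLeech B) (h : mod2 u = mod2 v) :
    8 ∣ pairZ B u u + pairZ B v v + 2 * pairZ B u v := by
  obtain ⟨a, rfl⟩ := mod2_eq_mod2_iff.mp h
  obtain ⟨k, hk⟩ := hB.even_pairZ_self (v + a)
  rw [← pairZ_add_self hB.isSymm,
    show v + (2 : ℤ) • a + v = (2 : ℤ) • (v + a) by module, pairZ_smul_left, pairZ_smul_right, hk]
  exact ⟨k, by ring⟩

end IsLeech

section Frame

variable {B : Matrix (Fin 24) (Fin 24) ℤ} {s : Finset LV}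

lemma linearIndependent_of_pairwise_pairZ_eq_zero (hs : ∀ v ∈ s, pairZ B v v ≠ 0)
    (horth : ∀ u ∈ s, ∀ v ∈ s, u ≠ v → pairZ B u v = 0) :
    LinearIndependent ℤ (fun v : s => (v : LV)) := by
  rw [linearIndependent_iff']
  intro t g hg v hv
  have hpair : pairZ B (∑ u ∈ t, g u • (u : LV)) v = 0 := by rw [hg, pairZ_zero_left]
  rw [pairZ_sum_left, Finset.sum_eq_single_of_mem v hv, pairZ_smul_left] at hpair
  · exact (mul_eq_zero.mp hpair).resolve_right (hs v v.2)
  · intro u _ huv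
    rw [pairZ_smul_left, horth u u.2 v v.2 (Subtype.coe_ne_coe.mpr huv), mul_zero]

lemma card_le_of_pairwise_eq_or_eq_neg_or_pairZ_eq_zero (hs : ∀ v ∈ s, pairZ B v v ≠ 0)
    (horth : ∀ u ∈ s, ∀ v ∈ s, u = v ∨ u = -v ∨ pairZ B u v = 0) : s.card ≤ 2 * 24 := by
  let line (v : LV) : Sym2 LV := s(v, -v)
  have hline {u v : LV} : line u = line v ↔ u = v ∨ u = -v := by
    simp only [line, Sym2.eq_iff, neg_eq_iff_eq_neg, neg_neg, and_self]
  obtain ⟨t, hts, hinj, himage⟩ :=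
    Finset.exists_subset_injOn_image_eq_of_surjOn (f := line) s (s.image line)
      (Finset.coe_image (f := line) ▸ Set.surjOn_image line s)
  have hfibre : s.card ≤ 2 * (s.image line).card := by
    refine Finset.card_le_mul_card_image s 2 fun b hb => ?_
    obtain ⟨v, -, rfl⟩ := Finset.mem_image.mp hb
    refine (Finset.card_le_card fun u hu => ?_).trans (Finset.card_le_two (a := v) (b := -v))
    simpa [hline] using (Finset.mem_filter.mp hu).2
  have hindep : LinearIndependent ℤ (fun v : t => (v : LV)) := by
    refine linearIndependent_of_pairwise_pairZ_eq_zero (fun v hv => hs v (hts hv)) ?_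
    intro u hu v hv huv
    have hlines : line u ≠ line v := fun h => huv (hinj hu hv h)
    rw [Ne, hline, not_or] at hlines
    exact ((horth u (hts hu) v (hts hv)).resolve_left hlines.1).resolve_left hlines.2
  have ht : t.card ≤ 24 := by simpa using hindep.finset_card_le_finrank
  rw [← himage, Finset.card_image_of_injOn hinj] at hfibre
  omega

end Frame

namespace IsLeech

variable {B : Matrix (Fin 24) (Fin 24) ℤ} {u v w : LV} {x y : ℤ}

/-- The vectors of type `y` in the coset `w + 2Λ`. -/
def cosetShell (hB : IsLeech B) (w : LV) (y : ℤ) : Finset LV :=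
  {u ∈ hB.shell y | mod2 u = mod2 w}

/-- The vectors of type `x` that are congruent modulo `2Λ` to some vector of type `y`. With the
ATLAS notation, `O_{6a}`, `O_{6b}`, `O_{8a}` and `O_{8c}` will turn out to be `shellMod 6 4`,
`shellMod 6 2`, `shellMod 8 0` and `shellMod 8 2`. -/
def shellMod (hB : IsLeech B) (x y : ℤ) : Finset LV :=
  {w ∈ hB.shell x | (hB.cosetShell w y).Nonempty}

lemma mem_cosetShell (hB : IsLeech B) :
    u ∈ hB.cosetShell w y ↔ u ∈ hB.shell y ∧ mod2 u = mod2 w :=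
  Finset.mem_filter

lemma mem_shellMod (hB : IsLeech B) :
    w ∈ hB.shellMod x y ↔ w ∈ hB.shell x ∧ (hB.cosetShell w y).Nonempty :=
  Finset.mem_filter

lemma shellMod_subset_shell (hB : IsLeech B) : hB.shellMod x y ⊆ hB.shell x :=
  Finset.filter_subset _ _

lemma neg_mem_cosetShell (hB : IsLeech B) :
    -u ∈ hB.cosetShell w y ↔ u ∈ hB.cosetShell w y := by
  rw [mem_cosetShell, mem_cosetShell, neg_mem_shell, mod2_neg]

lemma mulVec_mem_shellMod (hB : IsLeech B) {σ : Matrix (Fin 24) (Fin 24) ℤ}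
    (hσ : σ ∈ ConwayGroup B) (hw : w ∈ hB.shellMod x y) : σ.mulVec w ∈ hB.shellMod x y := by
  obtain ⟨hwx, u, hu⟩ := hB.mem_shellMod.mp hw
  obtain ⟨huy, huw⟩ := hB.mem_cosetShell.mp hu
  refine hB.mem_shellMod.mpr ⟨(ConwayGroup.mulVec_mem_shell hB hσ).mpr hwx, σ.mulVec u, ?_⟩
  exact hB.mem_cosetShell.mpr ⟨(ConwayGroup.mulVec_mem_shell hB hσ).mpr huy, mod2_mulVec σ huw⟩

lemma type_eq_of_mod2_eq (hB : IsLeech B) (hu : u ∈ hB.shell x) (hv : v ∈ hB.shell y)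
    (h : mod2 u = mod2 v) (hxy : x + y < 8) : x = y := by
  have hshort : pairZ B u u + pairZ B v v < 16 := by
    rw [hB.mem_shell.mp hu, hB.mem_shell.mp hv]
    omega
  rcases hB.eq_or_eq_neg_of_mod2_eq h hshort with rfl | rfl
  · exact hB.type_unique hu hv
  · exact hB.type_unique (hB.neg_mem_shell.mp hu) hv

lemma even_sub_of_mem_shellMod (hB : IsLeech B) (hw : w ∈ hB.shellMod x y) : Even (x - y) := by
  obtain ⟨hwx, u, hu⟩ := hB.mem_shellMod.mp hw
  obtain ⟨huy, huw⟩ := hB.mem_cosetShell.mp hu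
  obtain ⟨k, hk⟩ := hB.even_pairZ_of_mod2_eq huw
  obtain ⟨l, hl⟩ := hB.eight_dvd_of_mod2_eq huw
  rw [mem_shell] at hwx huy
  exact ⟨2 * l - k - y, by omega⟩

lemma mem_shellMod_zero (hB : IsLeech B) :
    w ∈ hB.shellMod (4 * x) 0 ↔ ∃ v ∈ hB.shell x, w = (2 : ℤ) • v := by
  constructor
  · intro hw
    obtain ⟨hwx, u, hu⟩ := hB.mem_shellMod.mp hw
    obtain ⟨hu0, huw⟩ := hB.mem_cosetShell.mp hu
    obtain ⟨v, rfl⟩ := mod2_eq_mod2_iff.mp huw.symm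
    rw [hB.mem_shell_zero.mp hu0, zero_add] at hwx ⊢
    rw [mem_shell, pairZ_smul_left, pairZ_smul_right] at hwx
    exact ⟨v, hB.mem_shell.mpr (by omega), rfl⟩
  · rintro ⟨v, hv, rfl⟩
    rw [mem_shell] at hv
    refine hB.mem_shellMod.mpr ⟨?_, 0, ?_⟩
    · rw [mem_shell, pairZ_smul_left, pairZ_smul_right, hv]
      ring
    · exact hB.mem_cosetShell.mpr
        ⟨hB.mem_shell_zero.mpr rfl, mod2_eq_mod2_iff.mpr ⟨-v, by module⟩⟩

lemma four_dvd_of_mem_shellMod_zero (hB : IsLeech B) (hw : w ∈ hB.shellMod x 0) : 4 ∣ x := by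
  obtain ⟨hwx, u, hu⟩ := hB.mem_shellMod.mp hw
  obtain ⟨hu0, huw⟩ := hB.mem_cosetShell.mp hu
  have hdvd := hB.eight_dvd_of_mod2_eq huw
  rw [hB.mem_shell_zero.mp hu0, pairZ_zero_left, pairZ_zero_left, hB.mem_shell.mp hwx] at hdvd
  omega

lemma cosetShell_eq_empty (hB : IsLeech B) (hw : w ∈ hB.shell x) (h : w ∉ hB.shellMod x y) :
    hB.cosetShell w y = ∅ :=
  Finset.not_nonempty_iff_eq_empty.mp fun hne => h (hB.mem_shellMod.mpr ⟨hw, hne⟩)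

lemma cosetShell_eq_empty_of_type (hB : IsLeech B) (hy0 : y ≠ 0) (hy2 : y < 2) :
    hB.cosetShell w y = ∅ := by
  refine Finset.eq_empty_of_forall_notMem fun u hu => ?_
  have := hB.type_eq_zero_or_two_le (hB.mem_cosetShell.mp hu).1
  omega

lemma card_cosetShell_zero (hB : IsLeech B) (hw : w ∈ hB.shellMod x 0) :
    (hB.cosetShell w 0).card = 1 := by
  obtain ⟨-, u, hu⟩ := hB.mem_shellMod.mp hw
  refine Finset.card_eq_one.mpr ⟨u, Finset.eq_singleton_iff_unique_mem.mpr ⟨hu, fun v hv => ?_⟩⟩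
  rw [mem_cosetShell, mem_shell_zero] at hu hv
  rw [hu.1, hv.1]

lemma cosetShell_eq_pair (hB : IsLeech B) (hy : y < 4) (hu : u ∈ hB.cosetShell w y) :
    hB.cosetShell w y = {u, -u} := by
  ext v
  rw [Finset.mem_insert, Finset.mem_singleton]
  constructor
  · intro hv
    rw [mem_cosetShell] at hu hv
    refine hB.eq_or_eq_neg_of_mod2_eq (hv.2.trans hu.2.symm) ?_
    rw [hB.mem_shell.mp hu.1, hB.mem_shell.mp hv.1]
    omega
  · rintro (rfl | rfl)
    exacts [hu, hB.neg_mem_cosetShell.mpr hu]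

lemma card_cosetShell_eq_two (hB : IsLeech B) (hy0 : 0 < y) (hy4 : y < 4)
    (hw : w ∈ hB.shellMod x y) : (hB.cosetShell w y).card = 2 := by
  obtain ⟨-, u, hu⟩ := hB.mem_shellMod.mp hw
  have hu0 := hB.ne_zero_of_mem_shell hy0.ne' (hB.mem_cosetShell.mp hu).1
  rw [hB.cosetShell_eq_pair hy4 hu, Finset.card_pair (self_ne_neg.mpr hu0)]

lemma eq_or_eq_neg_or_pairZ_eq_zero_of_mod2_eq (hB : IsLeech B) (hu : u ∈ hB.shell 4)
    (hv : v ∈ hB.shell 4) (h : mod2 u = mod2 v) : u = v ∨ u = -v ∨ pairZ B u v = 0 := by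
  by_contra! hne
  have hle := hB.two_mul_abs_pairZ_add_le_of_mod2_eq h hne.1 hne.2.1
  rw [hB.mem_shell.mp hu, hB.mem_shell.mp hv] at hle
  have := abs_pos.mpr hne.2.2
  omega

lemma card_cosetShell_four_le (hB : IsLeech B) (w : LV) : (hB.cosetShell w 4).card ≤ 48 := by
  refine card_le_of_pairwise_eq_or_eq_neg_or_pairZ_eq_zero (B := B) (fun v hv => ?_) ?_
  · rw [hB.mem_shell.mp (hB.mem_cosetShell.mp hv).1]
    norm_num
  · intro u hu v hv
    rw [mem_cosetShell] at hu hv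
    exact hB.eq_or_eq_neg_or_pairZ_eq_zero_of_mod2_eq hu.1 hv.1 (hu.2.trans hv.2.symm)

end IsLeech

/-! ### Types 2, 3 and 4 -/

namespace IsLeech

variable {B : Matrix (Fin 24) (Fin 24) ℤ} {w : LV} {y : ℤ}

/-- The classes of `Λ / 2Λ` that contain a vector of type `y`. -/
def classes (hB : IsLeech B) (y : ℤ) : Finset (Fin 24 → ZMod 2) :=
  (hB.shell y).image mod2

lemma mod2_mem_classes (hB : IsLeech B) :
    mod2 w ∈ hB.classes y ↔ (hB.cosetShell w y).Nonempty := by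
  simp only [classes, Finset.mem_image, Finset.Nonempty, mem_cosetShell]

lemma pairwiseDisjoint_classes (hB : IsLeech B) :
    (({0, 2, 3, 4} : Finset ℤ) : Set ℤ).PairwiseDisjoint hB.classes := by
  intro x hx y hy hxy
  refine Finset.disjoint_left.mpr fun c hcx hcy => hxy ?_
  obtain ⟨u, hu, rfl⟩ := Finset.mem_image.mp hcx
  obtain ⟨v, hv, hvu⟩ := Finset.mem_image.mp hcy
  have hle {z : ℤ} (hz : z ∈ (({0, 2, 3, 4} : Finset ℤ) : Set ℤ)) : z ≤ 4 := by
    simp only [Finset.coe_insert, Finset.coe_singleton, Set.mem_insert_iff,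
      Set.mem_singleton_iff] at hz
    omega
  by_contra hne
  have := hle hx
  have := hle hy
  exact hne (hB.type_eq_of_mod2_eq hu hv hvu.symm (by omega))

lemma card_biUnion_classes (hB : IsLeech B) :
    (({0, 2, 3, 4} : Finset ℤ).biUnion hB.classes).card =
      1 + (hB.classes 2).card + (hB.classes 3).card + (hB.classes 4).card := by
  have hzero : hB.shell 0 = {0} := by
    ext v
    rw [mem_shell_zero, Finset.mem_singleton]
  have hone : (hB.classes 0).card = 1 := by
    rw [classes, hzero, Finset.image_singleton, Finset.card_singleton]
  rw [Finset.card_biUnion hB.pairwiseDisjoint_classes]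
  simp [hone, add_assoc]

lemma card_classes_add_le (hB : IsLeech B) :
    1 + (hB.classes 2).card + (hB.classes 3).card + (hB.classes 4).card ≤ 2 ^ 24 := by
  rw [← card_biUnion_classes]
  exact (Finset.card_le_univ _).trans_eq (by simp)

lemma card_shell_le_mul_card_classes (hB : IsLeech B) {n : ℕ}
    (hn : ∀ w, (hB.cosetShell w y).card ≤ n) : (hB.shell y).card ≤ n * (hB.classes y).card := by
  refine Finset.card_le_mul_card_image _ n fun c hc => ?_
  obtain ⟨w, -, rfl⟩ := Finset.mem_image.mp hc
  exact hn w

lemma card_shell_le_two_mul_card_classes (hB : IsLeech B) (hy : y < 4) :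
    (hB.shell y).card ≤ 2 * (hB.classes y).card := by
  refine hB.card_shell_le_mul_card_classes fun w => ?_
  rcases (hB.cosetShell w y).eq_empty_or_nonempty with hw | ⟨u, hu⟩
  · simp [hw]
  · rw [hB.cosetShell_eq_pair hy hu]
    exact Finset.card_le_two

lemma card_shell_four_le_mul_card_classes (hB : IsLeech B) :
    (hB.shell 4).card ≤ 48 * (hB.classes 4).card :=
  hB.card_shell_le_mul_card_classes hB.card_cosetShell_four_le

-- As `2 ^ 24 = 1 + 3p / 2 + 256p / 2 + 6075p / 48` for `p = 65520`, the three orbits already meet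
-- every class outside `2Λ`, which leaves no room for further vectors of these types.
lemma orbits_eq_shells (hB : IsLeech B) {O2 O3 O4 : Finset LV}
    (h2 : OrbitData B O2 2 (3 * 65520)) (h3 : OrbitData B O3 3 (256 * 65520))
    (h4 : OrbitData B O4 4 (6075 * 65520)) :
    O2 = hB.shell 2 ∧ O3 = hB.shell 3 ∧ O4 = hB.shell 4 := by
  have hsub2 : O2 ⊆ hB.shell 2 := h2.subset_shell hB
  have hsub3 : O3 ⊆ hB.shell 3 := h3.subset_shell hB
  have hsub4 : O4 ⊆ hB.shell 4 := h4.subset_shell hB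
  have hle2 := Finset.card_le_card hsub2
  have hle3 := Finset.card_le_card hsub3
  have hle4 := Finset.card_le_card hsub4
  have hclasses := hB.card_classes_add_le
  have hub2 := hB.card_shell_le_two_mul_card_classes (y := 2) (by norm_num)
  have hub3 := hB.card_shell_le_two_mul_card_classes (y := 3) (by norm_num)
  have hub4 := hB.card_shell_four_le_mul_card_classes
  rw [h2.card_eq] at hle2
  rw [h3.card_eq] at hle3
  rw [h4.card_eq] at hle4
  refine ⟨Finset.eq_of_subset_of_card_le hsub2 ?_, Finset.eq_of_subset_of_card_le hsub3 ?_,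
    Finset.eq_of_subset_of_card_le hsub4 ?_⟩
  · rw [h2.card_eq]
    omega
  · rw [h3.card_eq]
    omega
  · rw [h4.card_eq]
    omega

end IsLeech

/-- The vectors of types `2`, `3` and `4` each form a single Conway orbit, of the size given in
the ATLAS. -/
structure ShortShellOrbits {B : Matrix (Fin 24) (Fin 24) ℤ} (hB : IsLeech B) : Prop where
  two : OrbitData B (hB.shell 2) 2 (3 * 65520)
  three : OrbitData B (hB.shell 3) 3 (256 * 65520)
  four : OrbitData B (hB.shell 4) 4 (6075 * 65520)

namespace ShortShellOrbits

variable {B : Matrix (Fin 24) (Fin 24) ℤ} {hB : IsLeech B} {w : LV} {x : ℤ}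

lemma card_classes (H : ShortShellOrbits hB) :
    (hB.classes 4).card = 8292375 ∧
      1 + (hB.classes 2).card + (hB.classes 3).card + (hB.classes 4).card = 2 ^ 24 := by
  have hclasses := hB.card_classes_add_le
  have hub2 := hB.card_shell_le_two_mul_card_classes (y := 2) (by norm_num)
  have hub3 := hB.card_shell_le_two_mul_card_classes (y := 3) (by norm_num)
  have hub4 := hB.card_shell_four_le_mul_card_classes
  rw [H.two.card_eq] at hub2
  rw [H.three.card_eq] at hub3
  rw [H.four.card_eq] at hub4
  omega

lemma exists_mem_shellMod (H : ShortShellOrbits hB) (hw : w ∈ hB.shell x) :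
    w ∈ hB.shellMod x 0 ∨ w ∈ hB.shellMod x 2 ∨ w ∈ hB.shellMod x 3 ∨ w ∈ hB.shellMod x 4 := by
  have hcover : ({0, 2, 3, 4} : Finset ℤ).biUnion hB.classes = Finset.univ := by
    refine Finset.eq_univ_of_card _ ?_
    rw [hB.card_biUnion_classes, H.card_classes.2]
    simp
  have hmem := hcover ▸ Finset.mem_univ (mod2 w)
  simpa [hB.mod2_mem_classes, hB.mem_shellMod, hw] using hmem

lemma mem_shellMod_of_odd (H : ShortShellOrbits hB) (hx : Odd x) (hw : w ∈ hB.shell x) :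
    w ∈ hB.shellMod x 3 := by
  have hodd {y : ℤ} (hy : Even y) : w ∉ hB.shellMod x y := fun h =>
    Int.not_even_iff_odd.mpr (hx.sub_even hy) (hB.even_sub_of_mem_shellMod h)
  simpa [hodd, show Even (2 : ℤ) by decide, show Even (4 : ℤ) by decide] using
    H.exists_mem_shellMod hw

lemma mem_shellMod_of_even (H : ShortShellOrbits hB) (hx : Even x) (hw : w ∈ hB.shell x) :
    w ∈ hB.shellMod x 0 ∨ w ∈ hB.shellMod x 2 ∨ w ∈ hB.shellMod x 4 := by
  have hthree : w ∉ hB.shellMod x 3 := fun h =>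
    Int.not_even_iff_odd.mpr (hx.sub_odd (by decide)) (hB.even_sub_of_mem_shellMod h)
  simpa [hthree] using H.exists_mem_shellMod hw

lemma card_cosetShell_four (H : ShortShellOrbits hB) (hw : w ∈ hB.shellMod x 4) :
    (hB.cosetShell w 4).card = 48 := by
  have hle : ∀ c ∈ hB.classes 4, (Finset.card {u ∈ hB.shell 4 | mod2 u = c}) ≤ 48 := by
    intro c hc
    obtain ⟨v, -, rfl⟩ := Finset.mem_image.mp hc
    exact hB.card_cosetShell_four_le v
  have hsum : ∑ c ∈ hB.classes 4, Finset.card {u ∈ hB.shell 4 | mod2 u = c} =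
      ∑ _c ∈ hB.classes 4, 48 := by
    rw [IsLeech.classes, ← Finset.card_eq_sum_card_image, ← IsLeech.classes, Finset.sum_const,
      H.four.card_eq, H.card_classes.1]
    norm_num
  exact (Finset.sum_eq_sum_iff_of_le hle).mp hsum _
    (hB.mod2_mem_classes.mpr (hB.mem_shellMod.mp hw).2)

end ShortShellOrbits

/-! ### Minimal vectors with prescribed inner product -/

namespace IsLeech

variable {B : Matrix (Fin 24) (Fin 24) ℤ} {a u w : LV} {k x y : ℤ}

/-- The number of minimal vectors (vectors of type `2`) having inner product `k` with `w`. -/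
def innerCount (hB : IsLeech B) (k : ℤ) (w : LV) : ℕ :=
  Finset.card {a ∈ hB.shell 2 | pairZ B a w = k}

lemma sub_mem_shell_iff (hB : IsLeech B) (ha : a ∈ hB.shell y) (hw : w ∈ hB.shell x) :
    a - w ∈ hB.shell (x + y - k) ↔ pairZ B a w = k := by
  rw [mem_shell] at ha hw
  rw [mem_shell, pairZ_sub_self hB.isSymm, ha, hw]
  omega

lemma natCard_pairs (hB : IsLeech B) (hw : w ∈ hB.shell x) (y : ℤ) :
    Nat.card {p : LV × LV // p.1 ∈ hB.shell 2 ∧ p.2 ∈ hB.shell y ∧ p.1 + p.2 = w} =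
      hB.innerCount (x + 2 - y) w := by
  have hmem {a : LV} (ha : a ∈ hB.shell 2) :
      w - a ∈ hB.shell y ↔ pairZ B a w = x + 2 - y := by
    rw [← hB.sub_mem_shell_iff ha hw, ← hB.neg_mem_shell, neg_sub, sub_sub_cancel]
  have hinj : Function.Injective fun a => (a, w - a) := fun a b hab => congrArg Prod.fst hab
  rw [innerCount, ← Finset.card_image_of_injective _ hinj]
  refine Nat.subtype_card _ ?_
  rintro ⟨a, b⟩
  simp only [Finset.mem_image, Finset.mem_filter, Prod.mk.injEq]
  constructor
  · rintro ⟨a, ⟨ha, hpair⟩, rfl, rfl⟩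
    exact ⟨ha, (hmem ha).mpr hpair, add_sub_cancel a w⟩
  · rintro ⟨ha, hb, rfl⟩
    exact ⟨a, ⟨ha, (hmem ha).mp (by rwa [add_sub_cancel_left])⟩, rfl, add_sub_cancel_left a b⟩

lemma innerCount_mulVec (hB : IsLeech B) {σ : Matrix (Fin 24) (Fin 24) ℤ}
    (hσ : σ ∈ ConwayGroup B) (k : ℤ) (w : LV) :
    hB.innerCount k (σ.mulVec w) = hB.innerCount k w := by
  refine Finset.card_nbij' σ⁻¹.mulVec σ.mulVec ?_ ?_
    (fun a _ => ConwayGroup.mulVec_inv_mulVec hσ a) (fun a _ => ConwayGroup.inv_mulVec_mulVec hσ a)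
  · intro a ha
    rw [Finset.mem_coe, Finset.mem_filter] at ha ⊢
    rw [ConwayGroup.mulVec_mem_shell hB (ConwayGroup.inv_mem hσ), ← ConwayGroup.pairZ_mulVec hσ,
      ConwayGroup.mulVec_inv_mulVec hσ]
    exact ha
  · intro a ha
    rw [Finset.mem_coe, Finset.mem_filter] at ha ⊢
    rwa [ConwayGroup.mulVec_mem_shell hB hσ, ConwayGroup.pairZ_mulVec hσ]

lemma innerCount_neg (hB : IsLeech B) (k : ℤ) (w : LV) :
    hB.innerCount (-k) w = hB.innerCount k w := by
  refine Finset.card_nbij' (-·) (-·) ?_ ?_ (fun a _ => neg_neg a) (fun a _ => neg_neg a) <;>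
  · intro a ha
    simpa [pairZ_neg_left, neg_eq_iff_eq_neg, hB.neg_mem_shell] using ha

lemma innerCount_zero_right (hB : IsLeech B) : hB.innerCount 0 0 = (hB.shell 2).card := by
  simp [innerCount, pairZ_zero_right]

lemma innerCount_four (hB : IsLeech B) (hw : w ∈ hB.shell 2) : hB.innerCount 4 w = 1 := by
  refine Finset.card_eq_one.mpr ⟨w, ?_⟩
  ext a
  rw [Finset.mem_filter, Finset.mem_singleton]
  constructor
  · rintro ⟨ha, hpair⟩
    have hzero := (hB.sub_mem_shell_iff ha hw).mpr hpair
    exact sub_eq_zero.mp (hB.mem_shell_zero.mp hzero)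
  · rintro rfl
    exact ⟨hw, hB.mem_shell.mp hw⟩

lemma innerCount_eq_zero (hB : IsLeech B) (hw : w ∈ hB.shell x) (hxk : x < k)
    (h4 : x = 2 → k ≠ 4) : hB.innerCount k w = 0 := by
  rw [innerCount, Finset.card_eq_zero, Finset.filter_eq_empty_iff]
  intro a ha hpair
  have hsub := (hB.sub_mem_shell_iff ha hw).mpr hpair
  have htype : x + 2 - k = 0 := by
    have := hB.type_eq_zero_or_two_le hsub
    omega
  rw [htype, mem_shell_zero, sub_eq_zero] at hsub
  have := hB.type_unique hw (hsub ▸ ha)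
  omega

lemma sum_shell_two_comp_pairZ (hB : IsLeech B) (hw : w ∈ hB.shell x) (f : ℤ → ℤ) :
    ∑ a ∈ hB.shell 2, f (pairZ B a w) =
      ∑ k ∈ Finset.Icc (-(x + 2)) (x + 2), hB.innerCount k w * f k := by
  have hmaps : ∀ a ∈ hB.shell 2, pairZ B a w ∈ Finset.Icc (-(x + 2)) (x + 2) := by
    intro a ha
    have := hB.two_mul_abs_pairZ_le a w
    rw [hB.mem_shell.mp ha, hB.mem_shell.mp hw] at this
    rw [Finset.mem_Icc, ← abs_le]
    omega
  rw [← Finset.sum_fiberwise_of_maps_to hmaps]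
  refine Finset.sum_congr rfl fun k _ => ?_
  rw [Finset.sum_congr rfl fun a ha => by rw [(Finset.mem_filter.mp ha).2], Finset.sum_const,
    nsmul_eq_mul, innerCount]

lemma sum_shell_two_of_mem_shell_two (hB : IsLeech B) {f : ℤ → ℤ}
    (hw : w ∈ hB.shell 2) (hf : ∀ k, f (-k) = f k) :
    ∑ a ∈ hB.shell 2, f (pairZ B a w) =
      2 * f 4 + 2 * hB.innerCount 2 w * f 2 + 2 * hB.innerCount 1 w * f 1 +
        hB.innerCount 0 w * f 0 := by
  have hIcc : Finset.Icc (-(2 + 2) : ℤ) (2 + 2) = {-4, -3, -2, -1, 0, 1, 2, 3, 4} := by decide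
  have h3 := hB.innerCount_eq_zero (k := 3) hw (by norm_num) (by norm_num)
  rw [hB.sum_shell_two_comp_pairZ hw, hIcc]
  repeat rw [Finset.sum_insert (by decide)]
  simp only [Finset.sum_singleton, innerCount_neg, hf, h3, hB.innerCount_four hw]
  push_cast
  ring

lemma sum_shell_two_of_mem_shell_three (hB : IsLeech B) {f : ℤ → ℤ}
    (hw : w ∈ hB.shell 3) (hf : ∀ k, f (-k) = f k) :
    ∑ a ∈ hB.shell 2, f (pairZ B a w) =
      2 * hB.innerCount 3 w * f 3 + 2 * hB.innerCount 2 w * f 2 +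
        2 * hB.innerCount 1 w * f 1 + hB.innerCount 0 w * f 0 := by
  have hIcc : Finset.Icc (-(3 + 2) : ℤ) (3 + 2) =
      {-5, -4, -3, -2, -1, 0, 1, 2, 3, 4, 5} := by decide
  have h4 := hB.innerCount_eq_zero (k := 4) hw (by norm_num) (by norm_num)
  have h5 := hB.innerCount_eq_zero (k := 5) hw (by norm_num) (by norm_num)
  rw [hB.sum_shell_two_comp_pairZ hw, hIcc]
  repeat rw [Finset.sum_insert (by decide)]
  simp only [Finset.sum_singleton, innerCount_neg, hf, h4, h5]
  push_cast
  ring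

lemma sum_innerCount (hB : IsLeech B) (x k : ℤ) :
    ∑ w ∈ hB.shell x, hB.innerCount k w =
      ∑ b ∈ hB.shell (x + 2 - k), hB.innerCount (4 - k) b := by
  simp only [innerCount, ← Finset.card_sigma]
  refine Finset.card_nbij' (fun p => ⟨p.2 - p.1, p.2⟩) (fun p => ⟨p.2 - p.1, p.2⟩) ?_ ?_
    (fun p _ => by simp) (fun p _ => by simp)
  · rintro ⟨w, a⟩ h
    simp only [Finset.mem_coe, Finset.mem_sigma, Finset.mem_filter] at h ⊢
    obtain ⟨hw, ha, hpair⟩ := h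
    refine ⟨(hB.sub_mem_shell_iff ha hw).mpr hpair, ha, ?_⟩
    rw [pairZ_sub_right, hpair, hB.mem_shell.mp ha]
    norm_num
  · rintro ⟨b, a⟩ h
    simp only [Finset.mem_coe, Finset.mem_sigma, Finset.mem_filter] at h ⊢
    obtain ⟨hb, ha, hpair⟩ := h
    have hsub := (hB.sub_mem_shell_iff ha hb).mpr hpair
    refine ⟨by convert hsub using 2; ring, ha, ?_⟩
    rw [pairZ_sub_right, hpair, hB.mem_shell.mp ha]
    ring

lemma innerCount_eq_card_filter_cosetShell (hB : IsLeech B) (hw : w ∈ hB.shell x) (k : ℤ) :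
    hB.innerCount k w =
      Finset.card {u ∈ hB.cosetShell w (x + 8 - 2 * k) | pairZ B u w = 2 * (x - k)} := by
  refine Finset.card_nbij (fun a => w - (2 : ℤ) • a) ?_ ?_ ?_
  · intro a ha
    simp only [Finset.mem_coe, Finset.mem_filter, mem_cosetShell] at ha ⊢
    obtain ⟨ha, hpair⟩ := ha
    refine ⟨⟨?_, mod2_eq_mod2_iff.mpr ⟨-a, by module⟩⟩, ?_⟩
    · rw [mem_shell] at ha hw ⊢
      rw [pairZ_sub_self hB.isSymm, pairZ_smul_right, pairZ_smul_right, pairZ_smul_left, ha, hw,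
        pairZ_comm hB.isSymm w a, hpair]
      ring
    · rw [pairZ_sub_left, pairZ_smul_left, hB.mem_shell.mp hw, hpair]
      ring
  · intro a _ b _ hab
    exact smul_right_injective LV two_ne_zero (sub_right_injective hab)
  · intro u hu
    rw [Finset.mem_coe, Finset.mem_filter, mem_cosetShell] at hu
    obtain ⟨⟨huy, huw⟩, hpair⟩ := hu
    obtain ⟨a, ha⟩ := mod2_eq_mod2_iff.mp huw.symm
    have hdiff : (2 : ℤ) • a = w - u := by rw [ha, add_sub_cancel_left]
    have hnorm := congrArg (fun v => pairZ B v v) hdiff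
    have hinner := congrArg (fun v => pairZ B v w) hdiff
    rw [mem_shell] at huy hw
    simp only [pairZ_sub_self hB.isSymm, pairZ_comm hB.isSymm w u, pairZ_sub_left,
      pairZ_smul_left, pairZ_smul_right, huy, hw, hpair] at hnorm hinner
    refine ⟨a, Finset.mem_coe.mpr (Finset.mem_filter.mpr ⟨hB.mem_shell.mpr ?_, ?_⟩), ?_⟩
    · omega
    · omega
    · simp only [hdiff, sub_sub_cancel]

lemma abs_pairZ_add_eight_le_of_mem_cosetShell (hB : IsLeech B) (hw : w ∈ hB.shell x)
    (hu : u ∈ hB.cosetShell w y) (hne : u ≠ w) (hneg : u ≠ -w) :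
    |pairZ B u w| + 8 ≤ x + y := by
  obtain ⟨huy, huw⟩ := hB.mem_cosetShell.mp hu
  have hle := hB.two_mul_abs_pairZ_add_le_of_mod2_eq huw hne hneg
  rw [hB.mem_shell.mp huy, hB.mem_shell.mp hw] at hle
  omega

lemma ne_and_ne_neg_of_mem_cosetShell (hB : IsLeech B) (hw : w ∈ hB.shell x)
    (hu : u ∈ hB.cosetShell w y) (hyx : y ≠ x) : u ≠ w ∧ u ≠ -w := by
  have huy := (hB.mem_cosetShell.mp hu).1
  refine ⟨?_, ?_⟩ <;> rintro rfl
  · exact hyx (hB.type_unique huy hw)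
  · exact hyx (hB.type_unique (hB.neg_mem_shell.mp huy) hw)

lemma innerCount_self (hB : IsLeech B) (hw : w ∈ hB.shell x) (hx : x ≠ 4) :
    hB.innerCount x w = (hB.cosetShell w (8 - x)).card := by
  rw [hB.innerCount_eq_card_filter_cosetShell hw, show x + 8 - 2 * x = 8 - x by ring,
    Finset.filter_true_of_mem]
  intro u hu
  obtain ⟨hne, hneg⟩ := hB.ne_and_ne_neg_of_mem_cosetShell hw hu (by omega)
  have hle := hB.abs_pairZ_add_eight_le_of_mem_cosetShell hw hu hne hneg
  rw [abs_nonpos_iff.mp (by omega : |pairZ B u w| ≤ 0)]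
  ring

-- The frame of a vector `w` of type `4` consists of `w`, `-w` and vectors orthogonal to `w`.
lemma innerCount_four_add_two (hB : IsLeech B) (hw : w ∈ hB.shell 4) :
    hB.innerCount 4 w + 2 = (hB.cosetShell w 4).card := by
  have hw0 := hB.ne_zero_of_mem_shell four_ne_zero hw
  have hww : w ∈ hB.cosetShell w 4 := hB.mem_cosetShell.mpr ⟨hw, rfl⟩
  have hsub : {w, -w} ⊆ hB.cosetShell w 4 := by
    simp [Finset.insert_subset_iff, hww, hB.neg_mem_cosetShell]
  have horth : {u ∈ hB.cosetShell w 4 | pairZ B u w = 0} = hB.cosetShell w 4 \ {w, -w} := by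
    ext u
    simp only [Finset.mem_filter, Finset.mem_sdiff, Finset.mem_insert, Finset.mem_singleton]
    refine and_congr_right fun hu => ⟨?_, fun hne => ?_⟩
    · rintro hpair (rfl | rfl)
      · exact hw0 (hB.pairZ_self_eq_zero.mp hpair)
      · rw [pairZ_neg_left, neg_eq_zero] at hpair
        exact hw0 (hB.pairZ_self_eq_zero.mp hpair)
    · rw [not_or] at hne
      have hle := hB.abs_pairZ_add_eight_le_of_mem_cosetShell hw hu hne.1 hne.2
      exact abs_nonpos_iff.mp (by omega)
  have hcard : hB.innerCount 4 w = (hB.cosetShell w 4 \ {w, -w}).card :=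
    horth ▸ hB.innerCount_eq_card_filter_cosetShell hw 4
  rw [hcard, ← Finset.card_pair (self_ne_neg.mpr hw0), Finset.card_sdiff_add_card_eq_card hsub]

lemma pairZ_eq_two_or_eq_neg_two (hB : IsLeech B) (hw : w ∈ hB.shell x) (hx : x ≠ 5)
    (hu : u ∈ hB.cosetShell w (10 - x)) : pairZ B u w = 2 ∨ pairZ B u w = -2 := by
  obtain ⟨hne, hneg⟩ := hB.ne_and_ne_neg_of_mem_cosetShell hw hu (by omega)
  have hle := hB.abs_pairZ_add_eight_le_of_mem_cosetShell hw hu hne hneg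
  obtain ⟨huy, huw⟩ := hB.mem_cosetShell.mp hu
  have hdvd := hB.eight_dvd_of_mod2_eq huw
  rw [hB.mem_shell.mp huy, hB.mem_shell.mp hw] at hdvd
  obtain ⟨hlow, hhigh⟩ := abs_le.mp (by omega : |pairZ B u w| ≤ 2)
  omega

lemma two_mul_innerCount_sub_one (hB : IsLeech B) (hw : w ∈ hB.shell x) (hx : x ≠ 5) :
    2 * hB.innerCount (x - 1) w = (hB.cosetShell w (10 - x)).card := by
  have hcount := hB.innerCount_eq_card_filter_cosetShell hw (x - 1)
  rw [show x + 8 - 2 * (x - 1) = 10 - x by ring, show 2 * (x - (x - 1)) = 2 by ring] at hcount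
  have hneg : {u ∈ hB.cosetShell w (10 - x) | ¬pairZ B u w = 2} =
      {u ∈ hB.cosetShell w (10 - x) | pairZ B u w = 2}.map (Equiv.neg LV).toEmbedding := by
    ext u
    have hcases := hB.pairZ_eq_two_or_eq_neg_two (u := u) hw hx
    simp only [Finset.mem_filter, Finset.mem_map_equiv, Equiv.neg_symm, Equiv.neg_apply,
      hB.neg_mem_cosetShell, pairZ_neg_left]
    refine and_congr_right fun hu => ?_
    have := hcases hu
    omega
  rw [← Finset.card_filter_add_card_filter_not (fun u => pairZ B u w = 2), hneg, Finset.card_map,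
    ← hcount, two_mul]

lemma sum_card_cosetShell (hB : IsLeech B) {n : ℕ}
    (hn : ∀ w ∈ hB.shellMod x y, (hB.cosetShell w y).card = n) :
    ∑ w ∈ hB.shell x, (hB.cosetShell w y).card = n * (hB.shellMod x y).card := by
  calc ∑ w ∈ hB.shell x, (hB.cosetShell w y).card
      = ∑ w ∈ hB.shellMod x y, (hB.cosetShell w y).card := by
        refine (Finset.sum_subset hB.shellMod_subset_shell fun w hw hw' => ?_).symm
        rw [hB.cosetShell_eq_empty hw hw', Finset.card_empty]
    _ = n * (hB.shellMod x y).card := by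
        rw [Finset.sum_const_nat hn, mul_comm]

lemma sum_innerCount_self (hB : IsLeech B) {n : ℕ} (hx : x ≠ 4)
    (hn : ∀ w ∈ hB.shellMod x (8 - x), (hB.cosetShell w (8 - x)).card = n) :
    ∑ b ∈ hB.shell 2, hB.innerCount (x - 4) b = n * (hB.shellMod x (8 - x)).card := by
  have hsum := hB.sum_innerCount x x
  rw [add_sub_cancel_left, ← neg_sub] at hsum
  rw [← hB.sum_card_cosetShell hn,
    ← Finset.sum_congr rfl fun w hw => hB.innerCount_self hw hx, hsum]
  simp only [innerCount_neg]

lemma two_mul_sum_innerCount_sub_one (hB : IsLeech B) {n : ℕ} (hx : x ≠ 5)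
    (hn : ∀ w ∈ hB.shellMod x (10 - x), (hB.cosetShell w (10 - x)).card = n) :
    2 * ∑ b ∈ hB.shell 3, hB.innerCount (x - 5) b = n * (hB.shellMod x (10 - x)).card := by
  have hsum := hB.sum_innerCount x (x - 1)
  rw [show x + 2 - (x - 1) = 3 by ring, show 4 - (x - 1) = -(x - 5) by ring] at hsum
  rw [← hB.sum_card_cosetShell hn,
    ← Finset.sum_congr rfl fun w hw => hB.two_mul_innerCount_sub_one hw hx, ← Finset.mul_sum, hsum]
  simp only [innerCount_neg]

end IsLeech

/-! ### Orbits modulo `2Λ` -/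

namespace OrbitData

variable {B : Matrix (Fin 24) (Fin 24) ℤ} {x y n m : ℕ} {S T : Finset LV} {u v : LV}

lemma subset_shellMod {y : ℤ} (hT : OrbitData B T x n) (hB : IsLeech B) (hv : v ∈ T)
    (hmod : v ∈ hB.shellMod x y) : T ⊆ hB.shellMod x y := by
  intro w hw
  obtain ⟨σ, hσ, rfl⟩ := hT.exists_mulVec_eq hv hw
  exact hB.mulVec_mem_shellMod hσ hmod

lemma image_mod2_subset (hS : OrbitData B S x n) (hT : OrbitData B T y m) (hu : u ∈ S)
    (hv : v ∈ T) (h : mod2 u = mod2 v) : S.image mod2 ⊆ T.image mod2 := by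
  intro c hc
  obtain ⟨w, hw, rfl⟩ := Finset.mem_image.mp hc
  obtain ⟨σ, hσ, rfl⟩ := hS.exists_mulVec_eq hu hw
  exact Finset.mem_image.mpr ⟨σ.mulVec v, hT.mulVec_mem hσ hv, (mod2_mulVec σ h).symm⟩

lemma image_mod2_eq (hS : OrbitData B S x n) (hT : OrbitData B T y m) (hu : u ∈ S)
    (hv : v ∈ T) (h : mod2 u = mod2 v) : S.image mod2 = T.image mod2 :=
  (hS.image_mod2_subset hT hu hv h).antisymm (hT.image_mod2_subset hS hv hu h.symm)

lemma card_filter_mod2_le (hT : OrbitData B T x n) (hu : u ∈ T) (hv : v ∈ T) :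
    Finset.card {t ∈ T | mod2 t = mod2 u} ≤ Finset.card {t ∈ T | mod2 t = mod2 v} := by
  obtain ⟨σ, hσ, rfl⟩ := hT.exists_mulVec_eq hu hv
  refine Finset.card_le_card_of_injOn σ.mulVec (fun t ht => ?_)
    (Function.LeftInverse.injective (ConwayGroup.inv_mulVec_mulVec hσ)).injOn
  rw [Finset.mem_coe, Finset.mem_filter] at ht ⊢
  exact ⟨hT.mulVec_mem hσ ht.1, mod2_mulVec σ ht.2⟩

lemma card_image_mod2_dvd (hT : OrbitData B T x n) : (T.image mod2).card ∣ n := by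
  obtain ⟨u, hu⟩ := hT.nonempty
  have hconst : ∀ c ∈ T.image mod2,
      Finset.card {t ∈ T | mod2 t = c} = Finset.card {t ∈ T | mod2 t = mod2 u} := by
    intro c hc
    obtain ⟨v, hv, rfl⟩ := Finset.mem_image.mp hc
    exact (hT.card_filter_mod2_le hv hu).antisymm (hT.card_filter_mod2_le hu hv)
  rw [← hT.card_eq, Finset.card_eq_sum_card_image mod2, Finset.sum_const_nat hconst]
  exact dvd_mul_right _ _

end OrbitData

namespace ShortShellOrbits

variable {B : Matrix (Fin 24) (Fin 24) ℤ} {hB : IsLeech B} {T : Finset LV} {x n : ℕ}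

lemma dvd_of_subset_shellMod_four (H : ShortShellOrbits hB) (hT : OrbitData B T x n)
    (hsub : T ⊆ hB.shellMod x 4) : 8292375 ∣ n := by
  obtain ⟨w, hw⟩ := hT.nonempty
  obtain ⟨-, u, hu⟩ := hB.mem_shellMod.mp (hsub hw)
  obtain ⟨hu4, huw⟩ := hB.mem_cosetShell.mp hu
  rw [← H.card_classes.1, IsLeech.classes, ← hT.image_mod2_eq H.four hw hu4 huw.symm]
  exact hT.card_image_mod2_dvd

lemma subset_shellMod_of_even (H : ShortShellOrbits hB) (hT : OrbitData B T x n) (hx : Even x) :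
    T ⊆ hB.shellMod x 0 ∨ T ⊆ hB.shellMod x 2 ∨ T ⊆ hB.shellMod x 4 := by
  obtain ⟨w, hw⟩ := hT.nonempty
  have hx' : Even (x : ℤ) := by exact_mod_cast hx
  exact (H.mem_shellMod_of_even hx' (hT.subset_shell hB hw)).imp (hT.subset_shellMod hB hw)
    (Or.imp (hT.subset_shellMod hB hw) (hT.subset_shellMod hB hw))

lemma subset_shellMod_six (H : ShortShellOrbits hB) (hT : OrbitData B T 6 n) :
    T ⊆ hB.shellMod 6 2 ∨ T ⊆ hB.shellMod 6 4 := by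
  refine (H.subset_shellMod_of_even hT (by decide)).resolve_left fun hsub => ?_
  obtain ⟨w, hw⟩ := hT.nonempty
  have := hB.four_dvd_of_mem_shellMod_zero (hsub hw)
  omega

lemma card_shellMod_eight_zero (H : ShortShellOrbits hB) :
    (hB.shellMod 8 0).card = 3 * 65520 := by
  have himage : hB.shellMod (4 * 2) 0 = (hB.shell 2).image ((2 : ℤ) • ·) := by
    ext w
    simp only [hB.mem_shellMod_zero, Finset.mem_image, eq_comm]
  rw [show (8 : ℤ) = 4 * 2 by norm_num, himage,
    Finset.card_image_of_injective _ (smul_right_injective LV two_ne_zero), H.two.card_eq]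

lemma subset_shellMod_eight_two (H : ShortShellOrbits hB) (hT : OrbitData B T 8 n)
    (hn : 3 * 65520 < n) (hdvd : ¬8292375 ∣ n) : T ⊆ hB.shellMod 8 2 := by
  rcases H.subset_shellMod_of_even hT (by decide) with hsub | hsub | hsub
  · have hle := Finset.card_le_card hsub
    rw [hT.card_eq] at hle
    exact absurd (hle.trans_eq H.card_shellMod_eight_zero) hn.not_ge
  · exact hsub
  · exact absurd (H.dvd_of_subset_shellMod_four hT hsub) hdvd

end ShortShellOrbits

/-! ### The second moment of the minimal vectors -/

namespace IsLeech

variable {B : Matrix (Fin 24) (Fin 24) ℤ} {f g w : LV}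

lemma exists_add_eq_and_sub_eq (hB : IsLeech B) (hf : f ∈ hB.shell 4) (hg : g ∈ hB.shell 4)
    (h : mod2 f = mod2 g) (horth : pairZ B f g = 0) :
    ∃ u ∈ hB.shell 2, ∃ v ∈ hB.shell 2, u + v = f ∧ u - v = g := by
  obtain ⟨v, rfl⟩ := mod2_eq_mod2_iff.mp h
  rw [mem_shell] at hf hg
  rw [pairZ_add_left, pairZ_smul_left, hg] at horth
  rw [pairZ_add_self hB.isSymm, pairZ_smul_left, pairZ_smul_right, pairZ_smul_right,
    pairZ_comm hB.isSymm g v, hg] at hf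
  refine ⟨g + v, hB.mem_shell.mpr ?_, v, hB.mem_shell.mpr (by omega), by module, by module⟩
  rw [pairZ_add_self hB.isSymm, pairZ_comm hB.isSymm g v]
  omega

lemma pairZ_sum_cosetShell_four (hB : IsLeech B) (hg : g ∈ hB.cosetShell w 4) (z : LV) :
    pairZ B (∑ f ∈ hB.cosetShell w 4, pairZ B f z • f) g = 16 * pairZ B g z := by
  have hg4 := (hB.mem_cosetShell.mp hg).1
  have hsub : {g, -g} ⊆ hB.cosetShell w 4 := by
    simp [Finset.insert_subset_iff, hg, hB.neg_mem_cosetShell]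
  rw [pairZ_sum_left, ← Finset.sum_subset hsub,
    Finset.sum_pair (self_ne_neg.mpr (hB.ne_zero_of_mem_shell four_ne_zero hg4))]
  · simp only [pairZ_smul_left, pairZ_neg_left, hB.mem_shell.mp hg4]
    ring
  · intro f hf hne
    rw [Finset.mem_insert, Finset.mem_singleton, not_or] at hne
    rw [mem_cosetShell] at hf hg
    have horth := hB.eq_or_eq_neg_or_pairZ_eq_zero_of_mod2_eq hf.1 hg.1 (hf.2.trans hg.2.symm)
    rw [pairZ_smul_left, (horth.resolve_left hne.1).resolve_left hne.2, mul_zero]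

end IsLeech

namespace ShortShellOrbits

variable {B : Matrix (Fin 24) (Fin 24) ℤ} {hB : IsLeech B} {f g w : LV} {x : ℤ}
  {φ : LinearMap.BilinForm ℤ LV}

-- Together with `±y`, a vector `y ≠ 0` orthogonal to the frame would give `50` vectors that are
-- pairwise opposite or orthogonal.
lemma eq_zero_of_pairZ_cosetShell_four_eq_zero (H : ShortShellOrbits hB)
    (hw : w ∈ hB.shellMod x 4) {y : LV} (hy : ∀ f ∈ hB.cosetShell w 4, pairZ B y f = 0) :
    y = 0 := by
  by_contra hy0
  have hyy : pairZ B y y ≠ 0 := fun h => hy0 (hB.pairZ_self_eq_zero.mp h)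
  have hy' : ∀ f ∈ hB.cosetShell w 4, pairZ B f y = 0 := fun f hf =>
    (pairZ_comm hB.isSymm f y).trans (hy f hf)
  have hmem : y ∉ hB.cosetShell w 4 := fun h => hyy (hy y h)
  have hframe : ∀ u ∈ hB.cosetShell w 4, ∀ v ∈ hB.cosetShell w 4,
      u = v ∨ u = -v ∨ pairZ B u v = 0 := by
    intro u hu v hv
    rw [IsLeech.mem_cosetShell] at hu hv
    exact hB.eq_or_eq_neg_or_pairZ_eq_zero_of_mod2_eq hu.1 hv.1 (hu.2.trans hv.2.symm)
  have hle : (insert y (insert (-y) (hB.cosetShell w 4))).card ≤ 2 * 24 := by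
    refine card_le_of_pairwise_eq_or_eq_neg_or_pairZ_eq_zero (B := B) ?_ ?_
    · intro v hv
      rcases Finset.mem_insert.mp hv with rfl | hv
      · exact hyy
      rcases Finset.mem_insert.mp hv with rfl | hv
      · rwa [pairZ_neg_self]
      · rw [hB.mem_shell.mp (hB.mem_cosetShell.mp hv).1]
        norm_num
    · intro u hu v hv
      simp only [Finset.mem_insert] at hu hv
      rcases hu with rfl | rfl | hu <;> rcases hv with rfl | rfl | hv <;>
        first
        | exact hframe _ hu _ hv
        | simp [pairZ_neg_left, pairZ_neg_right, *]
  rw [Finset.card_insert_of_notMem, Finset.card_insert_of_notMem, H.card_cosetShell_four hw] at hle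
  · omega
  · rwa [hB.neg_mem_cosetShell]
  · simp [hmem, self_eq_neg, hy0]

lemma sixteen_smul_eq_sum_cosetShell_four (H : ShortShellOrbits hB) (hw : w ∈ hB.shellMod x 4)
    (z : LV) : (16 : ℤ) • z = ∑ f ∈ hB.cosetShell w 4, pairZ B f z • f := by
  refine sub_eq_zero.mp (H.eq_zero_of_pairZ_cosetShell_four_eq_zero hw fun g hg => ?_)
  rw [pairZ_sub_left, pairZ_smul_left, hB.pairZ_sum_cosetShell_four hg,
    pairZ_comm hB.isSymm z g, sub_self]

lemma exists_mem_cosetShell_four_pairZ_eq_zero (H : ShortShellOrbits hB)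
    (hf : f ∈ hB.shell 4) : ∃ g ∈ hB.cosetShell f 4, pairZ B f g = 0 := by
  have hff : f ∈ hB.cosetShell f 4 := hB.mem_cosetShell.mpr ⟨hf, rfl⟩
  have hcard := H.card_cosetShell_four (hB.mem_shellMod.mpr ⟨hf, f, hff⟩)
  obtain ⟨g, hg, hne⟩ := Finset.exists_mem_notMem_of_card_lt_card
    (s := {f, -f}) (t := hB.cosetShell f 4) (Finset.card_le_two.trans_lt (by omega))
  rw [Finset.mem_insert, Finset.mem_singleton, not_or] at hne
  obtain ⟨hg4, hgf⟩ := hB.mem_cosetShell.mp hg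
  have horth := hB.eq_or_eq_neg_or_pairZ_eq_zero_of_mod2_eq hg4 hf hgf
  refine ⟨g, hg, ?_⟩
  rw [pairZ_comm hB.isSymm]
  exact (horth.resolve_left hne.1).resolve_left hne.2

lemma bilinForm_apply_self_eq_zero_of_mem_shell_four (H : ShortShellOrbits hB)
    (h2 : ∀ v ∈ hB.shell 2, φ v v = 0) (h4 : ∀ u ∈ hB.shell 4, ∀ v ∈ hB.shell 4, φ u u = φ v v)
    (hf : f ∈ hB.shell 4) : φ f f = 0 := by
  obtain ⟨g, hg, horth⟩ := H.exists_mem_cosetShell_four_pairZ_eq_zero hf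
  obtain ⟨hg4, hgf⟩ := hB.mem_cosetShell.mp hg
  obtain ⟨u, hu, v, hv, rfl, rfl⟩ := hB.exists_add_eq_and_sub_eq hf hg4 hgf.symm horth
  have hsum : φ (u + v) (u + v) + φ (u - v) (u - v) = 2 * (φ u u + φ v v) := by
    simp only [map_add, map_sub, LinearMap.add_apply, LinearMap.sub_apply]
    ring
  rw [h2 u hu, h2 v hv, ← h4 _ hf _ hg4] at hsum
  omega

lemma bilinForm_apply_eq_zero_of_mem_cosetShell_four (H : ShortShellOrbits hB) (hφ : φ.IsSymm)
    (h2 : ∀ v ∈ hB.shell 2, φ v v = 0) (h4 : ∀ u ∈ hB.shell 4, ∀ v ∈ hB.shell 4, φ u u = φ v v)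
    (hf : f ∈ hB.cosetShell w 4) (hg : g ∈ hB.cosetShell w 4) : φ f g = 0 := by
  obtain ⟨hf4, hfw⟩ := hB.mem_cosetShell.mp hf
  obtain ⟨hg4, hgw⟩ := hB.mem_cosetShell.mp hg
  have hgg := H.bilinForm_apply_self_eq_zero_of_mem_shell_four h2 h4 hg4
  have hfg : mod2 f = mod2 g := hfw.trans hgw.symm
  rcases hB.eq_or_eq_neg_or_pairZ_eq_zero_of_mod2_eq hf4 hg4 hfg with rfl | rfl | horth
  · exact hgg
  · rw [map_neg, LinearMap.neg_apply, hgg, neg_zero]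
  · obtain ⟨u, hu, v, hv, rfl, rfl⟩ := hB.exists_add_eq_and_sub_eq hf4 hg4 hfg horth
    simp only [map_add, map_sub, LinearMap.add_apply, h2 u hu, h2 v hv, hφ.eq v u]
    ring

lemma bilinForm_eq_zero (H : ShortShellOrbits hB) (hφ : φ.IsSymm)
    (h2 : ∀ v ∈ hB.shell 2, φ v v = 0) (h4 : ∀ u ∈ hB.shell 4, ∀ v ∈ hB.shell 4, φ u u = φ v v) :
    φ = 0 := by
  obtain ⟨w, hw⟩ := H.four.nonempty
  have hw4 : w ∈ hB.shellMod 4 4 :=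
    hB.mem_shellMod.mpr ⟨hw, w, hB.mem_cosetShell.mpr ⟨hw, rfl⟩⟩
  refine LinearMap.ext₂ fun y z => ?_
  have hscaled : φ ((16 : ℤ) • y) ((16 : ℤ) • z) = 0 := by
    rw [H.sixteen_smul_eq_sum_cosetShell_four hw4 y, H.sixteen_smul_eq_sum_cosetShell_four hw4 z]
    simp only [map_sum, map_smul, LinearMap.sum_apply, LinearMap.smul_apply, Finset.smul_sum]
    refine Finset.sum_eq_zero fun f hf => Finset.sum_eq_zero fun g hg => ?_
    rw [H.bilinForm_apply_eq_zero_of_mem_cosetShell_four hφ h2 h4 hg hf, smul_zero, smul_zero]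
  rw [map_smul, map_smul, LinearMap.smul_apply] at hscaled
  exact (smul_eq_zero_iff_right (by norm_num)).mp
    ((smul_eq_zero_iff_right (by norm_num)).mp hscaled)

lemma sum_comp_pairZ_eq_of_mem_shell_four (H : ShortShellOrbits hB) (r : ℤ → ℤ)
    (hf : f ∈ hB.shell 4) (hg : g ∈ hB.shell 4) :
    ∑ a ∈ hB.shell 2, r (pairZ B a f) = ∑ a ∈ hB.shell 2, r (pairZ B a g) := by
  obtain ⟨σ, hσ, rfl⟩ := H.four.exists_mulVec_eq hf hg
  simp only [hB.sum_shell_two_comp_pairZ hf, hB.sum_shell_two_comp_pairZ hg,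
    hB.innerCount_mulVec hσ]

lemma sum_pairZ_sq_of_forall_mem_shell_two (H : ShortShellOrbits hB) {c : ℤ}
    (hc : ∀ v ∈ hB.shell 2, ∑ a ∈ hB.shell 2, pairZ B a v ^ 2 = c * pairZ B v v) (z : LV) :
    ∑ a ∈ hB.shell 2, pairZ B a z ^ 2 = c * pairZ B z z := by
  let φ : LinearMap.BilinForm ℤ LV :=
    ∑ a ∈ hB.shell 2, LinearMap.BilinForm.linMulLin (toBilin' B a) (toBilin' B a) - c • toBilin' B
  have hpair (u v : LV) : toBilin' B u v = pairZ B u v := toBilin'_apply' B u v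
  have hφ (u v : LV) :
      φ u v = ∑ a ∈ hB.shell 2, pairZ B a u * pairZ B a v - c * pairZ B u v := by
    simp [φ, hpair, LinearMap.sum_apply]
  have hφself (u : LV) : φ u u = ∑ a ∈ hB.shell 2, pairZ B a u ^ 2 - c * pairZ B u u := by
    simp only [hφ, sq]
  have hzero : φ = 0 := by
    refine H.bilinForm_eq_zero ⟨fun u v => ?_⟩ (fun v hv => ?_) fun u hu v hv => ?_
    · simp only [hφ, mul_comm (pairZ B _ u), pairZ_comm hB.isSymm u v]
    · rw [hφself, hc v hv, sub_self]
    · rw [hφself, hφself, H.sum_comp_pairZ_eq_of_mem_shell_four (· ^ 2) hu hv,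
        hB.mem_shell.mp hu, hB.mem_shell.mp hv]
  have hz := hφself z
  rw [hzero] at hz
  exact sub_eq_zero.mp hz.symm

end ShortShellOrbits

/-! ### Types 5 to 8 -/

namespace ShortShellOrbits

variable {B : Matrix (Fin 24) (Fin 24) ℤ} {hB : IsLeech B} {w : LV} {x k : ℤ}

lemma shellMod_three_eq_shell (H : ShortShellOrbits hB) (hx : Odd x) :
    hB.shellMod x 3 = hB.shell x :=
  hB.shellMod_subset_shell.antisymm fun _ => H.mem_shellMod_of_odd hx

lemma sum_innerCount_shell_two (H : ShortShellOrbits hB) (hw : w ∈ hB.shell 2) :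
    ∑ b ∈ hB.shell 2, hB.innerCount k b = 3 * 65520 * hB.innerCount k w :=
  H.two.sum_eq_mul (fun _ hσ => hB.innerCount_mulVec hσ k) hw

lemma sum_innerCount_shell_three (H : ShortShellOrbits hB) (hw : w ∈ hB.shell 3) :
    ∑ b ∈ hB.shell 3, hB.innerCount k b = 256 * 65520 * hB.innerCount k w :=
  H.three.sum_eq_mul (fun _ hσ => hB.innerCount_mulVec hσ k) hw

lemma sum_innerCount_shell_four (H : ShortShellOrbits hB) (hw : w ∈ hB.shell 4) :
    ∑ b ∈ hB.shell 4, hB.innerCount k b = 6075 * 65520 * hB.innerCount k w :=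
  H.four.sum_eq_mul (fun _ hσ => hB.innerCount_mulVec hσ k) hw

lemma innerCount_four_of_mem_shell_four (H : ShortShellOrbits hB) (hw : w ∈ hB.shell 4) :
    hB.innerCount 4 w = 46 := by
  have hmod : w ∈ hB.shellMod 4 4 :=
    hB.mem_shellMod.mpr ⟨hw, w, hB.mem_cosetShell.mpr ⟨hw, rfl⟩⟩
  have hcount := hB.innerCount_four_add_two hw
  rw [H.card_cosetShell_four hmod] at hcount
  omega

lemma innerCount_zero_of_mem_shell_two (H : ShortShellOrbits hB) (hw : w ∈ hB.shell 2) :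
    hB.innerCount 0 w = 93150 := by
  obtain ⟨v, hv⟩ := H.four.nonempty
  have hsum : ∑ v ∈ hB.shell 4, hB.innerCount 4 v = ∑ b ∈ hB.shell 2, hB.innerCount 0 b :=
    hB.sum_innerCount 4 4
  rw [H.sum_innerCount_shell_four hv, H.sum_innerCount_shell_two hw,
    H.innerCount_four_of_mem_shell_four hv] at hsum
  omega

lemma mul_innerCount_one_of_mem_shell_two (H : ShortShellOrbits hB) (hw : w ∈ hB.shell 2) :
    3 * 65520 * hB.innerCount 1 w = 2 * (hB.shell 5).card := by
  rw [← H.sum_innerCount_shell_two hw, ← H.shellMod_three_eq_shell (x := 5) (by decide)]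
  exact hB.sum_innerCount_self (x := 5) (by norm_num) fun _ =>
    hB.card_cosetShell_eq_two (by norm_num) (by norm_num)

lemma mul_innerCount_two_of_mem_shell_two (H : ShortShellOrbits hB) (hw : w ∈ hB.shell 2) :
    3 * 65520 * hB.innerCount 2 w = 2 * (hB.shellMod 6 2).card := by
  rw [← H.sum_innerCount_shell_two hw]
  exact hB.sum_innerCount_self (x := 6) (by norm_num) fun _ =>
    hB.card_cosetShell_eq_two (by norm_num) (by norm_num)

lemma innerCount_add_of_mem_shell_two (H : ShortShellOrbits hB) (hw : w ∈ hB.shell 2) :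
    2 + 2 * hB.innerCount 2 w + 2 * hB.innerCount 1 w + hB.innerCount 0 w = 3 * 65520 := by
  have hsum := hB.sum_shell_two_of_mem_shell_two (f := fun _ => 1) hw fun _ => rfl
  rw [Finset.sum_const, H.two.card_eq] at hsum
  simp only [nsmul_eq_mul, mul_one] at hsum
  exact_mod_cast hsum.symm

lemma card_shell_five_and_shellMod_six_two (H : ShortShellOrbits hB)
    (h5 : 70656 * 65520 ≤ (hB.shell 5).card) (h62 : 6900 * 65520 ≤ (hB.shellMod 6 2).card) :
    (hB.shell 5).card = 70656 * 65520 ∧ (hB.shellMod 6 2).card = 6900 * 65520 := by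
  obtain ⟨w, hw⟩ := H.two.nonempty
  have hadd := H.innerCount_add_of_mem_shell_two hw
  have hzero := H.innerCount_zero_of_mem_shell_two hw
  have hone := H.mul_innerCount_one_of_mem_shell_two hw
  have htwo := H.mul_innerCount_two_of_mem_shell_two hw
  omega

lemma innerCount_one_of_mem_shell_two (H : ShortShellOrbits hB)
    (h5 : (hB.shell 5).card = 70656 * 65520) (hw : w ∈ hB.shell 2) :
    hB.innerCount 1 w = 47104 := by
  have hone := H.mul_innerCount_one_of_mem_shell_two hw
  omega

lemma innerCount_two_of_mem_shell_two (H : ShortShellOrbits hB)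
    (h62 : (hB.shellMod 6 2).card = 6900 * 65520) (hw : w ∈ hB.shell 2) :
    hB.innerCount 2 w = 4600 := by
  have htwo := H.mul_innerCount_two_of_mem_shell_two hw
  omega

lemma innerCount_three_of_mem_shell_three (H : ShortShellOrbits hB)
    (h5 : (hB.shell 5).card = 70656 * 65520) (hw : w ∈ hB.shell 3) :
    hB.innerCount 3 w = 552 := by
  obtain ⟨v, hv⟩ := H.two.nonempty
  have hsum : ∑ w ∈ hB.shell 3, hB.innerCount 3 w = ∑ b ∈ hB.shell 2, hB.innerCount 1 b :=
    hB.sum_innerCount 3 3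
  rw [H.sum_innerCount_shell_three hw, H.sum_innerCount_shell_two hv,
    H.innerCount_one_of_mem_shell_two h5 hv] at hsum
  omega

-- The constant is forced by comparing traces: `24 * 32760 = 4 * 196560`.
lemma sum_pairZ_sq_eq (H : ShortShellOrbits hB) (h5 : (hB.shell 5).card = 70656 * 65520)
    (h62 : (hB.shellMod 6 2).card = 6900 * 65520) (z : LV) :
    ∑ a ∈ hB.shell 2, pairZ B a z ^ 2 = 32760 * pairZ B z z := by
  refine H.sum_pairZ_sq_of_forall_mem_shell_two (fun v hv => ?_) z
  rw [hB.sum_shell_two_of_mem_shell_two (f := (· ^ 2)) hv neg_sq,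
    H.innerCount_one_of_mem_shell_two h5 hv, H.innerCount_two_of_mem_shell_two h62 hv,
    hB.mem_shell.mp hv]
  norm_num

lemma two_mul_mul_innerCount_one_of_mem_shell_three (H : ShortShellOrbits hB)
    (hw : w ∈ hB.shell 3) :
    2 * (256 * 65520 * hB.innerCount 1 w) = 48 * (hB.shellMod 6 4).card := by
  rw [← H.sum_innerCount_shell_three hw]
  exact hB.two_mul_sum_innerCount_sub_one (x := 6) (by norm_num) fun _ => H.card_cosetShell_four

lemma two_mul_mul_innerCount_two_of_mem_shell_three (H : ShortShellOrbits hB)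
    (hw : w ∈ hB.shell 3) :
    2 * (256 * 65520 * hB.innerCount 2 w) = 2 * (hB.shell 7).card := by
  rw [← H.sum_innerCount_shell_three hw, ← H.shellMod_three_eq_shell (x := 7) (by decide)]
  exact hB.two_mul_sum_innerCount_sub_one (x := 7) (by norm_num) fun _ =>
    hB.card_cosetShell_eq_two (by norm_num) (by norm_num)

lemma two_mul_mul_innerCount_three_of_mem_shell_three (H : ShortShellOrbits hB)
    (hw : w ∈ hB.shell 3) :
    2 * (256 * 65520 * hB.innerCount 3 w) = 2 * (hB.shellMod 8 2).card := by
  rw [← H.sum_innerCount_shell_three hw]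
  exact hB.two_mul_sum_innerCount_sub_one (x := 8) (by norm_num) fun _ =>
    hB.card_cosetShell_eq_two (by norm_num) (by norm_num)

lemma innerCount_add_of_mem_shell_three (H : ShortShellOrbits hB) (hw : w ∈ hB.shell 3) :
    2 * hB.innerCount 3 w + 2 * hB.innerCount 2 w + 2 * hB.innerCount 1 w + hB.innerCount 0 w =
      3 * 65520 := by
  have hsum := hB.sum_shell_two_of_mem_shell_three (f := fun _ => 1) hw fun _ => rfl
  rw [Finset.sum_const, H.two.card_eq] at hsum
  simp only [nsmul_eq_mul, mul_one] at hsum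
  exact_mod_cast hsum.symm

lemma innerCount_sq_add_of_mem_shell_three (H : ShortShellOrbits hB)
    (h5 : (hB.shell 5).card = 70656 * 65520) (h62 : (hB.shellMod 6 2).card = 6900 * 65520)
    (hw : w ∈ hB.shell 3) :
    18 * hB.innerCount 3 w + 8 * hB.innerCount 2 w + 2 * hB.innerCount 1 w = 3 * 65520 := by
  have hsum := H.sum_pairZ_sq_eq h5 h62 w
  rw [hB.sum_shell_two_of_mem_shell_three (f := (· ^ 2)) hw neg_sq, hB.mem_shell.mp hw] at hsum
  omega

lemma card_shellMod_six_four_and_shell_seven (H : ShortShellOrbits hB)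
    (h5 : (hB.shell 5).card = 70656 * 65520) (h62 : (hB.shellMod 6 2).card = 6900 * 65520)
    (h64 : 518400 * 65520 ≤ (hB.shellMod 6 4).card) (h7 : 2861568 * 65520 ≤ (hB.shell 7).card) :
    (hB.shellMod 6 4).card = 518400 * 65520 ∧ (hB.shell 7).card = 2861568 * 65520 := by
  obtain ⟨w, hw⟩ := H.three.nonempty
  have hsq := H.innerCount_sq_add_of_mem_shell_three h5 h62 hw
  have hone := H.two_mul_mul_innerCount_one_of_mem_shell_three hw
  have htwo := H.two_mul_mul_innerCount_two_of_mem_shell_three hw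
  have hthree := H.innerCount_three_of_mem_shell_three h5 hw
  omega

lemma card_shellMod_eight_two (H : ShortShellOrbits hB)
    (h5 : (hB.shell 5).card = 70656 * 65520) :
    (hB.shellMod 8 2).card = 141312 * 65520 := by
  obtain ⟨w, hw⟩ := H.three.nonempty
  have hcard := H.two_mul_mul_innerCount_three_of_mem_shell_three hw
  rw [H.innerCount_three_of_mem_shell_three h5 hw] at hcard
  omega

lemma five_eq_and_six_two_eq (H : ShortShellOrbits hB) {O5 O6b : Finset LV}
    (h5 : OrbitData B O5 5 (70656 * 65520)) (h6b : OrbitData B O6b 6 (6900 * 65520)) :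
    O5 = hB.shell 5 ∧ O6b = hB.shellMod 6 2 := by
  have hsub5 : O5 ⊆ hB.shell 5 := h5.subset_shell hB
  have hsub62 : O6b ⊆ hB.shellMod 6 2 := (H.subset_shellMod_six h6b).resolve_right fun hsub =>
    absurd (H.dvd_of_subset_shellMod_four h6b hsub) (by decide)
  have hle5 := Finset.card_le_card hsub5
  have hle62 := Finset.card_le_card hsub62
  rw [h5.card_eq] at hle5
  rw [h6b.card_eq] at hle62
  obtain ⟨hcard5, hcard62⟩ := H.card_shell_five_and_shellMod_six_two hle5 hle62
  exact ⟨Finset.eq_of_subset_of_card_le hsub5 (hcard5.trans h5.card_eq.symm).le,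
    Finset.eq_of_subset_of_card_le hsub62 (hcard62.trans h6b.card_eq.symm).le⟩

lemma six_four_eq_and_seven_eq (H : ShortShellOrbits hB) {O6a O7 : Finset LV}
    (h5 : (hB.shell 5).card = 70656 * 65520) (h62 : (hB.shellMod 6 2).card = 6900 * 65520)
    (h6a : OrbitData B O6a 6 (518400 * 65520)) (h7 : OrbitData B O7 7 (2861568 * 65520)) :
    O6a = hB.shellMod 6 4 ∧ O7 = hB.shell 7 := by
  have hsub64 : O6a ⊆ hB.shellMod 6 4 := (H.subset_shellMod_six h6a).resolve_left fun hsub => by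
    have hle := Finset.card_le_card hsub
    rw [h6a.card_eq, h62] at hle
    omega
  have hsub7 : O7 ⊆ hB.shell 7 := h7.subset_shell hB
  have hle64 := Finset.card_le_card hsub64
  have hle7 := Finset.card_le_card hsub7
  rw [h6a.card_eq] at hle64
  rw [h7.card_eq] at hle7
  obtain ⟨hcard64, hcard7⟩ := H.card_shellMod_six_four_and_shell_seven h5 h62 hle64 hle7
  exact ⟨Finset.eq_of_subset_of_card_le hsub64 (hcard64.trans h6a.card_eq.symm).le,
    Finset.eq_of_subset_of_card_le hsub7 (hcard7.trans h7.card_eq.symm).le⟩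

lemma eight_two_eq (H : ShortShellOrbits hB) {O8c : Finset LV}
    (h5 : (hB.shell 5).card = 70656 * 65520) (h8c : OrbitData B O8c 8 (141312 * 65520)) :
    O8c = hB.shellMod 8 2 :=
  Finset.eq_of_subset_of_card_le
    (H.subset_shellMod_eight_two h8c (by norm_num) (by decide))
    ((H.card_shellMod_eight_two h5).trans h8c.card_eq.symm).le

end ShortShellOrbits

/-- The Conway orbits of types `5`, `6` and `7`, in addition to those of types `2`, `3` and `4`,
are shells or, for type `6`, parts of the shell cut out by the classes modulo `2Λ`. -/
structure ShellOrbits {B : Matrix (Fin 24) (Fin 24) ℤ} (hB : IsLeech B) : Prop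
    extends ShortShellOrbits hB where
  five : OrbitData B (hB.shell 5) 5 (70656 * 65520)
  six_two : OrbitData B (hB.shellMod 6 2) 6 (6900 * 65520)
  six_four : OrbitData B (hB.shellMod 6 4) 6 (518400 * 65520)
  seven : OrbitData B (hB.shell 7) 7 (2861568 * 65520)

namespace ShellOrbits

variable {B : Matrix (Fin 24) (Fin 24) ℤ} {hB : IsLeech B} {w : LV}

lemma innerCount_of_mem_shell_three (H : ShellOrbits hB) (hw : w ∈ hB.shell 3) :
    hB.innerCount 3 w = 552 ∧ hB.innerCount 2 w = 11178 ∧ hB.innerCount 1 w = 48600 ∧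
      hB.innerCount 0 w = 75900 := by
  have hadd := H.innerCount_add_of_mem_shell_three hw
  have hone := H.two_mul_mul_innerCount_one_of_mem_shell_three hw
  have htwo := H.two_mul_mul_innerCount_two_of_mem_shell_three hw
  have hthree := H.innerCount_three_of_mem_shell_three H.five.card_eq hw
  rw [H.six_four.card_eq] at hone
  rw [H.seven.card_eq] at htwo
  omega

lemma innerCount_three_of_mem_shell_four (H : ShellOrbits hB) (hw : w ∈ hB.shell 4) :
    hB.innerCount 3 w = 2048 := by
  obtain ⟨v, hv⟩ := H.three.nonempty
  have hsum : ∑ w ∈ hB.shell 4, hB.innerCount 3 w = ∑ b ∈ hB.shell 3, hB.innerCount 1 b :=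
    hB.sum_innerCount 4 3
  rw [H.sum_innerCount_shell_four hw, H.sum_innerCount_shell_three hv,
    (H.innerCount_of_mem_shell_three hv).2.2.1] at hsum
  omega

lemma innerCount_four_of_mem_shell_five (H : ShellOrbits hB) (hw : w ∈ hB.shell 5) :
    hB.innerCount 4 w = 275 := by
  obtain ⟨v, hv⟩ := H.three.nonempty
  have hsum : ∑ w ∈ hB.shell 5, hB.innerCount 4 w = ∑ b ∈ hB.shell 3, hB.innerCount 0 b :=
    hB.sum_innerCount 5 4
  rw [H.five.sum_eq_mul (fun _ hσ => hB.innerCount_mulVec hσ 4) hw,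
    H.sum_innerCount_shell_three hv, (H.innerCount_of_mem_shell_three hv).2.2.2] at hsum
  omega

end ShellOrbits

/-! ### The table of inner product counts -/

namespace IsLeech

variable {B : Matrix (Fin 24) (Fin 24) ℤ} {w : LV} {x y z : ℤ}

lemma mem_shell_iff_eq (hB : IsLeech B) (hw : w ∈ hB.shell x) : w ∈ hB.shell y ↔ x = y :=
  ⟨hB.type_unique hw, fun h => h ▸ hw⟩

lemma eq_zero_iff_of_mem_shell (hB : IsLeech B) (hw : w ∈ hB.shell x) : w = 0 ↔ x = 0 := by
  rw [← hB.mem_shell_zero, hB.mem_shell_iff_eq hw]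

lemma notMem_shellMod (hB : IsLeech B) (hw : w ∈ hB.shell x) (hxy : x ≠ y) :
    w ∉ hB.shellMod y z :=
  fun h => hxy (hB.type_unique hw (hB.shellMod_subset_shell h))

lemma card_cosetShell_eq_ite (hB : IsLeech B) (hw : w ∈ hB.shell x) {n : ℕ}
    (hn : w ∈ hB.shellMod x y → (hB.cosetShell w y).card = n) :
    (hB.cosetShell w y).card = if w ∈ hB.shellMod x y then n else 0 := by
  split_ifs with h
  · exact hn h
  · rw [hB.cosetShell_eq_empty hw h, Finset.card_empty]

lemma innerCount_six_of_mem_shell_six (hB : IsLeech B) (hw : w ∈ hB.shell 6) :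
    hB.innerCount 6 w = if w ∈ hB.shellMod 6 2 then 2 else 0 := by
  rw [hB.innerCount_self hw (by norm_num)]
  exact hB.card_cosetShell_eq_ite hw (hB.card_cosetShell_eq_two (by norm_num) (by norm_num))

lemma innerCount_eight_of_mem_shell_eight (hB : IsLeech B) (hw : w ∈ hB.shell 8) :
    hB.innerCount 8 w = if w ∈ hB.shellMod 8 0 then 1 else 0 := by
  rw [hB.innerCount_self hw (by norm_num)]
  exact hB.card_cosetShell_eq_ite hw hB.card_cosetShell_zero

lemma innerCount_self_eq_zero (hB : IsLeech B) (hw : w ∈ hB.shell x) (hx : 7 ≤ x) (hx8 : x ≠ 8) :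
    hB.innerCount x w = 0 := by
  rw [hB.innerCount_self hw (by omega),
    hB.cosetShell_eq_empty_of_type (by omega) (by omega), Finset.card_empty]

lemma innerCount_seven_of_mem_shell_eight (hB : IsLeech B) (hw : w ∈ hB.shell 8) :
    hB.innerCount 7 w = if w ∈ hB.shellMod 8 2 then 1 else 0 := by
  have hcount : 2 * hB.innerCount 7 w = (hB.cosetShell w 2).card :=
    hB.two_mul_innerCount_sub_one hw (by norm_num)
  rw [hB.card_cosetShell_eq_ite hw (hB.card_cosetShell_eq_two (by norm_num) (by norm_num))]
    at hcount
  split_ifs at hcount ⊢ <;> omega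

lemma innerCount_sub_one_eq_zero (hB : IsLeech B) (hw : w ∈ hB.shell x) (hx : 9 ≤ x) :
    hB.innerCount (x - 1) w = 0 := by
  have hempty : hB.cosetShell w (10 - x) = ∅ := by
    rcases eq_or_ne x 10 with rfl | hx10
    · exact hB.cosetShell_eq_empty hw fun h => by
        have := hB.four_dvd_of_mem_shellMod_zero h
        omega
    · exact hB.cosetShell_eq_empty_of_type (by omega) (by omega)
  have hcount := hB.two_mul_innerCount_sub_one hw (by omega)
  rw [hempty, Finset.card_empty] at hcount
  omega

end IsLeech

namespace ShortShellOrbits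

variable {B : Matrix (Fin 24) (Fin 24) ℤ} {hB : IsLeech B} {w : LV}

lemma innerCount_five_of_mem_shell_five (H : ShortShellOrbits hB) (hw : w ∈ hB.shell 5) :
    hB.innerCount 5 w = 2 := by
  rw [hB.innerCount_self hw (by norm_num)]
  exact hB.card_cosetShell_eq_two (by norm_num) (by norm_num)
    (H.mem_shellMod_of_odd (by decide) hw)

lemma innerCount_five_of_mem_shell_six (H : ShortShellOrbits hB) (hw : w ∈ hB.shell 6) :
    hB.innerCount 5 w = if w ∈ hB.shellMod 6 4 then 24 else 0 := by
  have hcount : 2 * hB.innerCount 5 w = (hB.cosetShell w 4).card :=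
    hB.two_mul_innerCount_sub_one hw (by norm_num)
  rw [hB.card_cosetShell_eq_ite hw H.card_cosetShell_four] at hcount
  split_ifs at hcount ⊢ <;> omega

lemma innerCount_six_of_mem_shell_seven (H : ShortShellOrbits hB) (hw : w ∈ hB.shell 7) :
    hB.innerCount 6 w = 1 := by
  have hcount : 2 * hB.innerCount 6 w = (hB.cosetShell w 3).card :=
    hB.two_mul_innerCount_sub_one hw (by norm_num)
  rw [hB.card_cosetShell_eq_two (by norm_num) (by norm_num)
    (H.mem_shellMod_of_odd (by decide) hw)] at hcount
  omega

end ShortShellOrbits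

namespace ShellOrbits

variable {B : Matrix (Fin 24) (Fin 24) ℤ} {hB : IsLeech B} {w : LV} {x : ℤ}

lemma innerCount_self_eq_ite (H : ShellOrbits hB) (hw : w ∈ hB.shell x) :
    hB.innerCount x w =
      if w = 0 then 196560 else if w ∈ hB.shell 2 then 4600 else if w ∈ hB.shell 3 then 552
      else if w ∈ hB.shell 4 then 46 else if w ∈ hB.shell 5 then 2
      else if w ∈ hB.shellMod 6 2 then 2 else if w ∈ hB.shellMod 8 0 then 1 else 0 := by
  simp only [hB.eq_zero_iff_of_mem_shell hw, hB.mem_shell_iff_eq hw]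
  have hcases : x = 0 ∨ x = 2 ∨ x = 3 ∨ x = 4 ∨ x = 5 ∨ x = 6 ∨ x = 8 ∨ (7 ≤ x ∧ x ≠ 8) := by
    have := hB.type_eq_zero_or_two_le hw
    omega
  rcases hcases with rfl | rfl | rfl | rfl | rfl | rfl | rfl | ⟨hx, hx8⟩
  · rw [hB.mem_shell_zero.mp hw, hB.innerCount_zero_right, H.two.card_eq, if_pos rfl]
  · simpa using H.innerCount_two_of_mem_shell_two H.six_two.card_eq hw
  · simpa using (H.innerCount_of_mem_shell_three hw).1
  · simpa using H.innerCount_four_of_mem_shell_four hw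
  · simpa using H.innerCount_five_of_mem_shell_five hw
  · simpa [hB.notMem_shellMod hw] using hB.innerCount_six_of_mem_shell_six hw
  · simpa [hB.notMem_shellMod hw] using hB.innerCount_eight_of_mem_shell_eight hw
  · rw [hB.innerCount_self_eq_zero hw hx hx8]
    rw [if_neg (by omega), if_neg (by omega), if_neg (by omega), if_neg (by omega),
      if_neg (by omega), if_neg (hB.notMem_shellMod hw (by omega)),
      if_neg (hB.notMem_shellMod hw hx8)]

lemma innerCount_sub_one_eq_ite (H : ShellOrbits hB) (hw : w ∈ hB.shell x) :
    hB.innerCount (x - 1) w =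
      if w ∈ hB.shell 2 then 47104 else if w ∈ hB.shell 3 then 11178
      else if w ∈ hB.shell 4 then 2048 else if w ∈ hB.shell 5 then 275
      else if w ∈ hB.shellMod 6 4 then 24 else if w ∈ hB.shell 7 then 1
      else if w ∈ hB.shellMod 8 2 then 1 else 0 := by
  simp only [hB.mem_shell_iff_eq hw]
  have hcases : x = 0 ∨ x = 2 ∨ x = 3 ∨ x = 4 ∨ x = 5 ∨ x = 6 ∨ x = 7 ∨ x = 8 ∨ 9 ≤ x := by
    have := hB.type_eq_zero_or_two_le hw
    omega
  rcases hcases with rfl | rfl | rfl | rfl | rfl | rfl | rfl | rfl | hx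
  · have hone := hB.innerCount_eq_zero (k := 1) hw (by norm_num) (by norm_num)
    simpa [hB.notMem_shellMod hw, hB.innerCount_neg] using hone
  · simpa using H.innerCount_one_of_mem_shell_two H.five.card_eq hw
  · simpa using (H.innerCount_of_mem_shell_three hw).2.1
  · simpa using H.innerCount_three_of_mem_shell_four hw
  · simpa using H.innerCount_four_of_mem_shell_five hw
  · simpa [hB.notMem_shellMod hw] using H.innerCount_five_of_mem_shell_six hw
  · simpa [hB.notMem_shellMod hw] using H.innerCount_six_of_mem_shell_seven hw
  · simpa [hB.notMem_shellMod hw] using hB.innerCount_seven_of_mem_shell_eight hw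
  · rw [hB.innerCount_sub_one_eq_zero hw hx]
    rw [if_neg (by omega), if_neg (by omega), if_neg (by omega), if_neg (by omega),
      if_neg (hB.notMem_shellMod hw (by omega)), if_neg (by omega),
      if_neg (hB.notMem_shellMod hw (by omega))]

lemma natCard_pairs_two_two (H : ShellOrbits hB) (w : LV) :
    Nat.card {p : LV × LV // p.1 ∈ hB.shell 2 ∧ p.2 ∈ hB.shell 2 ∧ p.1 + p.2 = w} =
      if w = 0 then 196560 else if w ∈ hB.shell 2 then 4600 else if w ∈ hB.shell 3 then 552
      else if w ∈ hB.shell 4 then 46 else if w ∈ hB.shell 5 then 2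
      else if w ∈ hB.shellMod 6 2 then 2 else if w ∈ hB.shellMod 8 0 then 1 else 0 := by
  obtain ⟨x, hw⟩ := hB.exists_mem_shell w
  rw [hB.natCard_pairs hw, add_sub_cancel_right, H.innerCount_self_eq_ite hw]

lemma natCard_pairs_two_three (H : ShellOrbits hB) (w : LV) :
    Nat.card {p : LV × LV // p.1 ∈ hB.shell 2 ∧ p.2 ∈ hB.shell 3 ∧ p.1 + p.2 = w} =
      if w ∈ hB.shell 2 then 47104 else if w ∈ hB.shell 3 then 11178
      else if w ∈ hB.shell 4 then 2048 else if w ∈ hB.shell 5 then 275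
      else if w ∈ hB.shellMod 6 4 then 24 else if w ∈ hB.shell 7 then 1
      else if w ∈ hB.shellMod 8 2 then 1 else 0 := by
  obtain ⟨x, hw⟩ := hB.exists_mem_shell w
  rw [hB.natCard_pairs hw, show x + 2 - 3 = x - 1 by ring, H.innerCount_sub_one_eq_ite hw]

end ShellOrbits

open scoped Classical in
/-- The decompositions of the Conway orbit products `O₂ ⊗ O₂` and `O₂ ⊗ O₃`: for every
`w ∈ Λ`, the number of ordered pairs `(a,b) ∈ O₂ × O₂` with `a + b = w` is as listed, and
likewise for `O₂ × O₃`. -/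
theorem orbit_product_O2O2_and_O2O3
    (B : Matrix (Fin 24) (Fin 24) ℤ) (hB : IsLeech B)
    (O2 O3 O4 O5 O6a O6b O7 O8a O8c : Set LV)
    (h2 : OrbitData B O2 2 (3 * 65520)) (h3 : OrbitData B O3 3 (256 * 65520))
    (h4 : OrbitData B O4 4 (6075 * 65520)) (h5 : OrbitData B O5 5 (70656 * 65520))
    (h6a : OrbitData B O6a 6 (518400 * 65520)) (h6b : OrbitData B O6b 6 (6900 * 65520))
    (h7 : OrbitData B O7 7 (2861568 * 65520)) (h8a : OrbitData B O8a 8 (3 * 65520))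
    (h8c : OrbitData B O8c 8 (141312 * 65520))
    (h8adbl : O8a = {u : LV | ∃ v ∈ O2, u = (2 : ℤ) • v}) :
    (∀ w : LV,
      Nat.card {p : LV × LV // p.1 ∈ O2 ∧ p.2 ∈ O2 ∧ p.1 + p.2 = w} =
        if w = 0 then 196560 else if w ∈ O2 then 4600 else if w ∈ O3 then 552
        else if w ∈ O4 then 46 else if w ∈ O5 then 2 else if w ∈ O6b then 2
        else if w ∈ O8a then 1 else 0) ∧
    (∀ w : LV,
      Nat.card {p : LV × LV // p.1 ∈ O2 ∧ p.2 ∈ O3 ∧ p.1 + p.2 = w} =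
        if w ∈ O2 then 47104 else if w ∈ O3 then 11178 else if w ∈ O4 then 2048
        else if w ∈ O5 then 275 else if w ∈ O6a then 24 else if w ∈ O7 then 1
        else if w ∈ O8c then 1 else 0) := by
  lift O2 to Finset LV using h2.finite hB
  lift O3 to Finset LV using h3.finite hB
  lift O4 to Finset LV using h4.finite hB
  lift O5 to Finset LV using h5.finite hB
  lift O6a to Finset LV using h6a.finite hB
  lift O6b to Finset LV using h6b.finite hB
  lift O7 to Finset LV using h7.finite hB
  lift O8c to Finset LV using h8c.finite hB
  obtain ⟨rfl, rfl, rfl⟩ := hB.orbits_eq_shells h2 h3 h4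
  have Hshort : ShortShellOrbits hB := ⟨h2, h3, h4⟩
  obtain ⟨rfl, rfl⟩ := Hshort.five_eq_and_six_two_eq h5 h6b
  obtain ⟨rfl, rfl⟩ := Hshort.six_four_eq_and_seven_eq h5.card_eq h6b.card_eq h6a h7
  obtain rfl := Hshort.eight_two_eq h5.card_eq h8c
  have H : ShellOrbits hB := ⟨Hshort, h5, h6b, h6a, h7⟩
  have h8a_eq : O8a = hB.shellMod 8 0 := h8adbl.trans <| Set.ext fun _ =>
    (hB.mem_shellMod_zero (x := 2)).symm
  simp only [h8a_eq, Finset.mem_coe]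
  exact ⟨fun w => by convert H.natCard_pairs_two_two w,
    fun w => by convert H.natCard_pairs_two_three w⟩

end
end
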